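/- arXiv:2308.11388 — 3 statements merged into one kernel-verified Lean document; each statement's English description precedes it below -/
import Mathlib

section
/- Let n ≥ 2 be an even integer and let u be a normal solution on ℝ^n with Q-curvature Q, where Q satisfies the s-cone condition for some s ∈ ℝ. Suppose there exist s₁ < s, C₀ > 0 and R₀ > 0 such that either Q⁺(x) ≤ C₀·|x|^{s₁} for all |x| ≥ R₀ or Q⁻(x) ≤ C₀·|x|^{s₁} for all |x| ≥ R₀ (where Q⁺ and Q⁻ are the positive and negative parts of Q). Then there exist C > 0 and R₁ > 0 such that |Q(x)|·e^{n u(x)} ≤ C·|x|^{−n} for all |x| ≥ R₁. -/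
open MeasureTheory Real Filter RealInnerProductSpace

/-- Volume of the standard unit n-sphere in ℝ^{n+1}: |Sⁿ| = 2 π^{(n+1)/2} / Γ((n+1)/2). -/
noncomputable def sphereVol (n : ℕ) : ℝ :=
  2 * Real.pi ^ ((n + 1 : ℝ) / 2) / Real.Gamma ((n + 1 : ℝ) / 2)

/-- `u` is a normal solution on ℝⁿ with Q-curvature `Q`: both are smooth, `Q·e^{nu} ∈ L¹`,
and `u(x) = (2/((n−1)!·|Sⁿ|)) ∫ log(|y|/|x−y|)·Q(y)·e^{n·u(y)} dy + C` for some constant `C`. -/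
def IsNormalSolution (n : ℕ) (u Q : EuclideanSpace ℝ (Fin n) → ℝ) : Prop :=
  ContDiff ℝ (⊤ : ℕ∞) u ∧ ContDiff ℝ (⊤ : ℕ∞) Q ∧
  Integrable (fun x => Q x * Real.exp (n * u x)) ∧
  ∃ C : ℝ, ∀ x, u x =
    (2 / ((Nat.factorial (n - 1) : ℝ) * sphereVol n)) *
      ∫ y, Real.log (‖y‖ / ‖x - y‖) * (Q y * Real.exp (n * u y)) + C

/-- The s-cone condition: `|ψ(x)| ≤ C(|x|+1)^s` globally, and along a sequence `x_i` with
`|x_i| ≥ 1`, `|x_i| → ∞`, one has `|ψ(x)| ≥ c₁|x|^s` on the balls `B_{r₀|x_i|}(x_i)`. -/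
def SCone (n : ℕ) (ψ : EuclideanSpace ℝ (Fin n) → ℝ) (s : ℝ) : Prop :=
  ∃ (C c₁ r₀ : ℝ) (xs : ℕ → EuclideanSpace ℝ (Fin n)),
    0 < C ∧ 0 < c₁ ∧ 0 < r₀ ∧ r₀ < 1 ∧
    (∀ i, 1 ≤ ‖xs i‖) ∧ Filter.Tendsto (fun i => ‖xs i‖) Filter.atTop Filter.atTop ∧
    (∀ x, |ψ x| ≤ C * (‖x‖ + 1) ^ s) ∧
    (∀ i, ∀ x ∈ Metric.ball (xs i) (r₀ * ‖xs i‖), c₁ * ‖x‖ ^ s ≤ |ψ x|)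

namespace NormalSolution

/-- Euclidean space of dimension `n`. -/
abbrev Eucl (n : ℕ) := EuclideanSpace ℝ (Fin n)

/-- The kernel `max 1 (ρ / ‖z‖) ^ (1/2)`. -/
noncomputable def sqrtKer {n : ℕ} (ρ : ℝ) (z : Eucl n) : ℝ :=
  exp (posLog (ρ / ‖z‖) / 2)

lemma one_le_sqrtKer {n : ℕ} (ρ : ℝ) (z : Eucl n) : 1 ≤ sqrtKer ρ z :=
  Real.one_le_exp (by have := posLog_nonneg (x := ρ / ‖z‖); positivity)

lemma posLog_le_sqrtKer {n : ℕ} (ρ : ℝ) (z : Eucl n) :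
    posLog (ρ / ‖z‖) ≤ 2 * sqrtKer ρ z := by
  have := Real.add_one_le_exp (posLog (ρ / ‖z‖) / 2)
  unfold sqrtKer
  linarith

lemma posLog_sq_le_sqrtKer {n : ℕ} (ρ : ℝ) (z : Eucl n) :
    posLog (ρ / ‖z‖) ^ 2 ≤ 8 * sqrtKer ρ z := by
  have h0 := posLog_nonneg (x := ρ / ‖z‖)
  have := Real.quadratic_le_exp_of_nonneg (x := posLog (ρ / ‖z‖) / 2) (by positivity)
  unfold sqrtKer
  nlinarith

@[fun_prop]
lemma measurable_posLog : Measurable posLog := continuous_posLog.measurable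

lemma sqrtKer_eq_one {n : ℕ} {ρ : ℝ} (hρ : 0 < ρ) {z : Eucl n} (hz : ρ ≤ ‖z‖) :
    sqrtKer ρ z = 1 := by
  have : posLog (ρ / ‖z‖) = 0 := by
    rw [posLog_eq_zero_iff, abs_of_nonneg (by positivity)]
    exact div_le_one_of_le₀ hz (norm_nonneg _)
  simp [sqrtKer, this]

lemma sqrtKer_mono {n : ℕ} {ρ σ : ℝ} (hρ : 0 ≤ ρ) (h : ρ ≤ σ) (z : Eucl n) :
    sqrtKer ρ z ≤ sqrtKer σ z := by
  unfold sqrtKer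
  have := posLog_le_posLog (x := ρ / ‖z‖) (y := σ / ‖z‖) (by positivity) (by gcongr)
  gcongr

lemma integrableOn_sqrtKer_unit {n : ℕ} (hn : 0 < n) :
    IntegrableOn (fun z : Eucl n => sqrtKer 1 z) (Metric.ball 0 1) := by
  have : Nonempty (Fin n) := ⟨⟨0, hn⟩⟩
  have key := integrableOn_fun_norm_addHaar (E := Eucl n) (F := ℝ) (μ := volume)
    (f := fun t => exp (posLog (1 / t) / 2)) (r := 1)
  refine key.2 ?_
  have h1 : IntegrableOn (fun t : ℝ => t ^ (-(1 / 2) : ℝ)) (Set.Ioo 0 1) := by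
    have := intervalIntegral.intervalIntegrable_rpow' (a := 0) (b := 1) (r := -(1 / 2))
      (by norm_num)
    rw [intervalIntegrable_iff_integrableOn_Ioo_of_le zero_le_one] at this
    exact this
  refine Integrable.mono' h1 ?_ ?_
  · refine Measurable.aestronglyMeasurable ?_
    simp only [smul_eq_mul]
    fun_prop
  · filter_upwards [ae_restrict_mem measurableSet_Ioo] with t ht
    have ht0 : 0 < t := ht.1
    have h2 : posLog (1 / t) = - log t := by
      rw [posLog_eq_log, one_div, log_inv]
      rw [abs_of_pos (by positivity)]
      exact (one_le_div ht0).2 ht.2.le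
    rw [h2, smul_eq_mul, norm_mul, Real.norm_eq_abs, Real.norm_eq_abs, abs_of_pos (exp_pos _),
      abs_of_pos (by positivity), Real.rpow_def_of_pos ht0]
    have h3 : t ^ (Module.finrank ℝ (Eucl n) - 1) ≤ 1 := pow_le_one₀ ht0.le ht.2.le
    have h4 : -log t / 2 = log t * -(1 / 2) := by ring
    rw [h4]
    exact mul_le_of_le_one_left (exp_pos _).le h3

lemma sqrtKer_smul {n : ℕ} {ρ : ℝ} (hρ : 0 < ρ) (z : Eucl n) :
    sqrtKer ρ (ρ • z) = sqrtKer 1 z := by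
  unfold sqrtKer
  rw [norm_smul, Real.norm_of_nonneg hρ.le, div_mul_eq_div_div, div_self hρ.ne']

lemma lintegral_sqrtKer_ball {n : ℕ} (hn : 0 < n) :
    ∃ K : ℝ, 0 ≤ K ∧ ∀ ρ : ℝ, 0 < ρ → ∀ y : Eucl n,
      ∫⁻ x in Metric.ball y ρ, ENNReal.ofReal (sqrtKer ρ (x - y)) ≤
        ENNReal.ofReal (K * ρ ^ n) := by
  refine ⟨∫ z in Metric.ball (0 : Eucl n) 1, sqrtKer 1 z,
    integral_nonneg fun z => zero_le_one.trans (one_le_sqrtKer _ _), fun ρ hρ y => ?_⟩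
  have h0 : ∀ z : Eucl n, 0 ≤ sqrtKer 1 z := fun z => zero_le_one.trans (one_le_sqrtKer _ _)
  rw [mul_comm, ENNReal.ofReal_mul (by positivity),
    ofReal_integral_eq_lintegral_ofReal (integrableOn_sqrtKer_unit hn) (.of_forall h0)]
  have hm : Measurable fun z : Eucl n => ENNReal.ofReal (sqrtKer ρ z) := by
    unfold sqrtKer; fun_prop
  have e1 : ∫⁻ x in Metric.ball y ρ, ENNReal.ofReal (sqrtKer ρ (x - y)) =
      ∫⁻ x in Metric.ball (0 : Eucl n) ρ, ENNReal.ofReal (sqrtKer ρ x) := by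
    rw [← lintegral_indicator measurableSet_ball, ← lintegral_indicator measurableSet_ball,
      ← lintegral_sub_right_eq_self ((Metric.ball (0 : Eucl n) ρ).indicator _) y]
    congr 1
    ext x
    simp [Set.indicator, dist_eq_norm]
  have e2 : ∫⁻ x in Metric.ball (0 : Eucl n) 1, ENNReal.ofReal (sqrtKer 1 x) =
      ∫⁻ x, (Metric.ball (0 : Eucl n) ρ).indicator
        (fun x => ENNReal.ofReal (sqrtKer ρ x)) (ρ • x) := by
    rw [← lintegral_indicator measurableSet_ball]
    congr 1
    ext x
    have : ρ * ‖x‖ < ρ ↔ ‖x‖ < 1 := by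
      constructor <;> intro h <;> nlinarith
    simp [Set.indicator, norm_smul, abs_of_pos hρ, this, sqrtKer_smul hρ]
  rw [e1, e2, ← lintegral_map (f := (Metric.ball (0 : Eucl n) ρ).indicator
        (fun x => ENNReal.ofReal (sqrtKer ρ x))) (g := fun x => ρ • x)
        (hm.indicator measurableSet_ball) (by fun_prop), Measure.map_addHaar_smul volume hρ.ne',
    lintegral_smul_measure, lintegral_indicator measurableSet_ball, smul_eq_mul, ← mul_assoc,
    ← ENNReal.ofReal_mul (by positivity)]
  simp [abs_of_pos hρ, hρ.ne']

lemma volume_ball_eq {n : ℕ} {ρ : ℝ} (hρ : 0 < ρ) (x : Eucl n) :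
    volume (Metric.ball x ρ) =
      ENNReal.ofReal (volume.real (Metric.ball (0 : Eucl n) 1) * ρ ^ n) := by
  rw [Measure.addHaar_ball_of_pos volume _ hρ, mul_comm, ENNReal.ofReal_mul (by positivity),
    Measure.real, ENNReal.ofReal_toReal measure_ball_lt_top.ne]
  simp

/-- Uniform integral bound of the kernel on balls about the origin. -/
lemma lintegral_sqrtKer {n : ℕ} (hn : 0 < n) :
    ∃ K : ℝ, 0 ≤ K ∧ ∀ ρ : ℝ, 0 < ρ → ∀ y : Eucl n,
      ∫⁻ x in Metric.ball 0 ρ, ENNReal.ofReal (sqrtKer ‖x‖ (x - y)) ≤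
        ENNReal.ofReal (K * ρ ^ n) := by
  obtain ⟨K, hK0, hK⟩ := lintegral_sqrtKer_ball hn
  have : Nonempty (Fin n) := ⟨⟨0, hn⟩⟩
  refine ⟨volume.real (Metric.ball (0 : Eucl n) 1) + K, by positivity, fun ρ hρ y => ?_⟩
  have hm : Measurable fun z : Eucl n => ENNReal.ofReal (sqrtKer ρ (z - y)) := by
    unfold sqrtKer; fun_prop
  calc ∫⁻ x in Metric.ball 0 ρ, ENNReal.ofReal (sqrtKer ‖x‖ (x - y))
      ≤ ∫⁻ x in Metric.ball 0 ρ, (1 + (Metric.ball y ρ).indicator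
          (fun x => ENNReal.ofReal (sqrtKer ρ (x - y))) x) := by
        refine setLIntegral_mono' measurableSet_ball fun x hx => ?_
        have hx' : ‖x‖ ≤ ρ := by simpa using (Metric.mem_ball.1 hx).le
        by_cases h : x ∈ Metric.ball y ρ
        · rw [Set.indicator_of_mem h]
          exact (ENNReal.ofReal_le_ofReal (sqrtKer_mono (norm_nonneg _) hx' _)).trans le_add_self
        · rw [Set.indicator_of_notMem h, add_zero, ← ENNReal.ofReal_one]
          refine ENNReal.ofReal_le_ofReal ((sqrtKer_mono (norm_nonneg _) hx' _).trans ?_)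
          refine (sqrtKer_eq_one hρ ?_).le
          simpa [dist_eq_norm] using h
    _ ≤ volume (Metric.ball (0 : Eucl n) ρ) +
          ∫⁻ x, (Metric.ball y ρ).indicator
            (fun x => ENNReal.ofReal (sqrtKer ρ (x - y))) x := by
        rw [lintegral_add_left measurable_const]
        gcongr
        · simp
        · exact Measure.restrict_le_self
    _ ≤ ENNReal.ofReal (volume.real (Metric.ball (0 : Eucl n) 1) * ρ ^ n) +
          ENNReal.ofReal (K * ρ ^ n) := by
        gcongr
        · exact (volume_ball_eq hρ 0).le
        · rw [lintegral_indicator measurableSet_ball]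
          exact hK ρ hρ y
    _ = _ := by
        rw [← ENNReal.ofReal_add (by positivity) (by positivity)]
        ring_nf

/-- The kernel is integrable against continuous integrable functions. -/
lemma integrable_sqrtKer_mul {n : ℕ} (hn : 0 < n) {φ : Eucl n → ℝ} (hφ : Continuous φ)
    (hφi : Integrable φ) {ρ : ℝ} (hρ : 0 < ρ) (x : Eucl n) :
    Integrable fun y => sqrtKer ρ (x - y) * φ y := by
  obtain ⟨K, -, hK⟩ := lintegral_sqrtKer_ball hn
  have hm : Measurable fun y : Eucl n => sqrtKer ρ (x - y) := by
    unfold sqrtKer; fun_prop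
  have hsymm : ∀ y, sqrtKer ρ (x - y) = sqrtKer ρ (y - x) := fun y => by
    unfold sqrtKer; rw [norm_sub_rev]
  have h1 : IntegrableOn (fun y => sqrtKer ρ (x - y)) (Metric.ball x ρ) := by
    refine ⟨hm.aestronglyMeasurable, ?_⟩
    rw [hasFiniteIntegral_iff_ofReal
      (.of_forall fun y => zero_le_one.trans (one_le_sqrtKer _ _))]
    simp only [hsymm]
    exact (hK ρ hρ x).trans_lt ENNReal.ofReal_lt_top
  obtain ⟨M, hM⟩ := (isCompact_closedBall x ρ).exists_bound_of_continuousOn hφ.continuousOn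
  have h2 : IntegrableOn (fun y => sqrtKer ρ (x - y) * φ y) (Metric.ball x ρ) := by
    refine Integrable.mul_bdd (c := M) h1 hφ.aestronglyMeasurable ?_
    filter_upwards [ae_restrict_mem measurableSet_ball] with y hy
    exact hM y (Metric.ball_subset_closedBall hy)
  have h3 : IntegrableOn (fun y => sqrtKer ρ (x - y) * φ y) (Metric.ball x ρ)ᶜ := by
    refine (hφi.integrableOn (s := (Metric.ball x ρ)ᶜ)).congr_fun (fun y hy => ?_)
      measurableSet_ball.compl
    have : ρ ≤ ‖x - y‖ := by
      rw [norm_sub_rev]; simpa [dist_eq_norm] using hy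
    simp [sqrtKer_eq_one hρ this]
  have := h2.union h3
  rwa [Set.union_compl_self, integrableOn_univ] at this

lemma integrable_posLog_mul {n : ℕ} (hn : 0 < n) {φ : Eucl n → ℝ} (hφ : Continuous φ)
    (hφi : Integrable φ) {ρ : ℝ} (hρ : 0 < ρ) (x : Eucl n) :
    Integrable fun y => posLog (ρ / ‖x - y‖) * φ y := by
  refine Integrable.mono' ((integrable_sqrtKer_mul hn hφ hφi hρ x).norm.const_mul 2)
    (by have := hφ.measurable; exact Measurable.aestronglyMeasurable (by fun_prop))
    (.of_forall fun y => ?_)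
  have h0 := posLog_nonneg (x := ρ / ‖x - y‖)
  have h1 := posLog_le_sqrtKer ρ (x - y)
  have h2 := one_le_sqrtKer ρ (x - y)
  rw [norm_mul, norm_mul, Real.norm_of_nonneg h0,
    Real.norm_of_nonneg (zero_le_one.trans h2), ← mul_assoc]
  gcongr

lemma posLog_div {a b : ℝ} (ha : 0 < a) (hb : 0 ≤ b) :
    posLog (b / a) = log (max a b) - log a := by
  have hm : 0 < max a b := lt_max_of_lt_left ha
  rw [posLog_eq_log_max_one (by positivity), ← log_div hm.ne' ha.ne', ← max_div_div_right ha.le,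
    div_self ha.ne']

lemma log_max_sub_nonneg {r R a : ℝ} (hr : 0 < r) (h : r ≤ R) :
    0 ≤ log (max R a) - log (max r a) := by
  have : 0 < max r a := lt_max_of_lt_left hr
  have := log_le_log this (max_le_max_right a h)
  linarith

lemma log_max_sub_le {r R a : ℝ} (hr : 0 < r) (h : r ≤ R) :
    log (max R a) - log (max r a) ≤ log R - log r := by
  have hR : 0 < R := hr.trans_le h
  have hm : 0 < max r a := lt_max_of_lt_left hr
  have hM : 0 < max R a := lt_max_of_lt_left hR
  have : log (max R a * r) ≤ log (R * max r a) := by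
    apply log_le_log (by positivity)
    rcases le_total R a with h1 | h1
    · rw [max_eq_right h1, max_eq_right (h.trans h1)]; nlinarith
    · rw [max_eq_left h1]; have := le_max_left r a; nlinarith
  rw [log_mul hM.ne' hr.ne', log_mul hR.ne' hm.ne'] at this
  linarith

/-- The defect between `log (R / r)` and its truncation at `a`. -/
noncomputable def logGap (r R a : ℝ) : ℝ :=
  (log R - log r) - (log (max R a) - log (max r a))

lemma logGap_nonneg {r R a : ℝ} (hr : 0 < r) (h : r ≤ R) : 0 ≤ logGap r R a :=
  sub_nonneg.2 (log_max_sub_le hr h)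

lemma logGap_le {r R a : ℝ} (hr : 0 < r) (h : r ≤ R) : logGap r R a ≤ log R - log r :=
  sub_le_self _ (log_max_sub_nonneg hr h)

lemma logGap_eq_zero {r R a : ℝ} (h : r ≤ R) (ha : a ≤ r) : logGap r R a = 0 := by
  simp [logGap, max_eq_left ha, max_eq_left (ha.trans h)]

lemma logGap_le_posLog {r R a : ℝ} (hr : 1 ≤ r) (h : r ≤ R) : logGap r R a ≤ posLog a := by
  rcases le_total a r with ha | ha
  · rw [logGap_eq_zero h ha]; exact posLog_nonneg
  · have h1 : log R ≤ log (max R a) := log_le_log (by linarith) (le_max_left _ _)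
    have h2 : log a ≤ posLog a := le_max_right _ _
    have h3 := log_nonneg hr
    rw [logGap, max_eq_right ha]
    linarith

lemma abs_log_max_one_sub_le {r : ℝ} (hr : 0 < r) (a : ℝ) :
    |log (max 1 a) - log (max r a)| ≤ |log r| := by
  rcases le_total 1 r with h | h
  · have h1 := log_max_sub_nonneg (a := a) one_pos h
    have h2 := log_max_sub_le (a := a) one_pos h
    rw [log_one, sub_zero] at h2
    rw [abs_sub_comm, abs_of_nonneg h1]
    exact h2.trans (le_abs_self _)
  · have h1 := log_max_sub_nonneg (a := a) hr h
    have h2 := log_max_sub_le (a := a) hr h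
    rw [log_one, zero_sub] at h2
    rw [abs_of_nonneg h1]
    exact h2.trans (neg_le_abs _)

/-- The radial part of the logarithmic potential of `φ`. -/
noncomputable def radialPart {n : ℕ} (φ : Eucl n → ℝ) (r : ℝ) : ℝ :=
  ∫ y, (log (max 1 ‖y‖) - log (max r ‖y‖)) * φ y

lemma integrable_radial {n : ℕ} {φ : Eucl n → ℝ} (hφi : Integrable φ) {r : ℝ} (hr : 0 < r) :
    Integrable fun y => (log (max 1 ‖y‖) - log (max r ‖y‖)) * φ y := by
  refine hφi.bdd_mul (c := |log r|) (Measurable.aestronglyMeasurable (by fun_prop)) ?_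
  exact .of_forall fun y => abs_log_max_one_sub_le hr _

lemma integrable_logGap_mul {n : ℕ} {φ : Eucl n → ℝ} (hφi : Integrable φ) {r R : ℝ} (hr : 0 < r)
    (h : r ≤ R) : Integrable fun y => logGap r R ‖y‖ * φ y := by
  refine hφi.bdd_mul (c := log R - log r)
    (Measurable.aestronglyMeasurable (by unfold logGap; fun_prop)) (.of_forall fun y => ?_)
  rw [Real.norm_of_nonneg (logGap_nonneg hr h)]
  exact logGap_le hr h

lemma radialPart_sub {n : ℕ} {φ : Eucl n → ℝ} (hφi : Integrable φ) {r R : ℝ} (hr : 0 < r)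
    (h : r ≤ R) :
    radialPart φ R - radialPart φ r =
      -((log R - log r) * ∫ y, φ y) + ∫ y, logGap r R ‖y‖ * φ y := by
  have hs : Integrable fun y => -((log R - log r) * φ y) := (hφi.const_mul _).neg
  unfold radialPart
  rw [← integral_sub (integrable_radial hφi (hr.trans_le h)) (integrable_radial hφi hr),
    ← integral_const_mul, ← integral_neg, ← integral_add hs (integrable_logGap_mul hφi hr h)]
  congr 1
  ext y
  unfold logGap
  ring

lemma abs_radialPart_sub_le {n : ℕ} {φ : Eucl n → ℝ} (hφi : Integrable φ) {r R : ℝ} (hr : 0 < r)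
    (h : r ≤ R) : |radialPart φ R - radialPart φ r| ≤ (log R - log r) * ∫ y, |φ y| := by
  unfold radialPart
  rw [← integral_sub (integrable_radial hφi (hr.trans_le h)) (integrable_radial hφi hr),
    ← integral_const_mul, ← Real.norm_eq_abs]
  refine norm_integral_le_of_norm_le (hφi.abs.const_mul _) (.of_forall fun y => ?_)
  rw [← sub_mul, norm_mul, Real.norm_eq_abs, Real.norm_eq_abs]
  gcongr
  rw [show log (max 1 ‖y‖) - log (max R ‖y‖) - (log (max 1 ‖y‖) - log (max r ‖y‖)) =
    -(log (max R ‖y‖) - log (max r ‖y‖)) by ring, abs_neg,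
    abs_of_nonneg (log_max_sub_nonneg hr h)]
  exact log_max_sub_le hr h

/-- Error term in the splitting of the logarithmic kernel into radial, near and bounded parts. -/
noncomputable def kerError {n : ℕ} (x y : Eucl n) : ℝ :=
  log (‖y‖ / ‖x - y‖) - (log (max 1 ‖y‖) - log (max ‖x‖ ‖y‖)) - posLog (‖x‖ / ‖x - y‖)
    + posLog (1 / ‖y‖)

lemma abs_kerError_le {n : ℕ} {x y : Eucl n} (hx : x ≠ 0) (hy : y ≠ 0) (hxy : y ≠ x) :
    |kerError x y| ≤ log 2 := by
  have hx' : 0 < ‖x‖ := norm_pos_iff.2 hx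
  have hy' : 0 < ‖y‖ := norm_pos_iff.2 hy
  have hxy' : 0 < ‖x - y‖ := norm_pos_iff.2 (sub_ne_zero.2 hxy.symm)
  have e : kerError x y = log (max ‖x‖ ‖y‖) - log (max ‖x - y‖ ‖x‖) := by
    unfold kerError
    rw [posLog_div hxy' hx'.le, posLog_div hy' zero_le_one, log_div hy'.ne' hxy'.ne',
      max_comm ‖y‖ 1]
    ring
  have t1 : ‖x - y‖ ≤ ‖x‖ + ‖y‖ := norm_sub_le x y
  have t2 : ‖y‖ ≤ ‖x‖ + ‖x - y‖ := by
    have := norm_sub_le x (x - y)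
    rwa [sub_sub_cancel] at this
  have h1 : log (max ‖x‖ ‖y‖) ≤ log (2 * max ‖x - y‖ ‖x‖) := by
    apply log_le_log (lt_max_of_lt_left hx')
    have := le_max_left ‖x - y‖ ‖x‖
    have := le_max_right ‖x - y‖ ‖x‖
    exact max_le (by linarith) (by linarith)
  have h2 : log (max ‖x - y‖ ‖x‖) ≤ log (2 * max ‖x‖ ‖y‖) := by
    apply log_le_log (lt_max_of_lt_left hxy')
    have := le_max_left ‖x‖ ‖y‖
    have := le_max_right ‖x‖ ‖y‖
    exact max_le (by linarith) (by linarith)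
  rw [log_mul two_ne_zero (lt_max_of_lt_left hxy').ne'] at h1
  rw [log_mul two_ne_zero (lt_max_of_lt_left hx').ne'] at h2
  rw [e, abs_le]
  constructor <;> linarith

lemma ae_ne' {n : ℕ} (hn : 0 < n) (x : Eucl n) : ∀ᵐ y : Eucl n, y ≠ x := by
  have : Nonempty (Fin n) := ⟨⟨0, hn⟩⟩
  exact Measure.ae_ne volume x

lemma integrable_kerError_mul {n : ℕ} (hn : 0 < n) {φ : Eucl n → ℝ} (hφi : Integrable φ)
    {x : Eucl n} (hx : x ≠ 0) : Integrable fun y => kerError x y * φ y := by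
  refine hφi.bdd_mul (c := log 2)
    (Measurable.aestronglyMeasurable (by unfold kerError; fun_prop)) ?_
  filter_upwards [ae_ne' hn x, ae_ne' hn 0] with y h1 h2 using abs_kerError_le hx h2 h1

/-- The integrand of the logarithmic potential is integrable. -/
lemma integrable_log_mul {n : ℕ} (hn : 0 < n) {φ : Eucl n → ℝ} (hφ : Continuous φ)
    (hφi : Integrable φ) {x : Eucl n} (hx : x ≠ 0) :
    Integrable fun y => log (‖y‖ / ‖x - y‖) * φ y := by
  have hx' : 0 < ‖x‖ := norm_pos_iff.2 hx
  have hO : Integrable fun y => posLog (1 / ‖y‖) * φ y := by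
    simpa using integrable_posLog_mul hn hφ hφi one_pos 0
  refine ((((integrable_radial hφi hx').add (integrable_posLog_mul hn hφ hφi hx' x)).sub hO).add
    (integrable_kerError_mul hn hφi hx)).congr (.of_forall fun y => ?_)
  simp only [Pi.add_apply, Pi.sub_apply, kerError]
  ring

/-- Up to a bounded error, the logarithmic potential is the sum of its radial and near parts. -/
lemma exists_potential_bound {n : ℕ} (hn : 0 < n) {φ : Eucl n → ℝ} (hφ : Continuous φ)
    (hφi : Integrable φ) :
    ∃ B : ℝ, ∀ x : Eucl n, x ≠ 0 →
      |(∫ y, log (‖y‖ / ‖x - y‖) * φ y) -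
        (radialPart φ ‖x‖ + ∫ y, posLog (‖x‖ / ‖x - y‖) * φ y)| ≤ B := by
  refine ⟨|∫ y, posLog (1 / ‖y‖) * φ y| + log 2 * ∫ y, |φ y|, fun x hx => ?_⟩
  have hx' : 0 < ‖x‖ := norm_pos_iff.2 hx
  have hE : ∀ᵐ y, |kerError x y| ≤ log 2 := by
    filter_upwards [ae_ne' hn x, ae_ne' hn 0] with y h1 h2 using abs_kerError_le hx h2 h1
  have hEi := integrable_kerError_mul hn hφi hx
  have hA := integrable_radial hφi hx'
  have hN := integrable_posLog_mul hn hφ hφi hx' x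
  have hO : Integrable fun y => posLog (1 / ‖y‖) * φ y := by
    simpa using integrable_posLog_mul hn hφ hφi one_pos 0
  have e : (∫ y, log (‖y‖ / ‖x - y‖) * φ y) =
      radialPart φ ‖x‖ + (∫ y, posLog (‖x‖ / ‖x - y‖) * φ y)
        - (∫ y, posLog (1 / ‖y‖) * φ y) + ∫ y, kerError x y * φ y := by
    have hAN : Integrable fun y => (log (max 1 ‖y‖) - log (max ‖x‖ ‖y‖)) * φ y +
        posLog (‖x‖ / ‖x - y‖) * φ y := hA.add hN
    have hANO : Integrable fun y => (log (max 1 ‖y‖) - log (max ‖x‖ ‖y‖)) * φ y +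
        posLog (‖x‖ / ‖x - y‖) * φ y - posLog (1 / ‖y‖) * φ y := hAN.sub hO
    unfold radialPart
    rw [← integral_add hA hN, ← integral_sub hAN hO, ← integral_add hANO hEi]
    congr 1
    ext y
    unfold kerError
    ring
  have hEb : |∫ y, kerError x y * φ y| ≤ log 2 * ∫ y, |φ y| := by
    rw [← integral_const_mul, ← Real.norm_eq_abs]
    refine norm_integral_le_of_norm_le (hφi.abs.const_mul _) ?_
    filter_upwards [hE] with y hy
    rw [norm_mul, Real.norm_eq_abs, Real.norm_eq_abs]
    gcongr
  have h1 := abs_le.1 hEb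
  have h2 := neg_abs_le (∫ y, posLog (1 / ‖y‖) * φ y)
  have h3 := le_abs_self (∫ y, posLog (1 / ‖y‖) * φ y)
  rw [e, abs_le]
  constructor <;> linarith [h1.1, h1.2]

/-- An exponential integrability inequality of Jensen type for small measures. -/
lemma exp_integral_le {α : Type*} [MeasurableSpace α] {μ : Measure α} {l ψ : α → ℝ} {c : ℝ}
    (hψ : ∀ y, 0 ≤ ψ y) (hi : Integrable ψ μ) (hli : Integrable (fun y => l y * ψ y) μ)
    (hei : Integrable (fun y => exp (l y / 2) * ψ y) μ) (hc : 0 ≤ c)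
    (hsmall : 2 * c * ∫ y, ψ y ∂μ ≤ 1) :
    exp (c * ∫ y, l y * ψ y ∂μ) ≤ 1 + 2 * c * ∫ y, exp (l y / 2) * ψ y ∂μ := by
  set a := c * ∫ y, l y * ψ y ∂μ with ha
  have h1 : ∫ y, (exp a * (1 - a) * ψ y + exp a / 2 * (l y * ψ y)) ∂μ ≤
      ∫ y, exp (l y / 2) * ψ y ∂μ := by
    refine integral_mono ((hi.const_mul _).add (hli.const_mul _)) hei fun y => ?_
    have h2 := Real.add_one_le_exp (l y / 2 - a)
    have h3 : exp a * exp (l y / 2 - a) = exp (l y / 2) := by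
      rw [← exp_add, add_sub_cancel]
    have h4 : exp a * (l y / 2 - a + 1) ≤ exp (l y / 2) := by
      rw [← h3]; gcongr
    have := mul_le_mul_of_nonneg_right h4 (hψ y)
    calc _ = exp a * (l y / 2 - a + 1) * ψ y := by ring
      _ ≤ _ := this
  rw [integral_add (hi.const_mul _) (hli.const_mul _), integral_const_mul,
    integral_const_mul] at h1
  have h5 := mul_le_mul_of_nonneg_left h1 (show 0 ≤ 2 * c by positivity)
  have h6 : exp a * (1 - a) ≤ 1 := by
    have := Real.add_one_le_exp (-a)
    have h7 : exp a * exp (-a) = 1 := by rw [← exp_add]; simp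
    nlinarith [exp_pos a]
  have hm : 0 ≤ ∫ y, ψ y ∂μ := integral_nonneg hψ
  have h8 : exp a * (1 - a) * (1 - 2 * c * ∫ y, ψ y ∂μ) ≤ 1 * (1 - 2 * c * ∫ y, ψ y ∂μ) := by
    gcongr
  have h9 : 2 * c * (exp a * (1 - a) * ∫ y, ψ y ∂μ + exp a / 2 * ∫ y, l y * ψ y ∂μ) =
      exp a * (1 - a) * (2 * c * ∫ y, ψ y ∂μ) + exp a * a := by
    rw [ha]; ring
  have h10 : 0 ≤ 2 * c * ∫ y, ψ y ∂μ := by positivity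
  nlinarith

lemma measurable_sqrtKer_sub {n : ℕ} :
    Measurable fun p : Eucl n × Eucl n => ENNReal.ofReal (sqrtKer ‖p.1‖ (p.1 - p.2)) := by
  unfold sqrtKer
  fun_prop

lemma lintegral_lintegral_sqrtKer_le {n : ℕ} {K ρ : ℝ}
    (hK : ∀ y : Eucl n, ∫⁻ x in Metric.ball 0 ρ, ENNReal.ofReal (sqrtKer ‖x‖ (x - y)) ≤
        ENNReal.ofReal K)
    {ψ : Eucl n → ℝ} (hψ : ∀ y, 0 ≤ ψ y) (hm : Measurable ψ) (hi : Integrable ψ) :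
    ∫⁻ x in Metric.ball 0 ρ, ∫⁻ y, ENNReal.ofReal (sqrtKer ‖x‖ (x - y)) * ENNReal.ofReal (ψ y) ≤
      ENNReal.ofReal K * ENNReal.ofReal (∫ y, ψ y) := by
  have hk : ∀ y : Eucl n, Measurable fun x : Eucl n => ENNReal.ofReal (sqrtKer ‖x‖ (x - y)) :=
    fun y => by unfold sqrtKer; fun_prop
  have hψm : Measurable fun p : Eucl n × Eucl n => ENNReal.ofReal (ψ p.2) :=
    (hm.comp measurable_snd).ennreal_ofReal
  have hk2 := (measurable_sqrtKer_sub (n := n)).mul hψm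
  calc _ = ∫⁻ y, ∫⁻ x in Metric.ball 0 ρ,
          ENNReal.ofReal (sqrtKer ‖x‖ (x - y)) * ENNReal.ofReal (ψ y) :=
        lintegral_lintegral_swap hk2.aemeasurable
    _ ≤ ∫⁻ y, ENNReal.ofReal K * ENNReal.ofReal (ψ y) := by
        refine lintegral_mono fun y => ?_
        rw [lintegral_mul_const _ (hk y)]
        gcongr
        exact hK y
    _ = _ := by
        rw [ofReal_integral_eq_lintegral_ofReal hi (.of_forall hψ),
          lintegral_const_mul _ hm.ennreal_ofReal]

/-- A Brezis–Merle type exponential estimate for the near part of a small density. -/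
lemma lintegral_exp_near_le {n : ℕ} (hn : 0 < n) :
    ∃ K : ℝ, 0 ≤ K ∧ ∀ (c : ℝ) (ψ : Eucl n → ℝ), 0 ≤ c → (∀ y, 0 ≤ ψ y) → Measurable ψ →
      Integrable ψ →
      (∀ x : Eucl n, x ≠ 0 → Integrable fun y => sqrtKer ‖x‖ (x - y) * ψ y) →
      (∀ x : Eucl n, x ≠ 0 → Integrable fun y => posLog (‖x‖ / ‖x - y‖) * ψ y) →
      2 * c * ∫ y, ψ y ≤ 1 → ∀ ρ : ℝ, 0 < ρ →
      ∫⁻ x in Metric.ball 0 ρ,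
        ENNReal.ofReal (exp (c * ∫ y, posLog (‖x‖ / ‖x - y‖) * ψ y)) ≤
          ENNReal.ofReal (K * ρ ^ n) := by
  obtain ⟨K, hK0, hK⟩ := lintegral_sqrtKer hn
  refine ⟨volume.real (Metric.ball (0 : Eucl n) 1) + K, by positivity,
    fun c ψ hc hψ hm hi hsi hli hsmall ρ hρ => ?_⟩
  have : Nonempty (Fin n) := ⟨⟨0, hn⟩⟩
  calc ∫⁻ x in Metric.ball 0 ρ,
        ENNReal.ofReal (exp (c * ∫ y, posLog (‖x‖ / ‖x - y‖) * ψ y))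
      ≤ ∫⁻ x in Metric.ball 0 ρ, (1 + ENNReal.ofReal (2 * c) *
          ∫⁻ y, ENNReal.ofReal (sqrtKer ‖x‖ (x - y)) * ENNReal.ofReal (ψ y)) := by
        refine lintegral_mono_ae ?_
        filter_upwards [ae_restrict_of_ae (ae_ne' hn 0)] with x hx
        have h0 : ∀ y, 0 ≤ sqrtKer ‖x‖ (x - y) * ψ y := fun y =>
          mul_nonneg (zero_le_one.trans (one_le_sqrtKer _ _)) (hψ y)
        have h1 : exp (c * ∫ y, posLog (‖x‖ / ‖x - y‖) * ψ y) ≤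
            1 + 2 * c * ∫ y, sqrtKer ‖x‖ (x - y) * ψ y :=
          exp_integral_le hψ hi (hli x hx) (hsi x hx) hc hsmall
        refine (ENNReal.ofReal_le_ofReal h1).trans ?_
        have h2 : 0 ≤ ∫ y, sqrtKer ‖x‖ (x - y) * ψ y := integral_nonneg h0
        rw [ENNReal.ofReal_add zero_le_one (by positivity), ENNReal.ofReal_one,
          ENNReal.ofReal_mul (by positivity),
          ofReal_integral_eq_lintegral_ofReal (hsi x hx) (.of_forall h0)]
        gcongr with y
        rw [ENNReal.ofReal_mul (zero_le_one.trans (one_le_sqrtKer _ _))]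
    _ ≤ volume (Metric.ball (0 : Eucl n) ρ) + ENNReal.ofReal (2 * c) *
          (ENNReal.ofReal (K * ρ ^ n) * ENNReal.ofReal (∫ y, ψ y)) := by
        rw [lintegral_add_left measurable_const, lintegral_const_mul' _ _ ENNReal.ofReal_ne_top]
        gcongr
        · simp
        · exact lintegral_lintegral_sqrtKer_le (hK ρ hρ) hψ hm hi
    _ = ENNReal.ofReal (volume.real (Metric.ball (0 : Eucl n) 1) * ρ ^ n) +
          ENNReal.ofReal (K * ρ ^ n) * ENNReal.ofReal (2 * c * ∫ y, ψ y) := by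
        rw [volume_ball_eq hρ, ENNReal.ofReal_mul (show 0 ≤ 2 * c by positivity)]
        ring
    _ ≤ ENNReal.ofReal (volume.real (Metric.ball (0 : Eucl n) 1) * ρ ^ n) +
          ENNReal.ofReal (K * ρ ^ n) := by
        gcongr
        refine mul_le_of_le_one_right zero_le ?_
        rw [← ENNReal.ofReal_one]
        exact ENNReal.ofReal_le_ofReal hsmall
    _ = _ := by
        rw [← ENNReal.ofReal_add (by positivity) (by positivity)]
        ring_nf

/-- The positive part of `φ` outside the ball of radius `R`. -/
noncomputable def farPos {n : ℕ} (φ : Eucl n → ℝ) (R : ℝ) : Eucl n → ℝ :=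
  {y | R ≤ ‖y‖}.indicator fun y => max (φ y) 0

lemma farPos_nonneg {n : ℕ} (φ : Eucl n → ℝ) (R : ℝ) (y : Eucl n) : 0 ≤ farPos φ R y :=
  Set.indicator_nonneg (fun _ _ => le_max_right _ _) y

lemma measurableSet_far {n : ℕ} (R : ℝ) : MeasurableSet {y : Eucl n | R ≤ ‖y‖} :=
  measurableSet_le measurable_const measurable_norm

lemma measurable_farPos {n : ℕ} {φ : Eucl n → ℝ} (hφ : Measurable φ) (R : ℝ) :
    Measurable (farPos φ R) :=
  (hφ.max measurable_const).indicator (measurableSet_far R)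

lemma farPos_le_abs {n : ℕ} (φ : Eucl n → ℝ) (R : ℝ) (y : Eucl n) : farPos φ R y ≤ |φ y| :=
  Set.indicator_apply_le' (fun _ => max_le (le_abs_self _) (abs_nonneg _))
    (fun _ => abs_nonneg _)

lemma integrable_mul_farPos {n : ℕ} {φ g : Eucl n → ℝ} (hφ : Measurable φ) (hg : Measurable g)
    (h : Integrable fun y => g y * φ y) (R : ℝ) : Integrable fun y => g y * farPos φ R y := by
  refine h.mono (hg.mul (measurable_farPos hφ R)).aestronglyMeasurable (.of_forall fun y => ?_)
  rw [norm_mul, norm_mul, Real.norm_of_nonneg (farPos_nonneg φ R y)]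
  gcongr
  exact farPos_le_abs φ R y

lemma integrable_farPos {n : ℕ} {φ : Eucl n → ℝ} (hφ : Measurable φ) (h : Integrable φ) (R : ℝ) :
    Integrable (farPos φ R) := by
  simpa using integrable_mul_farPos hφ measurable_const (g := fun _ => 1) (by simpa using h) R

/-- The near part of the potential generated by the positive part of `φ` far away. -/
noncomputable def nearFar {n : ℕ} (φ : Eucl n → ℝ) (R : ℝ) (x : Eucl n) : ℝ :=
  ∫ y, posLog (‖x‖ / ‖x - y‖) * farPos φ R y

lemma integrable_posLog_mul_farPos {n : ℕ} (hn : 0 < n) {φ : Eucl n → ℝ} (hφ : Continuous φ)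
    (hφi : Integrable φ) (R : ℝ) {x : Eucl n} (hx : x ≠ 0) :
    Integrable fun y => posLog (‖x‖ / ‖x - y‖) * farPos φ R y :=
  integrable_mul_farPos hφ.measurable (by fun_prop)
    (integrable_posLog_mul hn hφ hφi (norm_pos_iff.2 hx) x) R

lemma lintegral_exp_nearFar_le {n : ℕ} (hn : 0 < n) :
    ∃ K : ℝ, 0 ≤ K ∧ ∀ (c : ℝ) (φ : Eucl n → ℝ) (R : ℝ), 0 ≤ c → Continuous φ → Integrable φ →
      2 * c * ∫ y, farPos φ R y ≤ 1 → ∀ ρ : ℝ, 0 < ρ →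
      ∫⁻ x in Metric.ball 0 ρ, ENNReal.ofReal (exp (c * nearFar φ R x)) ≤
          ENNReal.ofReal (K * ρ ^ n) := by
  obtain ⟨K, hK0, hK⟩ := lintegral_exp_near_le hn
  refine ⟨K, hK0, fun c φ R hc hφ hφi hsmall => ?_⟩
  refine hK c (farPos φ R) hc (farPos_nonneg φ R) (measurable_farPos hφ.measurable R)
    (integrable_farPos hφ.measurable hφi R) (fun x hx => ?_)
    (fun x hx => integrable_posLog_mul_farPos hn hφ hφi R hx) hsmall
  exact integrable_mul_farPos hφ.measurable (by unfold sqrtKer; fun_prop)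
    (integrable_sqrtKer_mul hn hφ hφi (norm_pos_iff.2 hx) x) R

/-- The mass of an integrable function outside large balls is small. -/
lemma tendsto_integral_far {n : ℕ} {φ : Eucl n → ℝ} (hφi : Integrable φ) :
    Tendsto (fun R : ℝ => ∫ y in {y | R ≤ ‖y‖}, |φ y|) atTop (nhds 0) := by
  have h := tendsto_integral_filter_of_dominated_convergence (μ := volume) (l := atTop)
    (F := fun (R : ℝ) y => ({y : Eucl n | R ≤ ‖y‖}).indicator (fun y => |φ y|) y)
    (f := fun _ => 0) (fun y => |φ y|)
    (.of_forall fun R =>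
      hφi.abs.aestronglyMeasurable.indicator (measurableSet_far R))
    (.of_forall fun R => .of_forall fun y => ?_) hφi.abs (.of_forall fun y => ?_)
  · simpa only [integral_indicator (measurableSet_far _), integral_zero] using h
  · rw [Real.norm_of_nonneg (Set.indicator_nonneg (fun _ _ => abs_nonneg _) y)]
    exact Set.indicator_le_self' (fun _ _ => abs_nonneg _) y
  · refine tendsto_const_nhds.congr' ?_
    filter_upwards [eventually_gt_atTop ‖y‖] with R hR
    rw [Set.indicator_of_notMem]
    simpa using hR

lemma integral_farPos_le {n : ℕ} {φ : Eucl n → ℝ} (hφ : Measurable φ) (hφi : Integrable φ)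
    (R : ℝ) : ∫ y, farPos φ R y ≤ ∫ y in {y | R ≤ ‖y‖}, |φ y| := by
  rw [← integral_indicator (measurableSet_far R)]
  refine integral_mono (integrable_farPos hφ hφi R)
    (hφi.abs.indicator (measurableSet_far R)) fun y => ?_
  exact Set.indicator_le_indicator (max_le (le_abs_self _) (abs_nonneg _))

lemma posLog_le_log_two {t : ℝ} (h0 : 0 ≤ t) (h : t ≤ 2) : posLog t ≤ log 2 := by
  have := posLog_le_posLog h0 h
  rwa [posLog_eq_log (x := 2) (by norm_num)] at this

lemma posLog_mul_le {n : ℕ} (φ : Eucl n → ℝ) {R : ℝ} {x : Eucl n} (hx0 : 0 < ‖x‖)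
    (hx : 2 * R ≤ ‖x‖) (y : Eucl n) :
    posLog (‖x‖ / ‖x - y‖) * φ y ≤
      posLog (‖x‖ / ‖x - y‖) * farPos φ R y + log 2 * |φ y| := by
  have h0 := posLog_nonneg (x := ‖x‖ / ‖x - y‖)
  have h2 : 0 ≤ log 2 * |φ y| := by positivity
  by_cases hy : R ≤ ‖y‖
  · have : farPos φ R y = max (φ y) 0 := Set.indicator_of_mem (s := {y | R ≤ ‖y‖}) hy _
    rw [this]
    have := mul_le_mul_of_nonneg_left (le_max_left (φ y) 0) h0
    linarith
  · have : farPos φ R y = 0 := Set.indicator_of_notMem (s := {y | R ≤ ‖y‖}) hy _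
    rw [this, mul_zero, zero_add]
    have h3 : ‖x‖ / 2 ≤ ‖x - y‖ := by
      have := norm_sub_norm_le x y
      linarith
    have h4 : posLog (‖x‖ / ‖x - y‖) ≤ log 2 := by
      refine posLog_le_log_two (by positivity) ?_
      rw [div_le_iff₀ (by linarith)]
      linarith
    calc _ ≤ posLog (‖x‖ / ‖x - y‖) * |φ y| := by gcongr; exact le_abs_self _
      _ ≤ _ := by gcongr

lemma near_le_nearFar {n : ℕ} (hn : 0 < n) {φ : Eucl n → ℝ} (hφ : Continuous φ)
    (hφi : Integrable φ) {R : ℝ} {x : Eucl n} (hx0 : 0 < ‖x‖) (hx : 2 * R ≤ ‖x‖) :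
    ∫ y, posLog (‖x‖ / ‖x - y‖) * φ y ≤ nearFar φ R x + log 2 * ∫ y, |φ y| := by
  have hf := integrable_posLog_mul_farPos hn hφ hφi R (norm_pos_iff.1 hx0)
  unfold nearFar
  rw [← integral_const_mul, ← integral_add hf (hφi.abs.const_mul _)]
  exact integral_mono (integrable_posLog_mul hn hφ hφi hx0 x)
    (hf.add (hφi.abs.const_mul _)) fun y => posLog_mul_le φ hx0 hx y

/-- The logarithm of `r ^ (n + s)` times the exponential of `n κ` times the radial part. -/
noncomputable def growth {n : ℕ} (s κ : ℝ) (φ : Eucl n → ℝ) (r : ℝ) : ℝ :=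
  (n + s) * log r + n * (κ * radialPart φ r)

lemma exp_growth {n : ℕ} (s κ : ℝ) (φ : Eucl n → ℝ) {r : ℝ} (hr : 0 < r) :
    exp (n * (κ * radialPart φ r)) = r ^ (-(n + s) : ℝ) * exp (growth s κ φ r) := by
  rw [rpow_def_of_pos hr, ← exp_add, growth]
  congr 1
  ring

lemma growth_sub {n : ℕ} {φ : Eucl n → ℝ} (hφi : Integrable φ) (s κ : ℝ) {r R : ℝ}
    (hr : 0 < r) (h : r ≤ R) :
    growth s κ φ R - growth s κ φ r =
      (n + s - n * κ * ∫ y, φ y) * (log R - log r) + n * κ * ∫ y, logGap r R ‖y‖ * φ y := by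
  have := radialPart_sub hφi hr h
  unfold growth
  linear_combination (n * κ) * this

/-- The potential `u` differs from `κ` times the logarithmic potential of `φ` by a bounded
amount, away from the origin. -/
def IsPotential {n : ℕ} (κ B : ℝ) (φ u : Eucl n → ℝ) : Prop :=
  ∀ x : Eucl n, x ≠ 0 →
    |u x - κ * (radialPart φ ‖x‖ + ∫ y, posLog (‖x‖ / ‖x - y‖) * φ y)| ≤ B

lemma exp_potential_le {n : ℕ} (hn : 0 < n) {φ u : Eucl n → ℝ} (hφ : Continuous φ)
    (hφi : Integrable φ) {κ B : ℝ} (hκ : 0 < κ) (hu : IsPotential κ B φ u) (s : ℝ) :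
    ∃ A : ℝ, 0 < A ∧ ∀ (R : ℝ) (x : Eucl n), 0 < ‖x‖ → 2 * R ≤ ‖x‖ →
      exp (n * u x) ≤ A * ‖x‖ ^ (-(n + s) : ℝ) * exp (growth s κ φ ‖x‖) *
        exp (n * κ * nearFar φ R x) := by
  refine ⟨exp (n * (B + κ * (log 2 * ∫ y, |φ y|))), exp_pos _, fun R x hx0 hx => ?_⟩
  have h1 := (abs_le.1 (hu x (norm_pos_iff.1 hx0))).2
  have h2 := mul_le_mul_of_nonneg_left (near_le_nearFar hn hφ hφi hx0 hx) hκ.le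
  have h3 : u x ≤ κ * radialPart φ ‖x‖ + κ * nearFar φ R x +
      (B + κ * (log 2 * ∫ y, |φ y|)) := by linarith
  rw [mul_assoc (exp _), ← exp_growth s κ φ hx0, ← exp_add, ← exp_add]
  apply exp_le_exp.2
  have := mul_le_mul_of_nonneg_left h3 (Nat.cast_nonneg (α := ℝ) n)
  linarith

lemma add_one_rpow_le {t : ℝ} (ht : 1 ≤ t) (s : ℝ) : (t + 1) ^ s ≤ 2 ^ |s| * t ^ s := by
  have h : t + 1 = (1 + 1 / t) * t := by field_simp
  have h1 : 1 / t ≤ 1 := by rw [div_le_one (by linarith)]; exact ht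
  have h2 : 0 < 1 / t := by positivity
  rw [h, mul_rpow (by positivity) (by linarith)]
  gcongr
  calc (1 + 1 / t) ^ s ≤ (1 + 1 / t) ^ |s| :=
        rpow_le_rpow_of_exponent_le (by linarith) (le_abs_self s)
    _ ≤ 2 ^ |s| := rpow_le_rpow (by linarith) (by linarith) (abs_nonneg s)

/-- Weighted integrability at infinity from volume growth of the integral over balls. -/
lemma lintegral_weight_lt_top {n : ℕ} {g : Eucl n → ENNReal} {K δ : ℝ}
    (hδ : 0 < δ)
    (hg : ∀ ρ : ℝ, 0 < ρ → ∫⁻ x in Metric.ball 0 ρ, g x ≤ ENNReal.ofReal (K * ρ ^ n)) :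
    ∫⁻ x in {x : Eucl n | 1 ≤ ‖x‖}, ENNReal.ofReal (‖x‖ ^ (-(n + δ) : ℝ)) * g x < ⊤ := by
  set S : ℕ → Set (Eucl n) := fun k => {x | 2 ^ k ≤ ‖x‖ ∧ ‖x‖ < 2 ^ (k + 1)}
  have hSm : ∀ k, MeasurableSet (S k) := fun k =>
    (measurableSet_le measurable_const measurable_norm).inter
      (measurableSet_lt measurable_norm measurable_const)
  have hsub : {x : Eucl n | 1 ≤ ‖x‖} ⊆ ⋃ k, S k := fun x hx =>
    Set.mem_iUnion.2 (exists_nat_pow_near hx one_lt_two)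
  have hk : ∀ k, ∫⁻ x in S k, ENNReal.ofReal (‖x‖ ^ (-(n + δ) : ℝ)) * g x ≤
      ENNReal.ofReal (K * 2 ^ n * ((2 : ℝ) ^ (-δ)) ^ k) := fun k => by
    have h2k : (0 : ℝ) < 2 ^ k := by positivity
    calc ∫⁻ x in S k, ENNReal.ofReal (‖x‖ ^ (-(n + δ) : ℝ)) * g x
        ≤ ∫⁻ x in S k, ENNReal.ofReal (((2 : ℝ) ^ k) ^ (-(n + δ) : ℝ)) * g x := by
          refine setLIntegral_mono' (hSm k) fun x hx => ?_
          gcongr ENNReal.ofReal ?_ * _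
          exact rpow_le_rpow_of_nonpos h2k hx.1 (by linarith [(Nat.cast_nonneg n : (0 : ℝ) ≤ n)])
      _ = ENNReal.ofReal (((2 : ℝ) ^ k) ^ (-(n + δ) : ℝ)) * ∫⁻ x in S k, g x :=
          lintegral_const_mul' _ _ ENNReal.ofReal_ne_top
      _ ≤ ENNReal.ofReal (((2 : ℝ) ^ k) ^ (-(n + δ) : ℝ)) *
            ENNReal.ofReal (K * (2 ^ (k + 1)) ^ n) := by
          gcongr
          refine (lintegral_mono_set fun x hx => ?_).trans (hg (2 ^ (k + 1)) (by positivity))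
          simpa using hx.2
      _ = _ := by
          rw [← ENNReal.ofReal_mul (by positivity)]
          congr 1
          rw [neg_add, rpow_add h2k, rpow_neg h2k.le, rpow_natCast, ← rpow_natCast_mul (by norm_num),
            ← rpow_mul_natCast (by norm_num), pow_succ, mul_pow, mul_comm (-δ)]
          field_simp
  refine (lintegral_mono_set hsub).trans_lt ?_
  refine (lintegral_iUnion_le _ _).trans_lt ((ENNReal.tsum_le_tsum hk).trans_lt ?_)
  have hs : Summable fun k : ℕ => K * 2 ^ n * ((2 : ℝ) ^ (-δ)) ^ k :=
    (summable_geometric_of_lt_one (by positivity)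
      (rpow_lt_one_of_one_lt_of_neg one_lt_two (neg_lt_zero.2 hδ))).mul_left _
  exact hs.tsum_ofReal_lt_top

lemma exists_logGap_integral_le {n : ℕ} {φ : Eucl n → ℝ} (hφi : Integrable φ) {η : ℝ}
    (hη : 0 < η) :
    ∃ r : ℝ, 1 ≤ r ∧ ∀ R : ℝ, r ≤ R →
      |∫ y, logGap r R ‖y‖ * φ y| ≤ η * (log R - log r) := by
  obtain ⟨r, hr, hr1⟩ := (((tendsto_integral_far hφi).eventually_lt_const hη).and
    (eventually_ge_atTop 1)).exists
  have hr0 : 0 < r := by linarith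
  refine ⟨r, hr1, fun R hR => ?_⟩
  have hlog : 0 ≤ log R - log r := sub_nonneg.2 (log_le_log hr0 hR)
  calc |∫ y, logGap r R ‖y‖ * φ y|
      ≤ ∫ y, (log R - log r) * ({y : Eucl n | r ≤ ‖y‖}).indicator (fun y => |φ y|) y := by
        rw [← Real.norm_eq_abs]
        refine norm_integral_le_of_norm_le
          ((hφi.abs.indicator (measurableSet_far r)).const_mul _) (.of_forall fun y => ?_)
        rw [norm_mul, Real.norm_of_nonneg (logGap_nonneg hr0 hR), Real.norm_eq_abs]
        by_cases hy : r ≤ ‖y‖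
        · rw [Set.indicator_of_mem (s := {y : Eucl n | r ≤ ‖y‖}) hy]
          gcongr
          exact logGap_le hr0 hR
        · rw [Set.indicator_of_notMem (s := {y : Eucl n | r ≤ ‖y‖}) hy,
            logGap_eq_zero hR (not_le.1 hy).le]
          simp
    _ = (log R - log r) * ∫ y in {y | r ≤ ‖y‖}, |φ y| := by
        rw [integral_const_mul, integral_indicator (measurableSet_far r)]
    _ ≤ η * (log R - log r) := by
        rw [mul_comm]
        gcongr

/-- On a cone where `|Q|` is comparable to `|x| ^ s`, the growth function stays bounded. -/
lemma growth_le_of_cone {n : ℕ} (hn : 0 < n) {φ u : Eucl n → ℝ} (hφ : Continuous φ)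
    (hφi : Integrable φ) {κ B : ℝ} (hκ : 0 < κ) (hu : IsPotential κ B φ u) {s c₁ r₀ : ℝ}
    (hc₁ : 0 < c₁) (hr₀ : 0 < r₀) (hr₁ : r₀ < 1) :
    ∃ M : ℝ, ∀ p : Eucl n, 0 < ‖p‖ →
      (∀ x ∈ Metric.ball p (r₀ * ‖p‖), c₁ * ‖x‖ ^ s * exp (n * u x) ≤ |φ x|) →
      growth s κ φ ‖p‖ ≤ M := by
  obtain ⟨K, hK0, hK⟩ := lintegral_sqrtKer hn
  have : Nonempty (Fin n) := ⟨⟨0, hn⟩⟩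
  set I := ∫ y, |φ y| with hI
  have hI0 : 0 ≤ I := integral_nonneg fun _ => abs_nonneg _
  set ω := volume.real (Metric.ball (0 : Eucl n) 1)
  have hω : 0 < ω := ENNReal.toReal_pos (Metric.measure_ball_pos _ _ one_pos).ne'
    measure_ball_lt_top.ne
  set L := log 2 - log (1 - r₀)
  have h1r : 0 < 1 - r₀ := by linarith
  -- comparison of `|x| ^ s` with `|p| ^ s`
  set m := min ((1 - r₀) ^ s) (2 ^ s)
  have hm : 0 < m := lt_min (by positivity) (by positivity)
  -- uniform bound for the mean of the near part
  set T := n * κ * (2 * (K * 2 ^ n * I)) / (ω * r₀ ^ n) with hT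
  have hT0 : 0 ≤ T := by positivity
  set D := exp (n * (κ * (L * I) + B)) / (c₁ * m) with hD
  have hD0 : 0 < D := by positivity
  set M₀ := exp T * D * I / (ω * r₀ ^ n)
  refine ⟨log (M₀ + 1), fun p hp hcone => ?_⟩
  have hM₀ : 0 ≤ M₀ := by positivity
  rw [le_log_iff_exp_le (by linarith)]
  refine le_trans ?_ (le_add_of_nonneg_right zero_le_one)
  set ρ := ‖p‖
  set G := growth s κ φ ρ with hG
  set N : Eucl n → ℝ := fun x => ∫ y, posLog (‖x‖ / ‖x - y‖) * |φ y|
  have hN0 : ∀ x, 0 ≤ N x := fun x => integral_nonneg fun y =>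
    mul_nonneg posLog_nonneg (abs_nonneg _)
  have hball : ∀ x ∈ Metric.ball p (r₀ * ρ), (1 - r₀) * ρ ≤ ‖x‖ ∧ ‖x‖ ≤ 2 * ρ := fun x hx => by
    have h1 : ‖x - p‖ < r₀ * ρ := by simpa [dist_eq_norm] using hx
    have h2 := norm_sub_norm_le p x
    have h3 := norm_sub_norm_le x p
    rw [norm_sub_rev] at h2
    constructor <;> nlinarith
  have hlow : ∀ x ∈ Metric.ball p (r₀ * ρ),
      exp G * ρ ^ (-(n : ℝ)) ≤ D * exp (n * κ * N x) * |φ x| := fun x hx => by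
    obtain ⟨hx1, hx2⟩ := hball x hx
    have hx0 : 0 < ‖x‖ := lt_of_lt_of_le (by positivity) hx1
    have h1 := (abs_le.1 (hu x (norm_pos_iff.1 hx0))).1
    have h2 : -N x ≤ ∫ y, posLog (‖x‖ / ‖x - y‖) * φ y := by
      rw [neg_le, ← integral_neg]
      refine integral_mono (integrable_posLog_mul hn hφ hφi hx0 x).neg
        (integrable_posLog_mul hn hφ.abs hφi.abs hx0 x) fun y => ?_
      rw [← mul_neg]
      exact mul_le_mul_of_nonneg_left (neg_le_abs _) posLog_nonneg
    have h3 : radialPart φ ρ - L * I ≤ radialPart φ ‖x‖ := by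
      have hlog2 : 0 ≤ log 2 := log_nonneg one_le_two
      have hlogr : log (1 - r₀) ≤ 0 := log_nonpos h1r.le (by linarith)
      rcases le_total ‖x‖ ρ with h | h
      · have h4 := (abs_le.1 (abs_radialPart_sub_le hφi hx0 h)).2
        have h5 := log_le_log (by positivity) hx1
        rw [log_mul h1r.ne' hp.ne'] at h5
        have h6 : (log ρ - log ‖x‖) * I ≤ L * I := by gcongr; simp only [L]; linarith
        linarith
      · have h4 := (abs_le.1 (abs_radialPart_sub_le hφi hp h)).1
        have h5 := log_le_log hx0 hx2
        rw [log_mul two_ne_zero hp.ne'] at h5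
        have h6 : (log ‖x‖ - log ρ) * I ≤ L * I := by gcongr; simp only [L]; linarith
        linarith
    have h4 : κ * radialPart φ ρ ≤ u x + κ * N x + (κ * (L * I) + B) := by
      have := mul_le_mul_of_nonneg_left h2 hκ.le
      have := mul_le_mul_of_nonneg_left h3 hκ.le
      linarith
    have h5 : exp (n * (κ * radialPart φ ρ)) ≤
        exp (n * u x) * exp (n * κ * N x) * exp (n * (κ * (L * I) + B)) := by
      rw [← exp_add, ← exp_add]
      apply exp_le_exp.2
      have := mul_le_mul_of_nonneg_left h4 (Nat.cast_nonneg (α := ℝ) n)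
      linarith
    rw [exp_growth s κ φ hp] at h5
    have h6 : m * ρ ^ s ≤ ‖x‖ ^ s := by
      rcases le_total 0 s with hs | hs
      · calc m * ρ ^ s ≤ (1 - r₀) ^ s * ρ ^ s := by gcongr; exact min_le_left _ _
          _ = ((1 - r₀) * ρ) ^ s := (mul_rpow h1r.le hp.le).symm
          _ ≤ _ := rpow_le_rpow (by positivity) hx1 hs
      · calc m * ρ ^ s ≤ 2 ^ s * ρ ^ s := by gcongr; exact min_le_right _ _
          _ = (2 * ρ) ^ s := (mul_rpow two_pos.le hp.le).symm
          _ ≤ _ := rpow_le_rpow_of_nonpos hx0 hx2 hs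
    have h7 : exp (n * u x) ≤ |φ x| / (c₁ * m) * ρ ^ (-s) := by
      rw [rpow_neg hp.le, ← div_eq_mul_inv, div_div, le_div_iff₀ (by positivity)]
      refine le_trans ?_ (hcone x hx)
      calc _ = c₁ * (m * ρ ^ s) * exp (n * u x) := by ring
        _ ≤ _ := by gcongr
    have h8 : ρ ^ (-(n + s) : ℝ) * ρ ^ s = ρ ^ (-(n : ℝ)) := by
      rw [← rpow_add hp]; congr 1; ring
    have h9 : ρ ^ (-s) * ρ ^ s = 1 := by
      rw [← rpow_add hp]; simp
    calc exp G * ρ ^ (-(n : ℝ)) = ρ ^ (-(n + s) : ℝ) * exp G * ρ ^ s := by rw [← h8]; ring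
      _ ≤ (|φ x| / (c₁ * m) * ρ ^ (-s)) * exp (n * κ * N x) * exp (n * (κ * (L * I) + B))
          * ρ ^ s := by
          refine mul_le_mul_of_nonneg_right (h5.trans ?_) (by positivity)
          gcongr
      _ = |φ x| / (c₁ * m) * exp (n * κ * N x) * exp (n * (κ * (L * I) + B))
          * (ρ ^ (-s) * ρ ^ s) := by ring
      _ = _ := by rw [h9, hD]; ring
  -- tangent line inequality on the ball
  set F := exp T * D * ρ ^ n / exp G with hF
  have hF0 : 0 ≤ F := by positivity
  have htan : ∀ x ∈ Metric.ball p (r₀ * ρ), 1 + T ≤ F * |φ x| + n * κ * N x := fun x hx => by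
    have h1 := hlow x hx
    have h2 := Real.add_one_le_exp (T - n * κ * N x)
    have h3 : exp (T - n * κ * N x) ≤ F * |φ x| := by
      rw [exp_sub, div_le_iff₀ (exp_pos _), hF, div_mul_eq_mul_div, div_mul_eq_mul_div,
        le_div_iff₀ (exp_pos _)]
      rw [rpow_neg hp.le, rpow_natCast, ← div_eq_mul_inv, div_le_iff₀ (by positivity)] at h1
      calc exp T * exp G ≤ exp T * (D * exp (n * κ * N x) * |φ x| * ρ ^ n) := by gcongr
        _ = _ := by ring
    linarith
  have hint : ∫⁻ x in Metric.ball p (r₀ * ρ), ENNReal.ofReal (N x) ≤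
      ENNReal.ofReal (2 * (K * (2 * ρ) ^ n * I)) := by
    have hsub : Metric.ball p (r₀ * ρ) ⊆ Metric.ball 0 (2 * ρ) := fun x hx => by
      have h1 : ‖x - p‖ < r₀ * ρ := by simpa [dist_eq_norm] using hx
      have h3 := norm_sub_norm_le x p
      rw [mem_ball_zero_iff]
      nlinarith
    calc ∫⁻ x in Metric.ball p (r₀ * ρ), ENNReal.ofReal (N x)
        ≤ ∫⁻ x in Metric.ball p (r₀ * ρ), 2 * ∫⁻ y,
            ENNReal.ofReal (sqrtKer ‖x‖ (x - y)) * ENNReal.ofReal |φ y| := by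
          refine setLIntegral_mono' measurableSet_ball fun x hx => ?_
          have hx0 : 0 < ‖x‖ := lt_of_lt_of_le (by positivity) (hball x hx).1
          rw [ofReal_integral_eq_lintegral_ofReal
            (integrable_posLog_mul hn hφ.abs hφi.abs hx0 x)
            (.of_forall fun y => mul_nonneg posLog_nonneg (abs_nonneg _)),
            ← lintegral_const_mul' _ _ (by simp)]
          refine lintegral_mono fun y => ?_
          rw [ENNReal.ofReal_mul posLog_nonneg, ← mul_assoc]
          gcongr
          refine (ENNReal.ofReal_le_ofReal (posLog_le_sqrtKer _ _)).trans_eq ?_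
          rw [ENNReal.ofReal_mul two_pos.le]
          simp
      _ = 2 * ∫⁻ x in Metric.ball p (r₀ * ρ), ∫⁻ y,
            ENNReal.ofReal (sqrtKer ‖x‖ (x - y)) * ENNReal.ofReal |φ y| :=
          lintegral_const_mul' _ _ (by simp)
      _ ≤ 2 * (ENNReal.ofReal (K * (2 * ρ) ^ n) * ENNReal.ofReal I) := by
          gcongr
          exact (lintegral_mono_set hsub).trans (lintegral_lintegral_sqrtKer_le
            (hK (2 * ρ) (by positivity)) (fun y => abs_nonneg _) hφ.abs.measurable hφi.abs)
      _ = _ := by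
          rw [ENNReal.ofReal_mul two_pos.le, ENNReal.ofReal_mul (p := K * _) (by positivity)]
          simp
  have hvol := volume_ball_eq (n := n) (ρ := r₀ * ρ) (by positivity) p
  have hmain : ENNReal.ofReal ((1 + T) * (ω * (r₀ * ρ) ^ n)) ≤
      ENNReal.ofReal (F * I + n * κ * (2 * (K * (2 * ρ) ^ n * I))) := by
    calc ENNReal.ofReal ((1 + T) * (ω * (r₀ * ρ) ^ n))
        = ∫⁻ x in Metric.ball p (r₀ * ρ), ENNReal.ofReal (1 + T) := by
          rw [setLIntegral_const, hvol, ENNReal.ofReal_mul (by positivity)]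
      _ ≤ ∫⁻ x in Metric.ball p (r₀ * ρ), (ENNReal.ofReal (F * |φ x|) +
            ENNReal.ofReal (n * κ) * ENNReal.ofReal (N x)) := by
          refine setLIntegral_mono' measurableSet_ball fun x hx => ?_
          rw [← ENNReal.ofReal_mul (by positivity),
            ← ENNReal.ofReal_add (by positivity) (by have := hN0 x; positivity)]
          exact ENNReal.ofReal_le_ofReal (htan x hx)
      _ ≤ ENNReal.ofReal (F * I) +
            ENNReal.ofReal (n * κ) * ENNReal.ofReal (2 * (K * (2 * ρ) ^ n * I)) := by
          have := hφ.measurable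
          rw [lintegral_add_left (by fun_prop), lintegral_const_mul' _ _ ENNReal.ofReal_ne_top]
          gcongr
          rw [hI, ← integral_const_mul, ofReal_integral_eq_lintegral_ofReal (hφi.abs.const_mul _)
            (.of_forall fun y => by positivity)]
          exact setLIntegral_le_lintegral _ _
      _ = _ := by
          rw [← ENNReal.ofReal_mul (by positivity), ← ENNReal.ofReal_add (by positivity)
            (by positivity)]
  rw [ENNReal.ofReal_le_ofReal_iff (by positivity)] at hmain
  have hTeq : n * κ * (2 * (K * (2 * ρ) ^ n * I)) = T * (ω * (r₀ * ρ) ^ n) := by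
    rw [hT, mul_pow, mul_pow]
    field_simp
  have h10 : ω * (r₀ * ρ) ^ n ≤ F * I := by linarith
  rw [hF, div_mul_eq_mul_div, le_div_iff₀ (exp_pos _)] at h10
  rw [le_div_iff₀ (by positivity)]
  have hρn : 0 < ρ ^ n := by positivity
  refine le_of_mul_le_mul_right ?_ hρn
  calc _ = ω * (r₀ * ρ) ^ n * exp G := by rw [mul_pow]; ring
    _ ≤ _ := h10
    _ = _ := by ring

/-- If the growth function is almost bounded, then the part of the curvature decaying faster than
`|x| ^ s` has a finite logarithmic moment. -/
lemma integrable_posLog_mul_light {n : ℕ} (hn : 0 < n) {φ u q : Eucl n → ℝ} (hφ : Continuous φ)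
    (hφi : Integrable φ) {κ B : ℝ} (hκ : 0 < κ) (hu : IsPotential κ B φ u) {s s₁ C₀ R₀ : ℝ}
    (hs : s₁ < s) (hC₀ : 0 < C₀) (hq0 : ∀ x, 0 ≤ q x)
    (hq : ∀ x : Eucl n, R₀ ≤ ‖x‖ → q x ≤ C₀ * ‖x‖ ^ s₁)
    (hqi : Integrable fun x => q x * exp (n * u x))
    (hgrowth : ∀ ε : ℝ, 0 < ε → ∃ M r : ℝ, ∀ t : ℝ, r ≤ t → growth s κ φ t ≤ M + ε * log t) :
    Integrable fun x => posLog ‖x‖ * (q x * exp (n * u x)) := by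
  obtain ⟨A, hA0, hA⟩ := exp_potential_le hn hφ hφi hκ hu s
  obtain ⟨K, hK0, hK⟩ := lintegral_exp_nearFar_le hn
  set ε := (s - s₁) / 4 with hε
  have hε0 : 0 < ε := by linarith
  obtain ⟨M, r, hM⟩ := hgrowth ε hε0
  have hsmall : ∀ᶠ R in atTop, 2 * (n * κ) * ∫ y, farPos φ R y ≤ 1 := by
    have h := ((tendsto_integral_far hφi).const_mul (2 * (n * κ)))
    rw [mul_zero] at h
    filter_upwards [h.eventually_le_const one_pos] with R hR
    refine le_trans ?_ hR
    gcongr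
    exact integral_farPos_le hφ.measurable hφi R
  obtain ⟨R, hR⟩ := hsmall.exists
  set g : Eucl n → ENNReal := fun x => ENNReal.ofReal (exp (n * κ * nearFar φ R x))
  have hT := lintegral_weight_lt_top (g := g) (δ := 2 * ε) (by linarith)
    (hK (n * κ) φ R (by positivity) hφ hφi hR)
  set R₂ := max (max R₀ (2 * R)) (max r 1)
  have hR₂1 : 1 ≤ R₂ := (le_max_right _ _).trans (le_max_right _ _)
  have hm : AEStronglyMeasurable (fun x => posLog ‖x‖ * (q x * exp (n * u x))) :=
    (Measurable.aestronglyMeasurable (by fun_prop)).mul hqi.1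
  have hpt : ∀ x : Eucl n, R₂ ≤ ‖x‖ → posLog ‖x‖ * (q x * exp (n * u x)) ≤
      (C₀ * A * exp M / ε) * (‖x‖ ^ (-(n + 2 * ε) : ℝ) * exp (n * κ * nearFar φ R x)) :=
    fun x hx => by
    have h1 : 1 ≤ ‖x‖ := hR₂1.trans hx
    have h0 : 0 < ‖x‖ := by linarith
    have h2 : R₀ ≤ ‖x‖ := ((le_max_left _ _).trans (le_max_left _ _)).trans hx
    have h3 : 2 * R ≤ ‖x‖ := ((le_max_right _ _).trans (le_max_left _ _)).trans hx
    have h4 : r ≤ ‖x‖ := ((le_max_left _ _).trans (le_max_right _ _)).trans hx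
    have h5 : posLog ‖x‖ ≤ ‖x‖ ^ ε / ε := by
      rw [posLog_eq_log (by rwa [abs_norm])]
      exact log_le_rpow_div h0.le hε0
    have h6 : exp (growth s κ φ ‖x‖) ≤ exp M * ‖x‖ ^ ε := by
      rw [rpow_def_of_pos h0, ← exp_add]
      apply exp_le_exp.2
      have := hM _ h4
      linarith
    calc posLog ‖x‖ * (q x * exp (n * u x))
        ≤ (‖x‖ ^ ε / ε) * ((C₀ * ‖x‖ ^ s₁) * (A * ‖x‖ ^ (-(n + s) : ℝ) * (exp M * ‖x‖ ^ ε) *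
            exp (n * κ * nearFar φ R x))) := by
          gcongr
          · exact mul_nonneg (hq0 x) (exp_pos _).le
          · exact hq x h2
          · refine (hA R x h0 h3).trans ?_
            gcongr
      _ = (C₀ * A * exp M / ε) * ((‖x‖ ^ ε * ‖x‖ ^ s₁ * ‖x‖ ^ (-(n + s) : ℝ) * ‖x‖ ^ ε) *
            exp (n * κ * nearFar φ R x)) := by ring
      _ = _ := by
          rw [← rpow_add h0, ← rpow_add h0, ← rpow_add h0]
          congr 4
          rw [hε]; ring
  have hfar : IntegrableOn (fun x => posLog ‖x‖ * (q x * exp (n * u x))) {x | R₂ ≤ ‖x‖} := by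
    refine ⟨hm.restrict, ?_⟩
    rw [hasFiniteIntegral_iff_ofReal (.of_forall fun x =>
      mul_nonneg posLog_nonneg (mul_nonneg (hq0 x) (exp_pos _).le))]
    calc ∫⁻ x in {x | R₂ ≤ ‖x‖}, ENNReal.ofReal (posLog ‖x‖ * (q x * exp (n * u x)))
        ≤ ∫⁻ x in {x | R₂ ≤ ‖x‖}, ENNReal.ofReal (C₀ * A * exp M / ε) *
            (ENNReal.ofReal (‖x‖ ^ (-(n + 2 * ε) : ℝ)) * g x) := by
          refine setLIntegral_mono' (measurableSet_far R₂) fun x hx => ?_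
          rw [← ENNReal.ofReal_mul (by positivity), ← ENNReal.ofReal_mul (by positivity)]
          exact ENNReal.ofReal_le_ofReal (hpt x hx)
      _ = ENNReal.ofReal (C₀ * A * exp M / ε) * ∫⁻ x in {x | R₂ ≤ ‖x‖},
            ENNReal.ofReal (‖x‖ ^ (-(n + 2 * ε) : ℝ)) * g x :=
          lintegral_const_mul' _ _ ENNReal.ofReal_ne_top
      _ < ⊤ := ENNReal.mul_lt_top ENNReal.ofReal_lt_top
          ((lintegral_mono_set fun x hx => hR₂1.trans hx).trans_lt hT)
  have hnear : IntegrableOn (fun x => posLog ‖x‖ * (q x * exp (n * u x)))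
      {x : Eucl n | R₂ ≤ ‖x‖}ᶜ := by
    refine Integrable.bdd_mul (c := posLog R₂) hqi.integrableOn
      (Measurable.aestronglyMeasurable (by fun_prop)) ?_
    filter_upwards [ae_restrict_mem (measurableSet_far R₂).compl] with x hx
    rw [Real.norm_of_nonneg posLog_nonneg]
    have hx' : ¬ R₂ ≤ ‖x‖ := hx
    exact posLog_le_posLog (norm_nonneg _) (not_le.1 hx').le
  have := hfar.union hnear
  rwa [Set.union_compl_self, integrableOn_univ] at this

/-- When the growth function is bounded above, the density decays like `|x| ^ (-n)`. -/
lemma decay_of_growth_le {n : ℕ} (hn : 0 < n) {φ u : Eucl n → ℝ} (hφ : Continuous φ)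
    (hφi : Integrable φ) {κ B : ℝ} (hκ : 0 < κ) (hu : IsPotential κ B φ u) {s A₀ M r : ℝ}
    (hA₀ : 0 < A₀)
    (hup : ∀ x : Eucl n, 1 ≤ ‖x‖ → |φ x| ≤ A₀ * ‖x‖ ^ s * exp (n * u x))
    (hM : ∀ t : ℝ, r ≤ t → growth s κ φ t ≤ M) :
    ∃ A R₁ : ℝ, 0 < A ∧ 0 < R₁ ∧ ∀ x : Eucl n, R₁ ≤ ‖x‖ → |φ x| ≤ A * ‖x‖ ^ (-(n : ℝ)) := by
  obtain ⟨A, hA0, hA⟩ := exp_potential_le hn hφ hφi hκ hu s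
  obtain ⟨K, hK0, hK⟩ := lintegral_exp_nearFar_le hn
  obtain ⟨K', hK0', hK'⟩ := lintegral_sqrtKer_ball hn
  set I := ∫ y, |φ y| with hI
  have hI0 : 0 ≤ I := integral_nonneg fun _ => abs_nonneg _
  have hsmall : ∀ᶠ R in atTop, 2 * (2 * (n * κ)) * ∫ y, farPos φ R y ≤ 1 := by
    have h := ((tendsto_integral_far hφi).const_mul (2 * (2 * (n * κ))))
    rw [mul_zero] at h
    filter_upwards [h.eventually_le_const one_pos] with R hR
    refine le_trans ?_ hR
    gcongr
    exact integral_farPos_le hφ.measurable hφi R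
  obtain ⟨R, hR⟩ := hsmall.exists
  have hexp := hK (2 * (n * κ)) φ R (by positivity) hφ hφi hR
  set R₂ := max (2 * R) (max r 1)
  have hR₂1 : 1 ≤ R₂ := (le_max_right _ _).trans (le_max_right _ _)
  set A₁ := A₀ * A * exp M with hA₁
  have hA₁0 : 0 < A₁ := by positivity
  have hpt : ∀ x : Eucl n, R₂ ≤ ‖x‖ →
      |φ x| ≤ A₁ * ‖x‖ ^ (-(n : ℝ)) * exp (n * κ * nearFar φ R x) := fun x hx => by
    have h1 : 1 ≤ ‖x‖ := hR₂1.trans hx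
    have h0 : 0 < ‖x‖ := by linarith
    have h3 : 2 * R ≤ ‖x‖ := (le_max_left _ _).trans hx
    have h4 : r ≤ ‖x‖ := ((le_max_left _ _).trans (le_max_right _ _)).trans hx
    have h5 : ‖x‖ ^ s * ‖x‖ ^ (-(n + s) : ℝ) = ‖x‖ ^ (-(n : ℝ)) := by
      rw [← rpow_add h0]; congr 1; ring
    calc |φ x| ≤ A₀ * ‖x‖ ^ s * (A * ‖x‖ ^ (-(n + s) : ℝ) * exp M *
            exp (n * κ * nearFar φ R x)) := by
          refine (hup x h1).trans ?_
          gcongr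
          refine (hA R x h0 h3).trans ?_
          gcongr
          exact hM _ h4
      _ = A₁ * (‖x‖ ^ s * ‖x‖ ^ (-(n + s) : ℝ)) * exp (n * κ * nearFar φ R x) := by
          rw [hA₁]; ring
      _ = _ := by rw [h5]
  set D := log 2 * I + A₁ * 2 ^ n * (8 * K' + K * 2 ^ n) with hD
  have hD0 : 0 ≤ D := by have := log_nonneg one_le_two; positivity
  have hnear : ∀ x : Eucl n, 2 * R₂ ≤ ‖x‖ → nearFar φ R x ≤ D := fun x hx => by
    set ρ := ‖x‖ with hρ
    have hρ0 : 0 < ρ := by linarith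
    set a := A₁ * 2 ^ n * ρ ^ (-(n : ℝ)) with ha
    have ha0 : 0 ≤ a := by positivity
    have hterm : ∀ y : Eucl n, posLog (ρ / ‖x - y‖) * farPos φ R y ≤ log 2 * |φ y| +
        (Metric.ball x (ρ / 2)).indicator (fun y => a * (8 * sqrtKer ρ (y - x) +
          exp (2 * (n * κ) * nearFar φ R y))) y := fun y => by
      have hl := posLog_nonneg (x := ρ / ‖x - y‖)
      have hlog := log_nonneg one_le_two
      by_cases hy : y ∈ Metric.ball x (ρ / 2)
      · rw [Set.indicator_of_mem hy]
        have hyx : ‖x - y‖ < ρ / 2 := by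
          rw [norm_sub_rev]; simpa [dist_eq_norm] using hy
        have hy1 : ρ / 2 ≤ ‖y‖ := by
          have := norm_sub_norm_le x y
          linarith
        have h1 : farPos φ R y ≤ a * exp (n * κ * nearFar φ R y) := by
          have h0 : ‖y‖ ^ (-(n : ℝ)) ≤ 2 ^ n * ρ ^ (-(n : ℝ)) := by
            calc ‖y‖ ^ (-(n : ℝ)) ≤ (ρ / 2) ^ (-(n : ℝ)) :=
                  rpow_le_rpow_of_nonpos (by positivity) hy1 (by simp)
              _ = _ := by
                  rw [div_rpow hρ0.le two_pos.le, rpow_neg two_pos.le, rpow_natCast, div_inv_eq_mul,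
                    mul_comm]
          calc farPos φ R y ≤ A₁ * ‖y‖ ^ (-(n : ℝ)) * exp (n * κ * nearFar φ R y) :=
                (farPos_le_abs φ R y).trans (hpt y (by linarith))
            _ ≤ A₁ * (2 ^ n * ρ ^ (-(n : ℝ))) * exp (n * κ * nearFar φ R y) := by gcongr
            _ = _ := by rw [ha]; ring
        have h2 := posLog_sq_le_sqrtKer ρ (y - x)
        rw [norm_sub_rev] at h2
        have h3 : exp (2 * (n * κ) * nearFar φ R y) = exp (n * κ * nearFar φ R y) ^ 2 := by
          rw [← exp_nat_mul]; congr 1; push_cast; ring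
        have h4 : posLog (ρ / ‖x - y‖) * farPos φ R y ≤
            a * (8 * sqrtKer ρ (y - x) + exp (2 * (n * κ) * nearFar φ R y)) := by
          calc _ ≤ posLog (ρ / ‖x - y‖) * (a * exp (n * κ * nearFar φ R y)) := by gcongr
            _ = a * (posLog (ρ / ‖x - y‖) * exp (n * κ * nearFar φ R y)) := by ring
            _ ≤ _ := by
              gcongr
              rw [h3]
              nlinarith [sq_nonneg (posLog (ρ / ‖x - y‖) - exp (n * κ * nearFar φ R y)),
                sq_nonneg (posLog (ρ / ‖x - y‖)), sq_nonneg (exp (n * κ * nearFar φ R y))]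
        have : 0 ≤ log 2 * |φ y| := by positivity
        linarith
      · rw [Set.indicator_of_notMem hy, add_zero]
        have hyx : ρ / 2 ≤ ‖x - y‖ := by
          rw [norm_sub_rev]; simpa [dist_eq_norm] using hy
        have h4 : posLog (ρ / ‖x - y‖) ≤ log 2 := by
          refine posLog_le_log_two (by positivity) ?_
          rw [div_le_iff₀ (by linarith)]
          linarith
        exact mul_le_mul h4 (farPos_le_abs φ R y) (farPos_nonneg φ R y) hlog
    have hsub : Metric.ball x (ρ / 2) ⊆ Metric.ball 0 (2 * ρ) := fun y hy => by
      have h1 : ‖y - x‖ < ρ / 2 := by simpa [dist_eq_norm] using hy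
      have h3 := norm_sub_norm_le y x
      rw [mem_ball_zero_iff]
      linarith
    have hφm := hφ.measurable
    have key : ENNReal.ofReal (nearFar φ R x) ≤ ENNReal.ofReal D := by
      calc ENNReal.ofReal (nearFar φ R x)
          = ∫⁻ y, ENNReal.ofReal (posLog (ρ / ‖x - y‖) * farPos φ R y) :=
            ofReal_integral_eq_lintegral_ofReal
              (integrable_posLog_mul_farPos hn hφ hφi R (norm_pos_iff.1 hρ0))
              (.of_forall fun y => mul_nonneg posLog_nonneg (farPos_nonneg φ R y))
        _ ≤ ∫⁻ y, (ENNReal.ofReal (log 2 * |φ y|) + (Metric.ball x (ρ / 2)).indicator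
              (fun y => ENNReal.ofReal a * (8 * ENNReal.ofReal (sqrtKer ρ (y - x)) +
                ENNReal.ofReal (exp (2 * (n * κ) * nearFar φ R y)))) y) := by
            refine lintegral_mono fun y => ?_
            refine (ENNReal.ofReal_le_ofReal (hterm y)).trans (ENNReal.ofReal_add_le.trans ?_)
            gcongr
            by_cases hy : y ∈ Metric.ball x (ρ / 2)
            · have h0 : 0 ≤ sqrtKer ρ (y - x) := zero_le_one.trans (one_le_sqrtKer _ _)
              rw [Set.indicator_of_mem hy, Set.indicator_of_mem hy, ENNReal.ofReal_mul ha0,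
                ENNReal.ofReal_add (by positivity) (exp_pos _).le,
                ENNReal.ofReal_mul (p := 8) (by norm_num)]
              simp
            · rw [Set.indicator_of_notMem hy, Set.indicator_of_notMem hy]
              simp
        _ = ENNReal.ofReal (log 2 * I) + ENNReal.ofReal a *
              (8 * (∫⁻ y in Metric.ball x (ρ / 2), ENNReal.ofReal (sqrtKer ρ (y - x))) +
                ∫⁻ y in Metric.ball x (ρ / 2),
                  ENNReal.ofReal (exp (2 * (n * κ) * nearFar φ R y))) := by
            have hm : Measurable fun y : Eucl n => 8 * ENNReal.ofReal (sqrtKer ρ (y - x)) := by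
              unfold sqrtKer; fun_prop
            rw [lintegral_add_left (by fun_prop), lintegral_indicator measurableSet_ball,
              lintegral_const_mul' _ _ ENNReal.ofReal_ne_top, lintegral_add_left hm,
              lintegral_const_mul' _ _ (by simp), hI, ← integral_const_mul,
              ofReal_integral_eq_lintegral_ofReal (hφi.abs.const_mul _)
                (.of_forall fun y => by have := log_nonneg one_le_two; positivity)]
        _ ≤ ENNReal.ofReal (log 2 * I) + ENNReal.ofReal a *
              (8 * ENNReal.ofReal (K' * ρ ^ n) + ENNReal.ofReal (K * (2 * ρ) ^ n)) := by
            gcongr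
            · exact (lintegral_mono_set (Metric.ball_subset_ball (by linarith))).trans
                (hK' ρ hρ0 x)
            · exact (lintegral_mono_set hsub).trans (hexp (2 * ρ) (by positivity))
        _ = ENNReal.ofReal (log 2 * I + a * (8 * (K' * ρ ^ n) + K * (2 * ρ) ^ n)) := by
            have := log_nonneg one_le_two
            rw [ENNReal.ofReal_add (by positivity) (by positivity), ENNReal.ofReal_mul ha0,
              ENNReal.ofReal_add (by positivity) (by positivity),
              ENNReal.ofReal_mul (p := 8) (by norm_num)]
            simp
        _ = ENNReal.ofReal D := by
            congr 1
            rw [hD, ha, rpow_neg hρ0.le, rpow_natCast, mul_pow]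
            field_simp
    exact (ENNReal.ofReal_le_ofReal_iff hD0).1 key
  refine ⟨A₁ * exp (n * κ * D), 2 * R₂, by positivity, by linarith, fun x hx => ?_⟩
  refine (hpt x (by linarith)).trans ?_
  rw [mul_right_comm]
  gcongr
  exact hnear x hx

/-- The growth function is controlled by the integral of `φ`, up to an arbitrarily small multiple
of the logarithm. -/
lemma exists_abs_growth_sub_le {n : ℕ} (hn : 0 < n) {φ : Eucl n → ℝ} (hφi : Integrable φ)
    {κ : ℝ} (hκ : 0 < κ) (s : ℝ) {ε : ℝ} (hε : 0 < ε) :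
    ∃ r : ℝ, 1 ≤ r ∧ ∀ R : ℝ, r ≤ R →
      |growth s κ φ R - growth s κ φ r - (n + s - n * κ * ∫ y, φ y) * (log R - log r)| ≤
        ε * (log R - log r) := by
  have hnκ : 0 < n * κ := by positivity
  obtain ⟨r, hr, h⟩ := exists_logGap_integral_le hφi (div_pos hε hnκ)
  refine ⟨r, hr, fun R hR => ?_⟩
  rw [growth_sub hφi s κ (by linarith) hR, add_sub_cancel_left, abs_mul, abs_of_pos hnκ]
  calc n * κ * |∫ y, logGap r R ‖y‖ * φ y| ≤ n * κ * (ε / (n * κ) * (log R - log r)) := by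
        gcongr
        exact h R hR
    _ = _ := by field_simp

/-- A logarithmic moment bounds the integrals against `logGap`. -/
lemma integral_logGap_mul_le {n : ℕ} {φ ψ : Eucl n → ℝ} (hφi : Integrable φ)
    (hψ0 : ∀ x, 0 ≤ ψ x) (hle : ∀ x, φ x ≤ ψ x)
    (hψ : Integrable fun x => posLog ‖x‖ * ψ x) {r R : ℝ} (hr : 1 ≤ r) (h : r ≤ R) :
    ∫ y, logGap r R ‖y‖ * φ y ≤ ∫ y, posLog ‖y‖ * ψ y :=
  integral_mono (integrable_logGap_mul hφi (by linarith) h) hψ fun y =>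
    (mul_le_mul_of_nonneg_left (hle y) (logGap_nonneg (by linarith) h)).trans
      (mul_le_mul_of_nonneg_right (logGap_le_posLog hr h) (hψ0 y))

/-- If the growth function is bounded along a sequence tending to infinity and one of the two parts
of the curvature decays faster than `|x| ^ s`, then the growth function is bounded above. -/
lemma exists_growth_le {n : ℕ} (hn : 0 < n) {u Q : Eucl n → ℝ} (hu : Continuous u)
    (hQ : Continuous Q) (hi : Integrable fun x => Q x * exp (n * u x)) {κ B : ℝ} (hκ : 0 < κ)
    (hpot : IsPotential κ B (fun x => Q x * exp (n * u x)) u) {s s₁ C₀ R₀ M : ℝ}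
    (hs : s₁ < s) (hC₀ : 0 < C₀) {τ : ℕ → ℝ} (hτ : Tendsto τ atTop atTop)
    (hM : ∀ i, growth s κ (fun x => Q x * exp (n * u x)) (τ i) ≤ M)
    (hpart : (∀ x : Eucl n, R₀ ≤ ‖x‖ → max (Q x) 0 ≤ C₀ * ‖x‖ ^ s₁) ∨
      (∀ x : Eucl n, R₀ ≤ ‖x‖ → max (-Q x) 0 ≤ C₀ * ‖x‖ ^ s₁)) :
    ∃ M' r : ℝ, ∀ t : ℝ, r ≤ t → growth s κ (fun x => Q x * exp (n * u x)) t ≤ M' := by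
  set φ : Eucl n → ℝ := fun x => Q x * exp (n * u x) with hφdef
  have hφ : Continuous φ := by fun_prop
  set θ := n + s - n * κ * ∫ y, φ y with hθ
  rcases lt_trichotomy θ 0 with h | h | h
  · obtain ⟨r, hr, hgr⟩ := exists_abs_growth_sub_le hn hi hκ s (neg_pos.2 h)
    refine ⟨growth s κ φ r, r, fun t ht => ?_⟩
    have := (abs_le.1 (hgr t ht)).2
    linarith
  · have hgrowth : ∀ ε : ℝ, 0 < ε → ∃ M r : ℝ, ∀ t : ℝ, r ≤ t →
        growth s κ φ t ≤ M + ε * log t := fun ε hε => by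
      obtain ⟨r, hr, hgr⟩ := exists_abs_growth_sub_le hn hi hκ s hε
      refine ⟨growth s κ φ r - ε * log r, r, fun t ht => ?_⟩
      have := (abs_le.1 (hgr t ht)).2
      rw [← hθ, h] at this
      linarith
    have hsub : ∀ {r R : ℝ}, 0 < r → r ≤ R →
        growth s κ φ R - growth s κ φ r = n * κ * ∫ y, logGap r R ‖y‖ * φ y := fun hr hR => by
      rw [growth_sub hi s κ hr hR, ← hθ, h, zero_mul, zero_add]
    rcases hpart with hp | hp
    · set ψ : Eucl n → ℝ := fun x => max (Q x) 0 * exp (n * u x)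
      have hψi : Integrable ψ := hi.mono (by fun_prop) (.of_forall fun x => by
        simp only [hφdef, ψ, norm_mul, norm_eq_abs]
        refine mul_le_mul_of_nonneg_right ?_ (abs_nonneg _)
        simpa only [max_self, sub_zero] using abs_max_sub_max_le_abs (Q x) 0 0)
      have hψ := integrable_posLog_mul_light hn hφ hi hκ hpot hs hC₀ (fun x => le_max_right _ _)
        hp hψi hgrowth
      refine ⟨growth s κ φ 1 + n * κ * ∫ y, posLog ‖y‖ * ψ y, 1, fun t ht => ?_⟩
      have h1 := integral_logGap_mul_le hi (ψ := ψ) (fun x => by positivity)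
        (fun x => mul_le_mul_of_nonneg_right (le_max_left _ _) (exp_pos _).le) hψ le_rfl ht
      have h2 := mul_le_mul_of_nonneg_left h1 (by positivity : 0 ≤ n * κ)
      linarith [hsub one_pos ht]
    · set ψ : Eucl n → ℝ := fun x => max (-Q x) 0 * exp (n * u x)
      have hψi : Integrable ψ := hi.mono (by fun_prop) (.of_forall fun x => by
        simp only [hφdef, ψ, norm_mul, norm_eq_abs]
        refine mul_le_mul_of_nonneg_right ?_ (abs_nonneg _)
        simpa only [max_self, sub_zero, abs_neg] using abs_max_sub_max_le_abs (-Q x) 0 0)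
      have hψ := integrable_posLog_mul_light hn hφ hi hκ hpot hs hC₀ (fun x => le_max_right _ _)
        hp hψi hgrowth
      refine ⟨M + n * κ * ∫ y, posLog ‖y‖ * ψ y, 1, fun t ht => ?_⟩
      obtain ⟨i, hit⟩ := (hτ.eventually_ge_atTop t).exists
      have h1 := integral_logGap_mul_le hi.neg (ψ := ψ) (fun x => by positivity)
        (fun x => by
          rw [Pi.neg_apply, ← neg_mul]
          exact mul_le_mul_of_nonneg_right (le_max_left _ _) (exp_pos _).le) hψ ht hit
      simp only [Pi.neg_apply, mul_neg, integral_neg] at h1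
      have h2 := mul_le_mul_of_nonneg_left h1 (by positivity : 0 ≤ n * κ)
      linarith [hsub (by linarith) hit, hM i]
  · obtain ⟨r, hr, hgr⟩ := exists_abs_growth_sub_le hn hi hκ s (half_pos h)
    exfalso
    have hlog := (tendsto_log_atTop.comp hτ).eventually_gt_atTop
      (log r + (M - growth s κ φ r) / (θ / 2))
    obtain ⟨i, hi1, hi2⟩ := (hlog.and (hτ.eventually_ge_atTop r)).exists
    have h1 := (abs_le.1 (hgr _ hi2)).1
    have h2 : (M - growth s κ φ r) / (θ / 2) < log (τ i) - log r := by
      simp only [Function.comp_apply] at hi1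
      linarith
    rw [div_lt_iff₀ (half_pos h)] at h2
    have := hM i
    nlinarith

lemma sphereVol_pos (n : ℕ) : 0 < sphereVol n := by
  have := Gamma_pos_of_pos (by positivity : 0 < (n + 1 : ℝ) / 2)
  unfold sphereVol
  positivity

/-- `u` is the logarithmic potential of `Q * exp (n * u)` plus the constant `C`, the constant
standing outside the integral. -/
def HasRepresentation {n : ℕ} (u Q : Eucl n → ℝ) (C : ℝ) : Prop :=
  ∀ x, u x = (2 / ((Nat.factorial (n - 1) : ℝ) * sphereVol n)) *
    (∫ y, log (‖y‖ / ‖x - y‖) * (Q y * exp (n * u y))) + C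

/-- The decay of the curvature density of a normal solution with an arbitrary additive constant. -/
theorem HasRepresentation.decay {n : ℕ} (hn : 0 < n) {u Q : Eucl n → ℝ} (hu : Continuous u)
    (hQ : Continuous Q) (hi : Integrable fun x => Q x * exp (n * u x)) {C : ℝ}
    (hrep : HasRepresentation u Q C) {s : ℝ} (hcone : SCone n Q s)
    (hpart : ∃ s₁ C₀ R₀ : ℝ, s₁ < s ∧ 0 < C₀ ∧ 0 < R₀ ∧
      ((∀ x : Eucl n, R₀ ≤ ‖x‖ → max (Q x) 0 ≤ C₀ * ‖x‖ ^ s₁) ∨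
       (∀ x : Eucl n, R₀ ≤ ‖x‖ → max (-Q x) 0 ≤ C₀ * ‖x‖ ^ s₁))) :
    ∃ A R₁ : ℝ, 0 < A ∧ 0 < R₁ ∧ ∀ x : Eucl n, R₁ ≤ ‖x‖ →
      |Q x| * exp (n * u x) ≤ A * ‖x‖ ^ (-(n : ℝ)) := by
  obtain ⟨C₁, c₁, r₀, xs, hC₁, hc₁, hr₀, hr₁, hxs, hxs', hup, hlow⟩ := hcone
  obtain ⟨s₁, C₀, R₀, hs, hC₀, -, hpart⟩ := hpart
  set φ : Eucl n → ℝ := fun x => Q x * exp (n * u x) with hφdef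
  have hφ : Continuous φ := by fun_prop
  have habs : ∀ x, |φ x| = |Q x| * exp (n * u x) := fun x => by
    rw [hφdef, abs_mul, abs_of_pos (exp_pos _)]
  set κ := 2 / ((Nat.factorial (n - 1) : ℝ) * sphereVol n) with hκdef
  have hκ : 0 < κ := by
    have := sphereVol_pos n
    positivity
  obtain ⟨B, hB⟩ := exists_potential_bound hn hφ hi
  have hpot : IsPotential κ (κ * B + |C|) φ u := fun x hx => by
    have h1 := mul_le_mul_of_nonneg_left (hB x hx) hκ.le
    rw [← abs_of_pos hκ, ← abs_mul, abs_of_pos hκ, mul_sub] at h1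
    rw [hrep x, ← hκdef, add_sub_right_comm]
    exact (abs_add_le _ _).trans (by gcongr)
  obtain ⟨M, hM⟩ := growth_le_of_cone hn hφ hi hκ hpot (s := s) hc₁ hr₀ hr₁
  obtain ⟨M', r, hM'⟩ := exists_growth_le hn hu hQ hi hκ hpot hs hC₀ hxs'
    (fun i => hM (xs i) (by linarith [hxs i]) fun x hx => by
      rw [habs]
      exact mul_le_mul_of_nonneg_right (hlow i x hx) (exp_pos _).le) hpart
  have hup' : ∀ x : Eucl n, 1 ≤ ‖x‖ →
      |φ x| ≤ C₁ * 2 ^ |s| * ‖x‖ ^ s * exp (n * u x) := fun x hx => by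
    rw [habs, mul_assoc C₁]
    gcongr
    refine (hup x).trans ?_
    gcongr
    exact add_one_rpow_le hx s
  obtain ⟨A, R₁, hA, hR₁, h⟩ := decay_of_growth_le hn hφ hi hκ hpot (by positivity) hup' hM'
  exact ⟨A, R₁, hA, hR₁, fun x hx => habs x ▸ h x hx⟩

/-- An integrable function satisfying the cone condition decays like `|x| ^ (-n)`. -/
theorem decay_of_integrable {n : ℕ} {Q : Eucl n → ℝ} (hQi : Integrable Q) {s : ℝ}
    (hcone : SCone n Q s) :
    ∃ A R₁ : ℝ, 0 < A ∧ 0 < R₁ ∧ ∀ x : Eucl n, R₁ ≤ ‖x‖ → |Q x| ≤ A * ‖x‖ ^ (-(n : ℝ)) := by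
  obtain ⟨C₁, c₁, r₀, xs, hC₁, hc₁, hr₀, hr₁, hxs, hxs', hup, hlow⟩ := hcone
  have h1r : 0 < 1 - r₀ := by linarith
  set ω := volume.real (Metric.ball (0 : Eucl n) 1)
  have hω : 0 < ω := ENNReal.toReal_pos (Metric.measure_ball_pos _ _ one_pos).ne'
    measure_ball_lt_top.ne
  set m := min ((1 - r₀) ^ s) (2 ^ s)
  have hm : 0 < m := lt_min (by positivity) (by positivity)
  have hs : s ≤ -n := by
    by_contra! hs
    have hlim := (tendsto_rpow_atTop (by linarith : 0 < s + n)).comp hxs'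
    obtain ⟨i, hi⟩ :=
      (hlim.eventually_gt_atTop ((∫ y, |Q y|) / (c₁ * m * (ω * r₀ ^ n)))).exists
    have hρ : 0 < ‖xs i‖ := by linarith [hxs i]
    set ρ := ‖xs i‖
    have hb : ∀ x ∈ Metric.ball (xs i) (r₀ * ρ), c₁ * (m * ρ ^ s) ≤ |Q x| := fun x hx => by
      refine le_trans ?_ (hlow i x hx)
      have h1 : ‖x - xs i‖ < r₀ * ρ := by simpa [dist_eq_norm] using hx
      have h2 := norm_sub_norm_le (xs i) x
      have h3 := norm_sub_norm_le x (xs i)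
      rw [norm_sub_rev] at h2
      have hx1 : (1 - r₀) * ρ ≤ ‖x‖ := by nlinarith
      have hx2 : ‖x‖ ≤ 2 * ρ := by nlinarith
      have hx0 : 0 < ‖x‖ := lt_of_lt_of_le (by positivity) hx1
      gcongr
      rcases le_total 0 s with h | h
      · calc m * ρ ^ s ≤ (1 - r₀) ^ s * ρ ^ s := by gcongr; exact min_le_left _ _
          _ = ((1 - r₀) * ρ) ^ s := (mul_rpow h1r.le hρ.le).symm
          _ ≤ _ := by gcongr
      · calc m * ρ ^ s ≤ 2 ^ s * ρ ^ s := by gcongr; exact min_le_right _ _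
          _ = (2 * ρ) ^ s := (mul_rpow two_pos.le hρ.le).symm
          _ ≤ _ := rpow_le_rpow_of_nonpos hx0 hx2 h
    have hint : c₁ * (m * ρ ^ s) * (ω * (r₀ * ρ) ^ n) ≤ ∫ y, |Q y| := by
      calc c₁ * (m * ρ ^ s) * (ω * (r₀ * ρ) ^ n)
          = ∫ _ in Metric.ball (xs i) (r₀ * ρ), c₁ * (m * ρ ^ s) := by
            rw [setIntegral_const, Measure.real, volume_ball_eq (by positivity),
              ENNReal.toReal_ofReal (by positivity), smul_eq_mul, mul_comm]
        _ ≤ ∫ y in Metric.ball (xs i) (r₀ * ρ), |Q y| :=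
            setIntegral_mono_on (integrableOn_const measure_ball_lt_top.ne)
              hQi.abs.integrableOn measurableSet_ball hb
        _ ≤ ∫ y, |Q y| := setIntegral_le_integral hQi.abs (.of_forall fun _ => abs_nonneg _)
    rw [Function.comp_apply, div_lt_iff₀ (by positivity), rpow_add hρ,
      rpow_natCast] at hi
    rw [mul_pow] at hint
    linarith
  refine ⟨C₁, 1, hC₁, one_pos, fun x hx => (hup x).trans ?_⟩
  gcongr
  have hn : (0 : ℝ) ≤ n := n.cast_nonneg
  exact (rpow_le_rpow_of_nonpos (by linarith) (by linarith) (by linarith)).trans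
    (rpow_le_rpow_of_exponent_le hx hs)

end NormalSolution

theorem Qenu_decay_of_scone (n : ℕ) (hn : 2 ≤ n) (heven : Even n)
    (u Q : EuclideanSpace ℝ (Fin n) → ℝ)
    (hnormal : IsNormalSolution n u Q)
    (s : ℝ) (hcone : SCone n Q s)
    (hpart : ∃ s₁ C₀ R₀ : ℝ, s₁ < s ∧ 0 < C₀ ∧ 0 < R₀ ∧
      ((∀ x : EuclideanSpace ℝ (Fin n), R₀ ≤ ‖x‖ → max (Q x) 0 ≤ C₀ * ‖x‖ ^ s₁) ∨
       (∀ x : EuclideanSpace ℝ (Fin n), R₀ ≤ ‖x‖ → max (-Q x) 0 ≤ C₀ * ‖x‖ ^ s₁))) :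
    ∃ C R₁ : ℝ, 0 < C ∧ 0 < R₁ ∧
      ∀ x : EuclideanSpace ℝ (Fin n), R₁ ≤ ‖x‖ →
        |Q x| * Real.exp (n * u x) ≤ C * ‖x‖ ^ (-(n : ℝ)) := by
  obtain ⟨hu, hQ, hi, C, hrep⟩ := hnormal
  have hn0 : 0 < n := by omega
  have hφ : Continuous fun x => Q x * exp (n * u x) :=
    hQ.continuous.mul (continuous_exp.comp (continuous_const.mul hu.continuous))
  by_cases hC : C = 0
  · subst hC
    refine NormalSolution.HasRepresentation.decay hn0 hu.continuous hQ.continuous hi (C := 0)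
      (fun x => ?_) hcone hpart
    simpa only [add_zero] using hrep x
  · -- The integral in `IsNormalSolution` extends over `C`, hence diverges and has value zero.
    have : Nonempty (Fin n) := ⟨⟨0, hn0⟩⟩
    have hu0 : ∀ x, x ≠ 0 → u x = 0 := fun x hx => by
      rw [hrep x, integral_undef, mul_zero]
      intro hint
      have hconst := hint.sub (NormalSolution.integrable_log_mul hn0 hφ hi hx)
      simp only [Pi.sub_def, add_sub_cancel_left] at hconst
      simp [integrable_const_iff, hC, isFiniteMeasure_iff] at hconst
    have hQi : Integrable Q := hi.congr <| by
      filter_upwards [NormalSolution.ae_ne' hn0 0] with x hx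
      simp [hu0 x hx]
    obtain ⟨A, R₁, hA, hR₁, h⟩ := NormalSolution.decay_of_integrable hQi hcone
    refine ⟨A, R₁, hA, hR₁, fun x hx => ?_⟩
    rw [hu0 x (norm_pos_iff.1 (hR₁.trans_le hx))]
    simpa using h x hx
end

section
/- Let u and f be smooth functions on ℝ² with −Δu(x) = f(x)·e^{2u(x)} for all x ∈ ℝ² and f(x) ≤ 1 for all x. Then ∫_{ℝ²} e^{2u(x)} dx ≥ 4π (the integral may be +∞), and if equality holds then f(x) = 1 for all x. -/
open MeasureTheory Real Filter RealInnerProductSpace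

/-- The Euclidean Laplacian on ℝ²: `Δf(x) = ∑ᵢ D²f(x)[eᵢ, eᵢ]`. -/
noncomputable def laplacian (f : EuclideanSpace ℝ (Fin 2) → ℝ)
    (x : EuclideanSpace ℝ (Fin 2)) : ℝ :=
  ∑ i : Fin 2, iteratedFDeriv ℝ 2 f x (fun _ => EuclideanSpace.single i 1)

open Set Topology Metric ENNReal

/-- The second-order necessary condition at a local minimum. -/
theorem IsLocalMin.fderiv_fderiv_apply_nonneg {E : Type*} [NormedAddCommGroup E] [NormedSpace ℝ E]
    {w : E → ℝ} {x : E} (hw : ContDiff ℝ 2 w) (h : IsLocalMin w x) (k : E) :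
    0 ≤ fderiv ℝ (fderiv ℝ w) x k k := by
  have hline : ∀ t : ℝ, HasDerivAt (fun s : ℝ => x + s • k) k t := fun t => by
    simpa using ((hasDerivAt_id t).smul_const k).const_add x
  have hd1 : ∀ t : ℝ, HasDerivAt (fun s : ℝ => w (x + s • k)) (fderiv ℝ w (x + t • k) k) t :=
    fun t => ((hw.differentiable two_ne_zero) (x + t • k)).hasFDerivAt.comp_hasDerivAt t (hline t)
  have hdw : Differentiable ℝ (fderiv ℝ w) :=
    (hw.fderiv_right (m := 1) le_rfl).differentiable one_ne_zero
  have hd2 : HasDerivAt (fun t : ℝ => fderiv ℝ w (x + t • k) k)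
      (fderiv ℝ (fderiv ℝ w) x k k) 0 := by
    have h2 := (hdw (x + (0 : ℝ) • k)).hasFDerivAt.comp_hasDerivAt (0 : ℝ) (hline 0)
    simpa using h2.clm_apply (hasDerivAt_const (0 : ℝ) k)
  have hderiv : deriv (fun s : ℝ => w (x + s • k)) = fun t => fderiv ℝ w (x + t • k) k :=
    funext fun t => (hd1 t).deriv
  have hmin : IsLocalMin (fun s : ℝ => w (x + s • k)) 0 := by
    have hx : Tendsto (fun s : ℝ => x + s • k) (𝓝 0) (𝓝 x) := by
      simpa using (hline 0).continuousAt.tendsto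
    simpa [IsLocalMin, IsMinFilter] using hx.eventually h
  by_contra! hneg
  have hmax : IsLocalMax (fun s : ℝ => w (x + s • k)) 0 := by
    refine isLocalMax_of_deriv_deriv_neg ?_ hmin.deriv_eq_zero (hd1 0).continuousAt
    rwa [hderiv, hd2.deriv]
  have hconst : (fun s : ℝ => w (x + s • k)) =ᶠ[𝓝 0] fun _ => w (x + (0 : ℝ) • k) := by
    filter_upwards [hmin, hmax] with s h1 h2 using le_antisymm h2 h1
  have := hconst.deriv.deriv_eq
  rw [hderiv, hd2.deriv] at this
  simp at this
  exact hneg.ne this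

/-- A positive semidefinite endomorphism of the plane satisfies the arithmetic-geometric mean
inequality between its determinant and its trace. -/
theorem abs_det_le_sq_half_trace (A : EuclideanSpace ℝ (Fin 2) →L[ℝ] EuclideanSpace ℝ (Fin 2))
    (hsymm : ∀ h k, ⟪A h, k⟫ = ⟪A k, h⟫) (hnonneg : ∀ h, 0 ≤ ⟪A h, h⟫) :
    |A.det| ≤ ((∑ i : Fin 2, ⟪A (EuclideanSpace.single i 1), EuclideanSpace.single i 1⟫) / 2) ^ 2
    := by
  set e : Fin 2 → EuclideanSpace ℝ (Fin 2) := fun i => EuclideanSpace.single i 1 with he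
  have hdet : A.det = ⟪A (e 0), e 0⟫ * ⟪A (e 1), e 1⟫ - ⟪A (e 0), e 1⟫ ^ 2 := by
    rw [ContinuousLinearMap.det,
      ← LinearMap.det_toMatrix (EuclideanSpace.basisFun (Fin 2) ℝ).toBasis, Matrix.det_fin_two]
    have hs := hsymm (e 0) (e 1)
    simp only [LinearMap.toMatrix_apply, OrthonormalBasis.coe_toBasis,
      OrthonormalBasis.coe_toBasis_repr_apply, OrthonormalBasis.repr_apply_apply,
      EuclideanSpace.basisFun_apply, ContinuousLinearMap.coe_coe, real_inner_comm (A _)]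
    change ⟪A (e 0), e 0⟫ * ⟪A (e 1), e 1⟫ - ⟪A (e 1), e 0⟫ * ⟪A (e 0), e 1⟫ = _
    rw [← hs]; ring
  have h0 := hnonneg (e 0)
  have h1 := hnonneg (e 1)
  have hquad : ∀ t : ℝ, 0 ≤ ⟪A (e 0), e 0⟫ * (t * t) + 2 * ⟪A (e 0), e 1⟫ * t
      + ⟪A (e 1), e 1⟫ := fun t => by
    have h2 := hnonneg (t • e 0 + e 1)
    have hs := hsymm (e 0) (e 1)
    simp only [map_add, map_smul, inner_add_left, inner_add_right, real_inner_smul_left,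
      real_inner_smul_right] at h2
    rw [← hs] at h2
    linarith
  have hdisc := discrim_le_zero hquad
  rw [discrim] at hdisc
  simp only [Fin.sum_univ_two]
  change |A.det| ≤ ((⟪A (e 0), e 0⟫ + ⟪A (e 1), e 1⟫) / 2) ^ 2
  rw [hdet, abs_of_nonneg (by nlinarith)]
  nlinarith [sq_nonneg (⟪A (e 0), e 0⟫ - ⟪A (e 1), e 1⟫), sq_nonneg ⟪A (e 0), e 1⟫]

section Gradient

variable {v : EuclideanSpace ℝ (Fin 2) → ℝ}

theorem contDiff_gradient (hv : ContDiff ℝ 2 v) : ContDiff ℝ 1 (gradient v) :=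
  (InnerProductSpace.toDual ℝ (EuclideanSpace ℝ (Fin 2))).symm.contDiff.comp
    (hv.fderiv_right (m := 1) le_rfl)

theorem inner_fderiv_gradient (hv : ContDiff ℝ 2 v) (x h k : EuclideanSpace ℝ (Fin 2)) :
    ⟪fderiv ℝ (gradient v) x h, k⟫ = fderiv ℝ (fderiv ℝ v) x h k := by
  have hd : DifferentiableAt ℝ (fderiv ℝ v) x :=
    (hv.fderiv_right (m := 1) le_rfl).differentiable one_ne_zero x
  have hg : DifferentiableAt ℝ (gradient v) x :=
    (contDiff_gradient hv).differentiable one_ne_zero x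
  have h1 := hg.hasFDerivAt.inner ℝ (hasFDerivAt_const k x)
  have h2 := hd.hasFDerivAt.clm_apply (hasFDerivAt_const k x)
  simp only [inner_gradient_left] at h1
  simpa using congrArg (fun L => L h) (h1.unique h2)

theorem laplacian_eq_sum_fderiv_fderiv (x : EuclideanSpace ℝ (Fin 2)) :
    laplacian v x = ∑ i : Fin 2, fderiv ℝ (fderiv ℝ v) x
      (EuclideanSpace.single i 1) (EuclideanSpace.single i 1) := by
  simp [laplacian, iteratedFDeriv_two_apply]

theorem norm_sq_gradient (x : EuclideanSpace ℝ (Fin 2)) :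
    ‖gradient v x‖ ^ 2 = ∑ i : Fin 2, (fderiv ℝ v x (EuclideanSpace.single i 1)) ^ 2 := by
  rw [EuclideanSpace.norm_sq_eq]
  refine Finset.sum_congr rfl fun i _ => ?_
  rw [← inner_gradient_left, EuclideanSpace.inner_single_right]
  simp

/-- First- and second-order conditions for `v` at a point where it is touched from below by the
paraboloid `c + ⟪p, y⟫ - a * ‖y - z‖ ^ 2`. -/
theorem isLocalMin_paraboloid (hv : ContDiff ℝ 2 v) {a : ℝ} {p x z : EuclideanSpace ℝ (Fin 2)}
    (hmin : IsLocalMin (fun y => v y + (a * ‖y - z‖ ^ 2 - ⟪p, y⟫)) x) :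
    gradient v x + (2 * a) • (x - z) = p ∧ 0 ≤ laplacian v x + 4 * a ∧
      |(fderiv ℝ (gradient v) x + (2 * a) • ContinuousLinearMap.id ℝ _).det| ≤
        ((laplacian v x + 4 * a) / 2) ^ 2 := by
  have hq1 : ∀ y, HasFDerivAt (fun y => a * ‖y - z‖ ^ 2 - ⟪p, y⟫)
      ((2 * a) • innerSL ℝ (y - z) - innerSL ℝ p) y := fun y => by
    have h1 := (((hasStrictFDerivAt_norm_sq (y - z)).hasFDerivAt.comp y
      ((hasFDerivAt_id y).sub_const z)).const_mul a).sub (innerSL ℝ p).hasFDerivAt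
    refine h1.congr_fderiv ?_
    ext k
    simp
    ring
  have hv1 : Differentiable ℝ v := hv.differentiable two_ne_zero
  have hv2 : Differentiable ℝ (fderiv ℝ v) :=
    (hv.fderiv_right (m := 1) le_rfl).differentiable one_ne_zero
  have hw1 : fderiv ℝ (fun y => v y + (a * ‖y - z‖ ^ 2 - ⟪p, y⟫)) =
      fun y => fderiv ℝ v y + ((2 * a) • innerSL ℝ (y - z) - innerSL ℝ p) :=
    funext fun y => ((hv1 y).hasFDerivAt.add (hq1 y)).fderiv
  have hw : ContDiff ℝ 2 (fun y => v y + (a * ‖y - z‖ ^ 2 - ⟪p, y⟫)) :=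
    hv.add (((contDiff_id.sub contDiff_const).norm_sq ℝ |>.const_smul a).sub
      (innerSL ℝ p).contDiff)
  have hw2 : ∀ k, fderiv ℝ (fderiv ℝ (fun y => v y + (a * ‖y - z‖ ^ 2 - ⟪p, y⟫))) x k k =
      fderiv ℝ (fderiv ℝ v) x k k + 2 * a * ⟪k, k⟫ := fun k => by
    have hd := (hw.fderiv_right (m := 1) le_rfl).differentiable one_ne_zero x
    have h1 := hd.hasFDerivAt.clm_apply (hasFDerivAt_const k x)
    have h2 := ((hv2 x).hasFDerivAt.clm_apply (hasFDerivAt_const k x)).add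
      (((((hasFDerivAt_id x).sub_const z).inner ℝ (hasFDerivAt_const k x)).const_mul
        (2 * a)).sub_const ⟪p, k⟫)
    have h3 := congrArg (fun L => L k) (h1.unique (h2.congr_of_eventuallyEq
      (Eventually.of_forall fun y => by simp [hw1, inner_sub_left])))
    simpa using h3
  set A := fderiv ℝ (gradient v) x + (2 * a) • ContinuousLinearMap.id ℝ _ with hA
  have hAapp : ∀ h k, ⟪A h, k⟫ = fderiv ℝ (fderiv ℝ v) x h k + 2 * a * ⟪h, k⟫ := fun h k => by
    simp [hA, inner_add_left, real_inner_smul_left, inner_fderiv_gradient hv]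
  have hsum : ∑ i : Fin 2, ⟪A (EuclideanSpace.single i 1), EuclideanSpace.single i 1⟫ =
      laplacian v x + 4 * a := by
    simp only [hAapp, laplacian_eq_sum_fderiv_fderiv, Fin.sum_univ_two, real_inner_self_eq_norm_sq,
      PiLp.norm_single, norm_one]
    ring
  have hnonneg : ∀ h, 0 ≤ ⟪A h, h⟫ := fun h => by
    have := hmin.fderiv_fderiv_apply_nonneg hw h
    rw [hw2] at this
    simpa [hAapp] using this
  refine ⟨?_, ?_, ?_⟩
  · have h0 := hmin.fderiv_eq_zero
    rw [hw1] at h0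
    refine ext_inner_right ℝ fun k => ?_
    have hk := congrArg (fun L => L k) h0
    simp only [add_apply, sub_apply,
      smul_apply, innerSL_apply_apply, smul_eq_mul,
      zero_apply] at hk
    rw [inner_add_left, inner_gradient_left, real_inner_smul_left]
    linarith
  · rw [← hsum]
    exact Finset.sum_nonneg fun i _ => hnonneg _
  · rw [← hsum]
    refine abs_det_le_sq_half_trace A (fun h k => ?_) hnonneg
    rw [hAapp, hAapp, real_inner_comm k h,
      (hv.contDiffAt (x := x)).isSymmSndFDerivAt (by simp) h k]

end Gradient

section AreaFormula

variable {E : Type*} [NormedAddCommGroup E] [NormedSpace ℝ E] [FiniteDimensional ℝ E]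
  [MeasurableSpace E] [BorelSpace E] (μ : Measure E) [μ.IsAddHaarMeasure]

/-- A weighted form of `MeasureTheory.addHaar_image_le_lintegral_abs_det_fderiv`: the area formula
inequality for a differentiable map which need not be injective. -/
theorem setLIntegral_image_le_lintegral_abs_det_fderiv_mul {F : E → E} {F' : E → E →L[ℝ] E}
    {s : Set E} (hs : MeasurableSet s) (hF : ∀ x, HasFDerivAt F (F' x) x)
    (hF' : Measurable fun x => ENNReal.ofReal |(F' x).det|) {g : E → ℝ≥0∞} (hg : Measurable g) :
    ∫⁻ p in F '' s, g p ∂μ ≤ ∫⁻ x in s, ENNReal.ofReal |(F' x).det| * g (F x) ∂μ := by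
  have hFm : Measurable F :=
    (continuous_iff_continuousAt.2 fun x => (hF x).continuousAt).measurable
  have hle : μ.restrict (F '' s) ≤
      ((μ.restrict s).withDensity fun x => ENNReal.ofReal |(F' x).det|).map F := by
    refine Measure.le_iff.2 fun B hB => ?_
    rw [Measure.restrict_apply hB, Measure.map_apply hFm hB, withDensity_apply _ (hFm hB),
      Measure.restrict_restrict (hFm hB), inter_comm B, ← image_inter_preimage,
      inter_comm s]
    exact addHaar_image_le_lintegral_abs_det_fderiv μ ((hFm hB).inter hs)
      fun x _ => (hF x).hasFDerivWithinAt
  calc ∫⁻ p in F '' s, g p ∂μ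
      ≤ ∫⁻ p, g p ∂((μ.restrict s).withDensity fun x => ENNReal.ofReal |(F' x).det|).map F :=
        lintegral_mono' hle le_rfl
    _ = _ := by
        rw [lintegral_map hg hFm]
        exact lintegral_withDensity_eq_lintegral_mul _ hF' (hg.comp hFm)

end AreaFormula

/-- The area of the unit sphere in stereographic coordinates. -/
theorem lintegral_stereographic_area :
    ∫⁻ p : EuclideanSpace ℝ (Fin 2), ENNReal.ofReal (4 / (1 + ‖p‖ ^ 2) ^ 2) =
      ENNReal.ofReal (4 * π) := by
  have hradial : ∫ y in Ioi (0 : ℝ), y * (4 / (1 + y ^ 2) ^ 2) = 2 := by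
    have hderiv : ∀ y ∈ Ioi (0 : ℝ),
        HasDerivAt (fun y : ℝ => -2 / (1 + y ^ 2)) (y * (4 / (1 + y ^ 2) ^ 2)) y := fun y _ => by
      have h0 : (1 + y ^ 2) ≠ 0 := by positivity
      refine ((hasDerivAt_const y (-2 : ℝ)).div
        (((hasDerivAt_id y).pow 2).const_add 1) h0).congr_deriv ?_
      simp
      field_simp
      ring
    have hlim : Tendsto (fun y : ℝ => -2 / (1 + y ^ 2)) atTop (𝓝 0) :=
      tendsto_const_nhds.div_atTop (tendsto_atTop_add_const_left _ _ (tendsto_pow_atTop two_ne_zero))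
    have hcont : ContinuousWithinAt (fun y : ℝ => -2 / (1 + y ^ 2)) (Ici 0) 0 := by
      refine (continuousAt_const.div (by fun_prop) (by norm_num)).continuousWithinAt
    rw [integral_Ioi_of_hasDerivAt_of_nonneg hcont hderiv
      (fun y (hy : 0 < y) => by positivity) hlim]
    norm_num
  have hint : ∫ p : EuclideanSpace ℝ (Fin 2), 4 / (1 + ‖p‖ ^ 2) ^ 2 = 4 * π := by
    rw [integral_fun_norm_addHaar volume (fun y : ℝ => 4 / (1 + y ^ 2) ^ 2)]
    have hball : volume.real (ball (0 : EuclideanSpace ℝ (Fin 2)) 1) = π := by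
      simp [Measure.real, EuclideanSpace.volume_ball_fin_two, pi_pos.le]
    simp only [finrank_euclideanSpace_fin, Nat.add_one_sub_one, pow_one, smul_eq_mul,
      nsmul_eq_mul, hradial, hball]
    push_cast
    ring
  have hintegrable : Integrable
      fun p : EuclideanSpace ℝ (Fin 2) => 4 / (1 + ‖p‖ ^ 2) ^ 2 := by
    by_contra h
    rw [integral_undef h] at hint
    linarith [pi_pos]
  rw [← hint, ofReal_integral_eq_lintegral_ofReal hintegrable
    (Eventually.of_forall fun p => by positivity)]

section Supersolution

variable {v : EuclideanSpace ℝ (Fin 2) → ℝ}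

theorem measurable_ofReal_abs_det_fderiv_gradient (hv : ContDiff ℝ 2 v) (a : ℝ) :
    Measurable fun x => ENNReal.ofReal
      |(fderiv ℝ (gradient v) x + (2 * a) • ContinuousLinearMap.id ℝ _).det| := by
  have h1 : Continuous (fderiv ℝ (gradient v)) := (contDiff_gradient hv).continuous_fderiv
    one_ne_zero
  have h2 : Continuous fun x =>
      (fderiv ℝ (gradient v) x + (2 * a) • ContinuousLinearMap.id ℝ _).det :=
    ContinuousLinearMap.continuous_det.comp (h1.add continuous_const)
  exact (ENNReal.continuous_ofReal.comp h2.abs).measurable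

/-- If `v` is comparable to the radius `r` at the centre of a ball, then the ball carries a definite
amount of the area `∫ v⁻²`. -/
theorem ofReal_pi_le_of_radius_le (hv : ContDiff ℝ 2 v) (hpos : ∀ x, 0 < v x)
    (hsuper : ∀ x, v x * laplacian v x ≤ 1 + ‖gradient v x‖ ^ 2)
    {z : EuclideanSpace ℝ (Fin 2)} {r K : ℝ} (hr : 0 < r) (hrv : r ≤ v z) (hvK : v z ≤ K * r) :
    ENNReal.ofReal π ≤ ENNReal.ofReal (((1 + 41 * K ^ 2) / 2) ^ 2) *
      ∫⁻ x in ball z r, ENNReal.ofReal ((v x ^ 2)⁻¹) := by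
  set m := v z with hm
  have hm0 : 0 < m := hpos z
  set a := 2 * m / r ^ 2 with ha
  have ha0 : 0 < a := by positivity
  have har : a * r ^ 2 = 2 * m := by rw [ha]; field_simp
  have hmr : m / r ≤ K := by rwa [div_le_iff₀ hr]
  have hK : 0 < K := lt_of_lt_of_le (by positivity) hmr
  set C := ((1 + 41 * K ^ 2) / 2) ^ 2 with hC
  set F : EuclideanSpace ℝ (Fin 2) → EuclideanSpace ℝ (Fin 2) :=
    fun x => gradient v x + (2 * a) • (x - z) with hF
  set F' := fun x => fderiv ℝ (gradient v) x +
    (2 * a) • ContinuousLinearMap.id ℝ (EuclideanSpace ℝ (Fin 2)) with hF'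
  have hFderiv : ∀ x, HasFDerivAt F (F' x) x := fun x =>
    ((contDiff_gradient hv).differentiable one_ne_zero x).hasFDerivAt.add
      (((hasFDerivAt_id x).sub_const z).const_smul (2 * a))
  have hF'meas := measurable_ofReal_abs_det_fderiv_gradient hv a
  have hvmeas : Measurable fun x => ENNReal.ofReal (C * (v x ^ 2)⁻¹) :=
    ((hv.continuous.measurable.pow_const 2).inv.const_mul C).ennreal_ofReal
  set S := ball z r ∩ {x | ENNReal.ofReal |(F' x).det| ≤ ENNReal.ofReal (C * (v x ^ 2)⁻¹)} with hS
  have hSmeas : MeasurableSet S := measurableSet_ball.inter (measurableSet_le hF'meas hvmeas)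
  have hsub : ball (0 : EuclideanSpace ℝ (Fin 2)) 1 ⊆ F '' S := by
    intro p hp
    rw [mem_ball_zero_iff] at hp
    have hp1 : ‖p‖ * r ≤ m := by nlinarith
    set w := fun y => v y + (a * ‖y - z‖ ^ 2 - ⟪p, y⟫) with hw
    have hwcont : Continuous w := by
      have := hv.continuous
      fun_prop
    obtain ⟨x, hxr, hxmin⟩ := (isCompact_closedBall z r).exists_isMinOn
      ⟨z, mem_closedBall_self hr.le⟩ hwcont.continuousOn
    have hxz : w x ≤ w z := hxmin (mem_closedBall_self hr.le)
    have hnorm : ‖x - z‖ ≤ r := by simpa [dist_eq_norm] using hxr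
    have hinner : ⟪p, x⟫ - ⟪p, z⟫ ≤ ‖p‖ * r := by
      rw [← inner_sub_right]
      exact (real_inner_le_norm _ _).trans (by gcongr)
    have hval : v x + a * ‖x - z‖ ^ 2 ≤ m + ‖p‖ * r := by
      simp only [hw, sub_self, norm_zero] at hxz
      linarith
    have hlt : ‖x - z‖ < r := by
      refine lt_of_le_of_ne hnorm fun h => ?_
      rw [h, har] at hval
      linarith [hpos x]
    have hxball : x ∈ ball z r := by simpa [dist_eq_norm] using hlt
    have hlocal : IsLocalMin w x :=
      hxmin.isLocalMin (mem_of_superset (isOpen_ball.mem_nhds hxball) ball_subset_closedBall)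
    obtain ⟨hgrad, hlap, hdet⟩ := isLocalMin_paraboloid hv hlocal
    refine ⟨x, ⟨hxball, ENNReal.ofReal_le_ofReal (hdet.trans ?_)⟩, hgrad⟩
    have hvx := hpos x
    have hv2 : v x ≤ 2 * m := by nlinarith [mul_nonneg ha0.le (sq_nonneg ‖x - z‖)]
    have hmr1 : 1 ≤ m / r := by rwa [one_le_div hr]
    have hgradK : ‖gradient v x‖ ≤ 5 * K := by
      have h1 : gradient v x = p - (2 * a) • (x - z) := eq_sub_of_add_eq hgrad
      have h2 : 2 * a * ‖x - z‖ ≤ 4 * (m / r) := by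
        calc 2 * a * ‖x - z‖ ≤ 2 * a * r := by gcongr
          _ = 4 * (m / r) := by rw [ha]; field_simp; ring
      calc ‖gradient v x‖ ≤ ‖p‖ + ‖(2 * a) • (x - z)‖ := by rw [h1]; exact norm_sub_le _ _
        _ = ‖p‖ + 2 * a * ‖x - z‖ := by
          rw [norm_smul, Real.norm_of_nonneg (by positivity)]
        _ ≤ 5 * K := by linarith
    have hav : 4 * a * v x ≤ 16 * K ^ 2 := by
      calc 4 * a * v x ≤ 4 * a * (2 * m) := by gcongr
        _ = 16 * (m / r) ^ 2 := by rw [ha]; field_simp; ring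
        _ ≤ 16 * K ^ 2 := by gcongr
    have hbound : laplacian v x + 4 * a ≤ (1 + 41 * K ^ 2) / v x := by
      rw [le_div_iff₀ hvx]
      have := hsuper x
      have : ‖gradient v x‖ ^ 2 ≤ (5 * K) ^ 2 := by gcongr
      nlinarith
    calc ((laplacian v x + 4 * a) / 2) ^ 2 ≤ ((1 + 41 * K ^ 2) / v x / 2) ^ 2 := by gcongr
      _ = C * (v x ^ 2)⁻¹ := by rw [hC]; field_simp
  calc ENNReal.ofReal π = volume (ball (0 : EuclideanSpace ℝ (Fin 2)) 1) := by
        simp [EuclideanSpace.volume_ball_fin_two]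
    _ ≤ volume (F '' S) := measure_mono hsub
    _ ≤ ∫⁻ x in S, ENNReal.ofReal |(F' x).det| :=
        addHaar_image_le_lintegral_abs_det_fderiv volume hSmeas
          fun x _ => (hFderiv x).hasFDerivWithinAt
    _ ≤ ∫⁻ x in S, ENNReal.ofReal (C * (v x ^ 2)⁻¹) :=
        setLIntegral_mono hvmeas fun x hx => hx.2
    _ ≤ ∫⁻ x in ball z r, ENNReal.ofReal (C * (v x ^ 2)⁻¹) :=
        lintegral_mono_set inter_subset_left
    _ = _ := by
        rw [← lintegral_const_mul']
        · simp only [ENNReal.ofReal_mul (show 0 ≤ C by positivity)]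
        · exact ENNReal.ofReal_ne_top

/-- Finite area forces superlinear growth. -/
theorem eventually_mul_norm_le_of_lintegral_ne_top (hv : ContDiff ℝ 2 v) (hpos : ∀ x, 0 < v x)
    (hsuper : ∀ x, v x * laplacian v x ≤ 1 + ‖gradient v x‖ ^ 2)
    (hfin : ∫⁻ x, ENNReal.ofReal ((v x ^ 2)⁻¹) ≠ ∞) (K : ℝ) :
    ∀ᶠ x in cocompact (EuclideanSpace ℝ (Fin 2)), K * ‖x‖ ≤ v x := by
  set L := max 1 (2 * K) with hL
  have hL1 : 1 ≤ L := le_max_left _ _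
  have hL2 : 2 * K ≤ L := le_max_right _ _
  set C := ((1 + 41 * L ^ 2) / 2) ^ 2 with hC
  have hmeas : Measurable fun x => ENNReal.ofReal ((v x ^ 2)⁻¹) :=
    (hv.continuous.measurable.pow_const 2).inv.ennreal_ofReal
  set ν := volume.withDensity fun x => ENNReal.ofReal ((v x ^ 2)⁻¹) with hν
  have : IsFiniteMeasure ν := isFiniteMeasure_withDensity hfin
  have htail : Tendsto (fun n : ℕ => ENNReal.ofReal C *
      ν (ball (0 : EuclideanSpace ℝ (Fin 2)) n)ᶜ) atTop (𝓝 0) := by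
    have hinter : ⋂ n : ℕ, (ball (0 : EuclideanSpace ℝ (Fin 2)) n)ᶜ = ∅ := by
      rw [← compl_iUnion, iUnion_ball_nat, compl_univ]
    have h := tendsto_measure_iInter_atTop (μ := ν)
      (fun n : ℕ => (measurableSet_ball (x := (0 : EuclideanSpace ℝ (Fin 2)))
        (ε := n)).compl.nullMeasurableSet)
      (fun i j hij => compl_subset_compl.2 (ball_subset_ball (by exact_mod_cast hij)))
      ⟨0, measure_ne_top _ _⟩
    rw [hinter, measure_empty] at h
    simpa using ENNReal.Tendsto.const_mul h (Or.inr ENNReal.ofReal_ne_top)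
  obtain ⟨n, hn⟩ := (htail.eventually_lt_const
    (show (0 : ℝ≥0∞) < ENNReal.ofReal π by simpa using pi_pos)).exists
  have hfar : ∀ᶠ x in cocompact (EuclideanSpace ℝ (Fin 2)), max 1 (2 * (n : ℝ)) ≤ ‖x‖ :=
    tendsto_norm_cocompact_atTop.eventually_ge_atTop _
  filter_upwards [hfar] with x hx
  have hx1 : 1 ≤ ‖x‖ := (le_max_left _ _).trans hx
  have hx2 : 2 * (n : ℝ) ≤ ‖x‖ := (le_max_right _ _).trans hx
  by_contra! hlt
  set r := min (‖x‖ / 2) (v x) with hr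
  have hr0 : 0 < r := lt_min (by linarith) (hpos x)
  have hvL : v x ≤ L * r := by
    rcases min_choice (‖x‖ / 2) (v x) with h | h
    · rw [hr, h]; nlinarith
    · rw [hr, h]; nlinarith [hpos x]
  have hle := ofReal_pi_le_of_radius_le hv hpos hsuper hr0 (min_le_right _ _) hvL
  refine absurd (hle.trans ?_) hn.not_ge
  rw [← withDensity_apply _ measurableSet_ball]
  gcongr
  intro y hy
  have hyx : ‖x - y‖ < r := by simpa [dist_eq_norm, norm_sub_rev] using hy
  have : ‖x‖ ≤ ‖x - y‖ + ‖y‖ := by simpa using norm_add_le (x - y) y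
  simp only [mem_compl_iff, mem_ball_zero_iff, not_lt]
  linarith [min_le_left (‖x‖ / 2) (v x)]

/-- If `v` has superlinear growth, then every vector is the slope of a supporting plane of `v`. -/
theorem exists_isLocalMin_sub_inner (hv : Continuous v)
    (hgrowth : ∀ K : ℝ, ∀ᶠ x in cocompact (EuclideanSpace ℝ (Fin 2)), K * ‖x‖ ≤ v x)
    (p : EuclideanSpace ℝ (Fin 2)) : ∃ x, IsLocalMin (fun y => v y - ⟪p, y⟫) x := by
  have hlarge : ∀ᶠ x in cocompact (EuclideanSpace ℝ (Fin 2)), v 0 ≤ ‖x‖ :=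
    tendsto_norm_cocompact_atTop.eventually_ge_atTop _
  obtain ⟨x, hx⟩ := (show Continuous fun y => v y - ⟪p, y⟫ by fun_prop).exists_forall_le' 0 (by
    filter_upwards [hgrowth (‖p‖ + 1), hlarge] with x h1 h2
    have := real_inner_le_norm p x
    simp only [inner_zero_right]
    linarith)
  exact ⟨x, Eventually.of_forall hx⟩

/-- The sharp area bound for `v = e⁻ᵘ`, in a form which keeps track of the equality case: the
area is bounded below by that of the part of the plane covered by the gradient map on the set of
contact with supporting planes. -/
theorem exists_contact_density {f : EuclideanSpace ℝ (Fin 2) → ℝ} (hv : ContDiff ℝ 2 v)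
    (hpos : ∀ x, 0 < v x) (hf : Continuous f) (hle : ∀ x, f x ≤ 1)
    (heq : ∀ x, v x * laplacian v x = f x + ‖gradient v x‖ ^ 2)
    (hfin : ∫⁻ x, ENNReal.ofReal ((v x ^ 2)⁻¹) ≠ ∞) :
    ∃ h : EuclideanSpace ℝ (Fin 2) → ℝ≥0∞,
      (∀ x, h x ≤ ENNReal.ofReal ((v x ^ 2)⁻¹)) ∧
      (∀ x, h x = ENNReal.ofReal ((v x ^ 2)⁻¹) → f x = 1) ∧
      ENNReal.ofReal (4 * π) ≤ ∫⁻ x, h x := by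
  have hgrowth := eventually_mul_norm_le_of_lintegral_ne_top hv hpos
    (fun x => by linarith [heq x, hle x]) hfin
  have hgcont : Continuous (gradient v) := (contDiff_gradient hv).continuous
  have hid : ∀ A : EuclideanSpace ℝ (Fin 2) →L[ℝ] EuclideanSpace ℝ (Fin 2),
      A + (2 * (0 : ℝ)) • ContinuousLinearMap.id ℝ _ = A := fun A => by ext; simp
  have hdet : Measurable fun x => ENNReal.ofReal |(fderiv ℝ (gradient v) x).det| := by
    simpa only [hid] using measurable_ofReal_abs_det_fderiv_gradient hv 0
  set B : EuclideanSpace ℝ (Fin 2) → ℝ := fun x => ((f x + ‖gradient v x‖ ^ 2) / (2 * v x)) ^ 2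
    with hB
  have hBmeas : Measurable fun x => ENNReal.ofReal (B x) := by
    have := hv.continuous
    exact (Continuous.pow (Continuous.div (by fun_prop) (by fun_prop)
      fun x => (mul_pos two_pos (hpos x)).ne') 2).measurable.ennreal_ofReal
  set S := {x | 0 ≤ f x + ‖gradient v x‖ ^ 2} ∩
    {x | ENNReal.ofReal |(fderiv ℝ (gradient v) x).det| ≤ ENNReal.ofReal (B x)} with hS
  have hSmeas : MeasurableSet S :=
    (measurableSet_le measurable_const (by fun_prop)).inter (measurableSet_le hdet hBmeas)
  have hsurj : gradient v '' S = univ := by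
    refine eq_univ_of_forall fun p => ?_
    obtain ⟨x, hx⟩ := exists_isLocalMin_sub_inner hv.continuous hgrowth p
    obtain ⟨h1, h2, h3⟩ := isLocalMin_paraboloid (a := 0) (z := 0) (x := x) (p := p) hv
      (by simpa [sub_eq_add_neg] using hx)
    rw [hid] at h3
    simp only [mul_zero, zero_smul, add_zero] at h1 h2 h3
    have hvx := hpos x
    refine ⟨x, ⟨?_, ENNReal.ofReal_le_ofReal (h3.trans_eq ?_)⟩, h1⟩
    · simp only [mem_ofPred_eq, ← heq]
      positivity
    · simp only [hB, ← heq]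
      field_simp
  set g : EuclideanSpace ℝ (Fin 2) → ℝ≥0∞ := fun p => ENNReal.ofReal (4 / (1 + ‖p‖ ^ 2) ^ 2)
    with hg
  have hgmeas : Measurable g := by fun_prop
  have harea := setLIntegral_image_le_lintegral_abs_det_fderiv_mul volume hSmeas
    (fun x => ((contDiff_gradient hv).differentiable one_ne_zero x).hasFDerivAt) hdet hgmeas
  rw [hsurj, Measure.restrict_univ, lintegral_stereographic_area, ← lintegral_indicator hSmeas]
    at harea
  have hbound : ∀ x ∈ S, ENNReal.ofReal |(fderiv ℝ (gradient v) x).det| * g (gradient v x) ≤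
      ENNReal.ofReal (((f x + ‖gradient v x‖ ^ 2) / (1 + ‖gradient v x‖ ^ 2)) ^ 2 *
        (v x ^ 2)⁻¹) := fun x hx => by
    have hvx := hpos x
    calc _ ≤ ENNReal.ofReal (B x) * g (gradient v x) := mul_le_mul_left hx.2 _
      _ = _ := by
        rw [hg, ← ENNReal.ofReal_mul (by positivity)]
        congr 1
        simp only [hB]
        field_simp
        norm_num
  have hratio : ∀ x ∈ S,
      ((f x + ‖gradient v x‖ ^ 2) / (1 + ‖gradient v x‖ ^ 2)) ^ 2 ≤ 1 := fun x hx => by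
    refine pow_le_one₀ (div_nonneg hx.1 (by positivity)) ?_
    rw [div_le_one (by positivity)]
    linarith [hle x]
  refine ⟨_, fun x => ?_, fun x hx => ?_, harea⟩
  · by_cases hxS : x ∈ S
    · rw [indicator_of_mem hxS]
      refine (hbound x hxS).trans (ENNReal.ofReal_le_ofReal ?_)
      exact mul_le_of_le_one_left (by positivity) (hratio x hxS)
    · simp [indicator_of_notMem hxS]
  · have hv0 : 0 < (v x ^ 2)⁻¹ := by have := hpos x; positivity
    by_cases hxS : x ∈ S
    · rw [indicator_of_mem hxS] at hx
      have h1 := (hx ▸ hbound x hxS)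
      rw [ENNReal.ofReal_le_ofReal_iff (by positivity)] at h1
      have h2 := one_le_of_le_mul_right₀ hv0 h1
      have h3 := (one_le_sq_iff₀ (div_nonneg hxS.1 (by positivity))).1 h2
      rw [one_le_div (by positivity)] at h3
      linarith [hle x]
    · rw [indicator_of_notMem hxS] at hx
      exact absurd hx.symm (ENNReal.ofReal_pos.2 hv0).ne'

end Supersolution

/-- Under `v = e⁻ᵘ` the prescribed curvature equation becomes `v * Δv = f + |∇v|²`. -/
theorem exp_neg_mul_laplacian {u : EuclideanSpace ℝ (Fin 2) → ℝ} (hu : ContDiff ℝ 2 u)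
    (x : EuclideanSpace ℝ (Fin 2)) :
    rexp (-u x) * laplacian (fun y => rexp (-u y)) x =
      -laplacian u x * rexp (-(2 * u x)) + ‖gradient (fun y => rexp (-u y)) x‖ ^ 2 := by
  have hu1 : Differentiable ℝ u := hu.differentiable two_ne_zero
  have hu2 : DifferentiableAt ℝ (fderiv ℝ u) x :=
    (hu.fderiv_right (m := 1) le_rfl).differentiable one_ne_zero x
  have hd1 : ∀ y, HasFDerivAt (fun y => rexp (-u y)) (rexp (-u y) • -fderiv ℝ u y) y :=
    fun y => (hu1 y).hasFDerivAt.neg.exp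
  have hf1 : fderiv ℝ (fun y => rexp (-u y)) = fun y => rexp (-u y) • -fderiv ℝ u y :=
    funext fun y => (hd1 y).fderiv
  have hf2 : ∀ k, fderiv ℝ (fderiv ℝ (fun y => rexp (-u y))) x k k =
      rexp (-u x) * ((fderiv ℝ u x k) ^ 2 - fderiv ℝ (fderiv ℝ u) x k k) := fun k => by
    have h2 : HasFDerivAt (fun y => rexp (-u y) • -fderiv ℝ u y) _ x :=
      (hd1 x).smul hu2.hasFDerivAt.neg
    rw [hf1, h2.fderiv]
    simp
    ring
  have hexp : rexp (-(2 * u x)) = rexp (-u x) ^ 2 := by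
    rw [← Real.exp_nat_mul]; push_cast; ring_nf
  rw [norm_sq_gradient, laplacian_eq_sum_fderiv_fderiv, laplacian_eq_sum_fderiv_fderiv, hexp]
  simp only [hf2, (hd1 x).fderiv, Fin.sum_univ_two]
  simp
  ring

theorem modified_ding_lemma (u f : EuclideanSpace ℝ (Fin 2) → ℝ)
    (hu : ContDiff ℝ (⊤ : ℕ∞) u) (hf : ContDiff ℝ (⊤ : ℕ∞) f)
    (heq : ∀ x, -laplacian u x = f x * Real.exp (2 * u x))
    (hle : ∀ x, f x ≤ 1) :
    ENNReal.ofReal (4 * Real.pi) ≤ ∫⁻ x, ENNReal.ofReal (Real.exp (2 * u x)) ∧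
    ((∫⁻ x, ENNReal.ofReal (Real.exp (2 * u x))) = ENNReal.ofReal (4 * Real.pi) →
      ∀ x, f x = 1) := by
  by_cases hfin : ∫⁻ x, ENNReal.ofReal (rexp (2 * u x)) = ∞
  · rw [hfin]
    exact ⟨le_top, fun h => absurd h.symm ENNReal.ofReal_ne_top⟩
  have hu2 : ContDiff ℝ 2 u := by exact_mod_cast contDiff_infty.1 hu 2
  have hdensity : ∀ x, (rexp (-u x) ^ 2)⁻¹ = rexp (2 * u x) := fun x => by
    rw [← Real.exp_nat_mul, ← Real.exp_neg]; push_cast; ring_nf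
  obtain ⟨h, hh_le, hh_eq, hh_int⟩ := exists_contact_density (f := f)
    (v := fun y => rexp (-u y)) (Real.contDiff_exp.comp hu2.neg) (fun x => Real.exp_pos _)
    hf.continuous hle
    (fun x => by
      rw [exp_neg_mul_laplacian hu2, heq, mul_assoc, ← Real.exp_add, add_neg_cancel,
        Real.exp_zero, mul_one])
    (by simpa only [hdensity] using hfin)
  simp only [hdensity] at hh_le hh_eq
  refine ⟨hh_int.trans (lintegral_mono hh_le), fun harea => ?_⟩
  have hmeas : Measurable fun x => ENNReal.ofReal (rexp (2 * u x)) := by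
    have := hu.continuous
    fun_prop
  have hae := ae_eq_of_ae_le_of_lintegral_le (Eventually.of_forall hh_le)
    (((lintegral_mono hh_le).trans_lt (lt_top_iff_ne_top.2 hfin)).ne) hmeas.aemeasurable
    (harea.trans_le hh_int)
  have hf1 : f =ᵐ[volume] fun _ => 1 := by
    filter_upwards [hae] with x hx using hh_eq x hx
  exact congrFun ((hf.continuous.ae_eq_iff_eq volume continuous_const).1 hf1)
end

section
/- Let p > 0, let n ≥ 2 be an even integer, and let u be a radially symmetric smooth function on ℝ^n such that (1+|x|^{np})·e^{nu} ∈ L¹(ℝ^n) and, for some constant C, u(x) = (2/((n−1)!·|S^n|)) ∫_{ℝ^n} log(|y|/|x−y|)·(1+|y|^{np})·e^{n u(y)} dy + C for all x. Set β := (2/((n−1)!·|S^n|)) ∫_{ℝ^n} (1+|x|^{np})·e^{n u(x)} dx. Then max{2, 2p} < β < 2 + 2p. -/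
open MeasureTheory Real Filter RealInnerProductSpace

section Kernel

variable {E : Type*} [NormedAddCommGroup E] [InnerProductSpace ℝ E]

/-- An isometric skew-symmetric operator, i.e. an orthogonal complex structure. -/
structure IsComplexStructure (J : E →L[ℝ] E) : Prop where
  norm_map : ∀ x, ‖J x‖ = ‖x‖
  skew : ∀ x y, ⟪x, J y⟫ = -⟪J x, y⟫

/-- The exponential of twice the average of `log ‖x - R y‖` over the circle of rotations `R`
generated by `J`, see `IsComplexStructure.average_log_norm_sub_rotation`. -/
noncomputable def meanSq (J : E →L[ℝ] E) (x y : E) : ℝ :=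
  (‖x‖ ^ 2 + ‖y‖ ^ 2 +
    √((‖x‖ ^ 2 + ‖y‖ ^ 2) ^ 2 - 4 * (⟪x, y⟫ ^ 2 + ⟪x, J y⟫ ^ 2))) / 2

/-- The average of `log ‖x - R y‖` over the circle of rotations `R` generated by `J`. -/
noncomputable def logMean (J : E →L[ℝ] E) (x y : E) : ℝ := Real.log (meanSq J x y) / 2

variable {J : E →L[ℝ] E} (hJ : IsComplexStructure J)

include hJ

lemma IsComplexStructure.inner_self (x : E) : ⟪x, J x⟫ = 0 := by
  have h := hJ.skew x x
  rw [real_inner_comm x (J x)] at h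
  linarith

lemma IsComplexStructure.inner_sq_add_inner_sq_le (x y : E) :
    ⟪x, y⟫ ^ 2 + ⟪x, J y⟫ ^ 2 ≤ ‖x‖ ^ 2 * ‖y‖ ^ 2 := by
  set p := ⟪x, y⟫ with hp
  set q := ⟪x, J y⟫ with hq
  set w := p • y + q • J y with hw
  have h1 : ⟪x, w⟫ = p ^ 2 + q ^ 2 := by
    rw [hw, inner_add_right, inner_smul_right, inner_smul_right, ← hp, ← hq]; ring
  have h2 : ‖w‖ ^ 2 = (p ^ 2 + q ^ 2) * ‖y‖ ^ 2 := by
    rw [hw, norm_add_sq_real, norm_smul, norm_smul, inner_smul_left, inner_smul_right,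
      hJ.inner_self, hJ.norm_map, mul_pow, mul_pow, Real.norm_eq_abs, Real.norm_eq_abs,
      sq_abs, sq_abs]
    simp; ring
  have h3 : (p ^ 2 + q ^ 2) ^ 2 ≤ ‖x‖ ^ 2 * ‖w‖ ^ 2 := by
    rw [← h1, ← mul_pow, ← sq_abs]
    exact pow_le_pow_left₀ (abs_nonneg _) (abs_real_inner_le_norm x w) 2
  rw [h2] at h3
  rcases (by positivity : 0 ≤ p ^ 2 + q ^ 2).eq_or_lt with h0 | h0
  · rw [← h0]; positivity
  · refine le_of_mul_le_mul_left ?_ h0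
    nlinarith

lemma IsComplexStructure.meanSq_comm (x y : E) : meanSq J x y = meanSq J y x := by
  unfold meanSq
  rw [hJ.skew x y, real_inner_comm y (J x), real_inner_comm x y, add_comm (‖x‖ ^ 2), neg_sq]

omit hJ in
lemma meanSq_smul_smul {r : ℝ} (hr : 0 ≤ r) (x y : E) :
    meanSq J (r • x) (r • y) = r ^ 2 * meanSq J x y := by
  unfold meanSq
  have h : ((r * ‖x‖) ^ 2 + (r * ‖y‖) ^ 2) ^ 2 -
      4 * ((r * (r * ⟪x, y⟫)) ^ 2 + (r * (r * ⟪x, J y⟫)) ^ 2) =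
      (r ^ 2) ^ 2 * ((‖x‖ ^ 2 + ‖y‖ ^ 2) ^ 2 - 4 * (⟪x, y⟫ ^ 2 + ⟪x, J y⟫ ^ 2)) := by
    ring
  rw [map_smul]
  simp only [norm_smul, Real.norm_eq_abs, abs_of_nonneg hr, real_inner_smul_left,
    real_inner_smul_right]
  rw [h, Real.sqrt_mul (by positivity), Real.sqrt_sq (by positivity)]
  ring

omit hJ in
lemma half_le_meanSq (x y : E) : (‖x‖ ^ 2 + ‖y‖ ^ 2) / 2 ≤ meanSq J x y := by
  unfold meanSq
  linarith [Real.sqrt_nonneg ((‖x‖ ^ 2 + ‖y‖ ^ 2) ^ 2 - 4 * (⟪x, y⟫ ^ 2 + ⟪x, J y⟫ ^ 2))]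

omit hJ in
lemma meanSq_pos {x y : E} (h : x ≠ 0 ∨ y ≠ 0) : 0 < meanSq J x y := by
  refine lt_of_lt_of_le ?_ (half_le_meanSq x y)
  rcases h with h | h <;> have := norm_pos_iff.2 h <;> positivity

omit hJ in
lemma continuous_meanSq : Continuous fun z : E × E => meanSq J z.1 z.2 := by
  unfold meanSq
  fun_prop

lemma IsComplexStructure.meanSq_quadratic (x y : E) :
    meanSq J x y ^ 2 - (‖x‖ ^ 2 + ‖y‖ ^ 2) * meanSq J x y + (⟪x, y⟫ ^ 2 + ⟪x, J y⟫ ^ 2) = 0 := by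
  have h := hJ.inner_sq_add_inner_sq_le x y
  have h2 : 0 ≤ (‖x‖ ^ 2 + ‖y‖ ^ 2) ^ 2 - 4 * (⟪x, y⟫ ^ 2 + ⟪x, J y⟫ ^ 2) := by
    nlinarith [sq_nonneg (‖x‖ ^ 2 - ‖y‖ ^ 2)]
  unfold meanSq
  have := Real.sq_sqrt h2
  nlinarith

lemma IsComplexStructure.meanSq_smul_mono (x y : E) {r s : ℝ} (hr : 0 ≤ r) (hrs : r ≤ s) :
    meanSq J (r • x) y ≤ meanSq J (s • x) y := by
  have hM := hJ.inner_sq_add_inner_sq_le x y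
  unfold meanSq
  simp only [norm_smul, Real.norm_eq_abs, mul_pow, sq_abs, real_inner_smul_left]
  set a := ‖x‖ ^ 2
  set b := ‖y‖ ^ 2
  set M1 := ⟪x, y⟫ ^ 2
  set M2 := ⟪x, J y⟫ ^ 2
  have ha : 0 ≤ a := by positivity
  have hb : 0 ≤ b := by positivity
  have hd : r ^ 2 ≤ s ^ 2 := by gcongr
  have hr2 : 0 ≤ r ^ 2 := by positivity
  generalize r ^ 2 = R at *
  generalize s ^ 2 = S at *
  have hS : 0 ≤ S := hr2.trans hd
  have h1 : (S * a - b) ^ 2 ≤ (S * a + b) ^ 2 - 4 * (S * M1 + S * M2) := by nlinarith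
  have h2 : b - S * a ≤ √((S * a + b) ^ 2 - 4 * (S * M1 + S * M2)) := by
    refine le_trans ?_ (Real.sqrt_le_sqrt h1)
    rw [Real.sqrt_sq_eq_abs, abs_sub_comm]
    exact le_abs_self _
  have h4 := Real.sq_sqrt (le_trans (sq_nonneg _) h1)
  set q := √((S * a + b) ^ 2 - 4 * (S * M1 + S * M2)) with hq
  have hq0 : 0 ≤ q := Real.sqrt_nonneg _
  have h3 : √((R * a + b) ^ 2 - 4 * (R * M1 + R * M2)) ≤ (S - R) * a + q := by
    have h6 : 0 ≤ S - R := sub_nonneg.2 hd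
    refine Real.sqrt_le_iff.2 ⟨by positivity, ?_⟩
    have h5 : 0 ≤ (S - R) * a * (q - (b - S * a)) :=
      mul_nonneg (by positivity) (by linarith)
    have h7 : 0 ≤ (S - R) * (a * b - (M1 + M2)) := mul_nonneg h6 (by linarith)
    nlinarith
  linarith

lemma IsComplexStructure.logMean_comm (x y : E) : logMean J x y = logMean J y x := by
  rw [logMean, hJ.meanSq_comm, logMean]

omit hJ in
lemma logMean_smul_smul (t : ℝ) {x y : E} (h : x ≠ 0 ∨ y ≠ 0) :
    logMean J (Real.exp t • x) (Real.exp t • y) = t + logMean J x y := by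
  unfold logMean
  rw [meanSq_smul_smul (Real.exp_pos t).le, Real.log_mul (by positivity) (meanSq_pos h).ne',
    Real.log_pow, Real.log_exp]
  push_cast; ring

lemma IsComplexStructure.logMean_mono (x y : E) {s t : ℝ} (hst : s ≤ t) :
    logMean J (Real.exp s • x) y ≤ logMean J (Real.exp t • x) y := by
  by_cases h : x = 0 ∧ y = 0
  · simp [h.1, h.2]
  have h' : Real.exp s • x ≠ 0 ∨ y ≠ 0 := by
    rw [not_and_or] at h
    simpa using h
  unfold logMean
  have := Real.log_le_log (meanSq_pos h')
    (hJ.meanSq_smul_mono x y (Real.exp_pos s).le (Real.exp_le_exp.2 hst))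
  linarith

lemma IsComplexStructure.logMean_sub_le (x y : E) {s t : ℝ} (hst : s ≤ t) :
    logMean J (Real.exp t • x) y - logMean J (Real.exp s • x) y ≤ t - s := by
  by_cases h : x ≠ 0 ∨ y ≠ 0
  · have key (t : ℝ) :
        logMean J (Real.exp t • x) y = t + logMean J (Real.exp (-t) • y) x := by
      rw [hJ.logMean_comm _ x, ← logMean_smul_smul t, smul_smul, ← Real.exp_add]
      · simp
      · simpa using h
    rw [key t, key s]
    linarith [hJ.logMean_mono y x (neg_le_neg hst)]
  · push Not at h
    simpa [h.1, h.2] using hst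

lemma IsComplexStructure.logMean_sub_swap {x y : E} (h : x ≠ 0 ∨ y ≠ 0) (t : ℝ) :
    (logMean J (Real.exp t • x) y - logMean J (Real.exp (-t) • x) y) +
      (logMean J (Real.exp t • y) x - logMean J (Real.exp (-t) • y) x) = 2 * t := by
  have key (t : ℝ) :
      logMean J (Real.exp t • x) y = t + logMean J (Real.exp (-t) • y) x := by
    rw [hJ.logMean_comm _ x, ← logMean_smul_smul t, smul_smul, ← Real.exp_add]
    · simp
    · simpa using h
  rw [key t, key (-t), neg_neg]
  ring

omit hJ in
lemma measurable_logMean_comp [MeasurableSpace E] [BorelSpace E] [SecondCountableTopology E]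
    (r : ℝ) : Measurable fun z : E × E => logMean J (r • z.1) z.2 := by
  have : Continuous fun z : E × E => meanSq J (r • z.1) z.2 :=
    continuous_meanSq.comp (by fun_prop : Continuous fun z : E × E => (r • z.1, z.2))
  exact this.measurable.log.div_const 2

/-- The rotation by the angle `θ` generated by a complex structure. -/
noncomputable def IsComplexStructure.rotation (θ : ℝ) : E →ₗᵢ[ℝ] E where
  toLinearMap := Real.cos θ • LinearMap.id + Real.sin θ • J.toLinearMap
  norm_map' x := by
    have h : ‖Real.cos θ • x + Real.sin θ • J x‖ ^ 2 = ‖x‖ ^ 2 := by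
      rw [norm_add_sq_real, norm_smul, norm_smul, inner_smul_left, inner_smul_right,
        hJ.inner_self, hJ.norm_map, mul_pow, mul_pow, Real.norm_eq_abs, Real.norm_eq_abs,
        sq_abs, sq_abs]
      simp only [mul_zero, add_zero]
      rw [← add_mul, Real.cos_sq_add_sin_sq, one_mul]
    exact (pow_left_inj₀ (norm_nonneg _) (norm_nonneg _) two_ne_zero).1 h

lemma IsComplexStructure.rotation_apply (θ : ℝ) (x : E) :
    hJ.rotation θ x = Real.cos θ • x + Real.sin θ • J x := rfl

lemma IsComplexStructure.norm_sub_rotation_sq (x y : E) (θ : ℝ) :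
    ‖x - hJ.rotation θ y‖ ^ 2 =
      ‖x‖ ^ 2 + ‖y‖ ^ 2 - 2 * (Real.cos θ * ⟪x, y⟫ + Real.sin θ * ⟪x, J y⟫) := by
  rw [norm_sub_sq_real, LinearIsometry.norm_map, hJ.rotation_apply, inner_add_right,
    inner_smul_right, inner_smul_right]
  ring

lemma IsComplexStructure.average_log_norm_sub_rotation {x y : E} (h : x ≠ 0 ∨ y ≠ 0) :
    (2 * π)⁻¹ * ∫ θ in (0 : ℝ)..2 * π, Real.log ‖x - hJ.rotation θ y‖ = logMean J x y := by
  set T := meanSq J x y with hT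
  have hT0 : 0 < T := meanSq_pos h
  have hquad := hJ.meanSq_quadratic x y
  have hhalf := half_le_meanSq (J := J) x y
  rw [← hT] at hquad hhalf
  set A := √T with hA
  have hA0 : 0 < A := Real.sqrt_pos.2 hT0
  have hA2 : A ^ 2 = T := Real.sq_sqrt hT0.le
  set p := ⟪x, y⟫ with hp
  set q := ⟪x, J y⟫ with hq
  let w : ℂ := ⟨p / A, q / A⟩
  have hw2 : ‖w‖ ^ 2 = (p ^ 2 + q ^ 2) / T := by
    rw [← Complex.normSq_eq_norm_sq, Complex.normSq_apply, ← hA2]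
    simp only [w]
    field_simp
  have hw2' : ‖w‖ ^ 2 = ‖x‖ ^ 2 + ‖y‖ ^ 2 - T := by
    rw [hw2, div_eq_iff hT0.ne']; nlinarith
  have hwA : ‖w‖ ≤ A := by
    refine (pow_le_pow_iff_left₀ (norm_nonneg _) hA0.le two_ne_zero).1 ?_
    rw [hw2', hA2]; linarith
  have hmem : w ∈ Metric.closedBall (0 : ℂ) |A| := by
    simpa [abs_of_pos hA0] using hwA
  have hcirc := circleAverage_log_norm_sub_const_of_mem_closedBall hmem
  have hlog : logMean J x y = Real.log A := by
    rw [hA, Real.log_sqrt hT0.le, logMean]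
  rw [hlog, ← hcirc, circleAverage_def, smul_eq_mul]
  congr 1
  refine intervalIntegral.integral_congr fun θ _ => ?_
  congr 1
  refine (pow_left_inj₀ (norm_nonneg _) (norm_nonneg _) two_ne_zero).1 ?_
  rw [hJ.norm_sub_rotation_sq, ← hp, ← hq]
  have hwn : ‖w‖ ^ 2 = (p / A) ^ 2 + (q / A) ^ 2 := by
    rw [hw2, ← hA2]; field_simp
  have h1 : (circleMap 0 A θ).re = A * Real.cos θ := by simp [circleMap, Complex.exp_re]
  have h2 : (circleMap 0 A θ).im = A * Real.sin θ := by simp [circleMap, Complex.exp_im]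
  rw [← Complex.normSq_eq_norm_sq, Complex.normSq_apply, Complex.sub_re, Complex.sub_im, h1, h2]
  simp only [w]
  have h3 : (A * Real.cos θ - p / A) * (A * Real.cos θ - p / A) +
      (A * Real.sin θ - q / A) * (A * Real.sin θ - q / A) =
      A ^ 2 * (Real.cos θ ^ 2 + Real.sin θ ^ 2) + ((p / A) ^ 2 + (q / A) ^ 2) -
        2 * (Real.cos θ * p + Real.sin θ * q) := by
    field_simp
    ring
  rw [h3, ← hwn, hw2', Real.cos_sq_add_sin_sq, hA2]
  ring

end Kernel

lemma exists_isComplexStructure {n : ℕ} (hn : Even n) :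
    ∃ J : EuclideanSpace ℝ (Fin n) →L[ℝ] EuclideanSpace ℝ (Fin n), IsComplexStructure J := by
  obtain ⟨m, rfl⟩ := hn
  let W := PiLp 2 fun _ : Fin m => ℂ
  have hfin : Module.finrank ℝ W = m + m := by
    rw [(WithLp.linearEquiv 2 ℝ (Fin m → ℂ)).finrank_eq, Module.finrank_pi_fintype]
    simp [Complex.finrank_real_complex, mul_two]
  let Φ : W ≃ₗᵢ[ℝ] EuclideanSpace ℝ (Fin (m + m)) :=
    ((stdOrthonormalBasis ℝ W).reindex (finCongr hfin)).repr
  let L : W →ₗ[ℝ] W :=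
    { toFun := fun x => Complex.I • x
      map_add' := fun x y => smul_add _ _ _
      map_smul' := fun r x => smul_comm _ _ _ }
  have hL (x : W) : L x = Complex.I • x := rfl
  refine ⟨LinearMap.toContinuousLinearMap
    (Φ.toLinearEquiv.toLinearMap ∘ₗ L ∘ₗ Φ.symm.toLinearEquiv.toLinearMap), ?_, ?_⟩
  · intro x
    change ‖Φ (L (Φ.symm x))‖ = ‖x‖
    rw [Φ.norm_map, hL, norm_smul, Complex.norm_I, one_mul, Φ.symm.norm_map]
  · intro x y
    change ⟪x, Φ (L (Φ.symm y))⟫ = -⟪Φ (L (Φ.symm x)), y⟫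
    have h1 : ⟪x, Φ (L (Φ.symm y))⟫ = ⟪Φ.symm x, L (Φ.symm y)⟫ := by
      rw [← Φ.inner_map_map, Φ.apply_symm_apply]
    have h2 : ⟪Φ (L (Φ.symm x)), y⟫ = ⟪L (Φ.symm x), Φ.symm y⟫ := by
      rw [← Φ.inner_map_map (L (Φ.symm x)), Φ.apply_symm_apply]
    rw [h1, h2, hL, hL, PiLp.inner_apply, PiLp.inner_apply, ← Finset.sum_neg_distrib]
    refine Finset.sum_congr rfl fun i _ => ?_
    have hI (z : W) : (Complex.I • z).ofLp i = Complex.I * z.ofLp i := rfl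
    simp only [hI, Complex.inner, Complex.mul_re, Complex.mul_im, Complex.conj_re, Complex.conj_im,
      Complex.I_re, Complex.I_im]
    ring

lemma IsComplexStructure.integral_log_div_norm_sub_rotation {E : Type*} [NormedAddCommGroup E]
    [InnerProductSpace ℝ E] {J : E →L[ℝ] E} (hJ : IsComplexStructure J) {x y : E}
    (hy : ‖y‖ ≠ 0) (hxy : ‖y‖ ≠ ‖x‖) :
    ∫ θ in (0 : ℝ)..2 * π, Real.log (‖y‖ / ‖x - hJ.rotation θ y‖) =
      2 * π * (Real.log ‖y‖ - logMean J x y) := by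
  have hne (θ : ℝ) : ‖x - hJ.rotation θ y‖ ≠ 0 := by
    intro h
    rw [norm_eq_zero, sub_eq_zero] at h
    exact hxy (by rw [h, (hJ.rotation θ).norm_map])
  have hcont : Continuous fun θ => Real.log ‖x - hJ.rotation θ y‖ := by
    refine Continuous.log ?_ hne
    simp only [hJ.rotation_apply]
    fun_prop
  rw [← hJ.average_log_norm_sub_rotation (Or.inr (norm_ne_zero_iff.1 hy))]
  simp only [fun θ => Real.log_div hy (hne θ)]
  rw [intervalIntegral.integral_sub intervalIntegrable_const (hcont.intervalIntegrable _ _),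
    intervalIntegral.integral_const, smul_eq_mul, sub_zero]
  field_simp

section Potential

variable {E : Type*} [NormedAddCommGroup E] [InnerProductSpace ℝ E] [FiniteDimensional ℝ E]
  [MeasurableSpace E] [BorelSpace E] [Nontrivial E]

lemma integrable_posLog_inv_norm : Integrable fun z : E => log⁺ ‖z‖⁻¹ := by
  refine (integrable_fun_norm_addHaar (volume : Measure E) (f := fun t : ℝ => log⁺ t⁻¹)).2 ?_
  have h1 : IntegrableOn Real.log (Set.Ioc 0 1) := by
    rw [← intervalIntegrable_iff_integrableOn_Ioc_of_le zero_le_one]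
    exact intervalIntegral.intervalIntegrable_log'
  have h2 : IntegrableOn (fun t : ℝ => t ^ (Module.finrank ℝ E - 1) • log⁺ t⁻¹)
      (Set.Ioc 0 1) := by
    refine Integrable.mono' h1.norm ?_ ?_
    · exact ((measurable_id.pow_const _).mul
        (measurable_const.max measurable_inv.log)).aestronglyMeasurable
    · refine (ae_restrict_iff' measurableSet_Ioc).2 (ae_of_all _ fun t ht => ?_)
      rw [norm_smul, norm_pow, Real.norm_of_nonneg ht.1.le, Real.norm_of_nonneg posLog_nonneg]
      have : log⁺ t⁻¹ ≤ ‖Real.log t‖ := by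
        change max 0 (Real.log t⁻¹) ≤ _
        rw [Real.log_inv]
        exact max_le (norm_nonneg _) (neg_le_abs _)
      calc _ ≤ 1 * ‖Real.log t‖ := by
            gcongr
            · exact posLog_nonneg
            · exact pow_le_one₀ ht.1.le ht.2
        _ = _ := one_mul _
  have h3 : IntegrableOn (fun t : ℝ => t ^ (Module.finrank ℝ E - 1) • log⁺ t⁻¹)
      (Set.Ioi 1) := by
    refine integrableOn_zero.congr_fun (fun t ht => ?_) measurableSet_Ioi
    have : log⁺ t⁻¹ = 0 := by
      rw [posLog_eq_zero_iff, abs_inv]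
      exact inv_le_one_of_one_le₀ (le_trans (Set.mem_Ioi.1 ht).le (le_abs_self t))
    simp [this]
  rw [← Set.Ioc_union_Ioi_eq_Ioi zero_le_one]
  exact h2.union h3

lemma integrable_posLog_inv_norm_sub_mul {f : E → ℝ} (hf : Continuous f) (x : E) :
    Integrable fun y : E => log⁺ ‖x - y‖⁻¹ * f y := by
  obtain ⟨K, hK⟩ := (isCompact_closedBall x 1).exists_bound_of_continuousOn hf.continuousOn
  have h := ((integrable_posLog_inv_norm (E := E)).comp_sub_left x).mul_const K
  refine h.mono' ?_ (ae_of_all _ fun y => ?_)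
  · have : Measurable fun y : E => log⁺ ‖x - y‖⁻¹ :=
      measurable_const.max (measurable_const.sub measurable_id).norm.inv.log
    exact (this.mul hf.measurable).aestronglyMeasurable
  · rw [norm_mul, Real.norm_of_nonneg posLog_nonneg]
    by_cases hy : y ∈ Metric.closedBall x 1
    · exact mul_le_mul_of_nonneg_left (hK y hy) posLog_nonneg
    · have : log⁺ ‖x - y‖⁻¹ = 0 := by
        rw [posLog_eq_zero_iff, abs_inv, abs_norm, ← dist_eq_norm, dist_comm]
        exact inv_le_one_of_one_le₀ (not_le.1 hy).le
      simp [this]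

omit [InnerProductSpace ℝ E] [FiniteDimensional ℝ E] [MeasurableSpace E] [BorelSpace E]
  [Nontrivial E] in
lemma abs_log_div_norm_sub_le (x y : E) :
    |Real.log (‖y‖ / ‖x - y‖)| ≤
      log⁺ ‖0 - y‖⁻¹ + log⁺ ‖x - y‖⁻¹ + (Real.log 2 + log⁺ ‖x‖) := by
  have hlog2 : 0 ≤ Real.log 2 := Real.log_nonneg one_le_two
  have p1 := posLog_nonneg (x := ‖0 - y‖⁻¹)
  have p2 := posLog_nonneg (x := ‖x - y‖⁻¹)
  have p3 := posLog_nonneg (x := ‖x‖)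
  by_cases hy : ‖y‖ = 0
  · rw [hy, zero_div, Real.log_zero, abs_zero]; linarith
  by_cases hxy : ‖x - y‖ = 0
  · rw [hxy, div_zero, Real.log_zero, abs_zero]; rw [hxy] at p2; linarith
  rw [Real.log_div hy hxy, zero_sub, norm_neg]
  rw [zero_sub, norm_neg] at p1
  have e1 := posLog_sub_posLog_inv (x := ‖y‖)
  have e2 := posLog_sub_posLog_inv (x := ‖x - y‖)
  have i1 : log⁺ ‖y‖ ≤ Real.log 2 + log⁺ ‖x - y‖ + log⁺ ‖x‖ := by
    refine le_trans (monotoneOn_posLog (Set.mem_Ici.2 (norm_nonneg _))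
      (Set.mem_Ici.2 (by positivity)) ?_) posLog_add
    have := norm_sub_le x (x - y)
    rw [sub_sub_cancel] at this
    linarith
  have i2 : log⁺ ‖x - y‖ ≤ Real.log 2 + log⁺ ‖x‖ + log⁺ ‖y‖ :=
    le_trans (monotoneOn_posLog (Set.mem_Ici.2 (norm_nonneg _))
      (Set.mem_Ici.2 (by positivity)) (norm_sub_le x y)) posLog_add
  rw [abs_le]
  constructor <;> linarith

lemma integrable_log_div_norm_sub_mul {f : E → ℝ} (hf : Continuous f) (hfi : Integrable f)
    (x : E) : Integrable fun y : E => Real.log (‖y‖ / ‖x - y‖) * f y := by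
  have h := (((integrable_posLog_inv_norm_sub_mul hf.abs 0).add
    (integrable_posLog_inv_norm_sub_mul hf.abs x)).add
      (hfi.abs.const_mul (Real.log 2 + log⁺ ‖x‖)))
  refine h.mono' ?_ (ae_of_all _ fun y => ?_)
  · have : Measurable fun y : E => Real.log (‖y‖ / ‖x - y‖) :=
      (measurable_norm.div (measurable_const.sub measurable_id).norm).log
    exact (this.mul hf.measurable).aestronglyMeasurable
  · rw [norm_mul, Real.norm_eq_abs, Real.norm_eq_abs]
    simp only [Pi.add_apply]
    rw [← add_mul, ← add_mul]
    exact mul_le_mul_of_nonneg_right (abs_log_div_norm_sub_le x y) (abs_nonneg _)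

variable {J : E →L[ℝ] E}

/-- Averaging the logarithmic potential of a radial density over rotations. -/
lemma IsComplexStructure.integral_log_div_norm_sub_mul (hJ : IsComplexStructure J) {f : E → ℝ}
    (hf : Continuous f) (hfi : Integrable f) (hrad : ∀ x y, ‖x‖ = ‖y‖ → f x = f y) (x : E) :
    Integrable (fun y => (Real.log ‖y‖ - logMean J x y) * f y) ∧
      ∫ y, Real.log (‖y‖ / ‖x - y‖) * f y = ∫ y, (Real.log ‖y‖ - logMean J x y) * f y := by
  set G : ℝ → E → ℝ := fun θ y => Real.log (‖y‖ / ‖x - hJ.rotation θ y‖) * f y with hG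
  have hmp (θ : ℝ) : MeasurePreserving (hJ.rotation θ) (volume : Measure E) volume :=
    ((hJ.rotation θ).toLinearIsometryEquiv rfl).measurePreserving
  have hemb (θ : ℝ) : MeasurableEmbedding (hJ.rotation θ) :=
    ((hJ.rotation θ).toLinearIsometryEquiv rfl).toHomeomorph.measurableEmbedding
  have hcomp (θ : ℝ) (y : E) : G θ y =
      Real.log (‖hJ.rotation θ y‖ / ‖x - hJ.rotation θ y‖) * f (hJ.rotation θ y) := by
    simp only [hG, (hJ.rotation θ).norm_map]
    rw [hrad (hJ.rotation θ y) y ((hJ.rotation θ).norm_map y)]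
  have hint0 := integrable_log_div_norm_sub_mul hf hfi x
  have hintθ (θ : ℝ) : Integrable (G θ) := by
    have := ((hmp θ).integrable_comp_emb (hemb θ)).2 hint0
    exact this.congr (ae_of_all _ fun y => (hcomp θ y).symm)
  have hvalθ (θ : ℝ) : ∫ y, G θ y = ∫ y, Real.log (‖y‖ / ‖x - y‖) * f y := by
    simp only [hcomp]
    exact (hmp θ).integral_comp (hemb θ) fun y => Real.log (‖y‖ / ‖x - y‖) * f y
  have hnormθ (θ : ℝ) : ∫ y, ‖G θ y‖ = ∫ y, ‖Real.log (‖y‖ / ‖x - y‖) * f y‖ := by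
    simp only [hcomp]
    exact (hmp θ).integral_comp (hemb θ) fun y => ‖Real.log (‖y‖ / ‖x - y‖) * f y‖
  set ν : Measure ℝ := volume.restrict (Set.Ioc 0 (2 * π)) with hν
  have hrot : Continuous fun z : ℝ × E => hJ.rotation z.1 z.2 := by
    simp only [hJ.rotation_apply]
    fun_prop
  have hmeas : Measurable (Function.uncurry G) := by
    refine Measurable.mul ?_ (hf.measurable.comp measurable_snd)
    exact (measurable_snd.norm.div (continuous_const.sub hrot).norm.measurable).log
  have hprod : Integrable (Function.uncurry G) (ν.prod volume) := by
    refine (integrable_prod_iff hmeas.aestronglyMeasurable).2 ⟨ae_of_all _ hintθ, ?_⟩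
    simp only [Function.uncurry_apply_pair, hnormθ]
    exact integrable_const _
  have hae : ∀ᵐ y : E, ∫ θ, G θ y ∂ν = 2 * π * ((Real.log ‖y‖ - logMean J x y) * f y) := by
    have h0 : ∀ᵐ y : E, y ∉ Metric.sphere (0 : E) 0 :=
      measure_eq_zero_iff_ae_notMem.1 (Measure.addHaar_sphere volume 0 0)
    have h1 : ∀ᵐ y : E, y ∉ Metric.sphere (0 : E) ‖x‖ :=
      measure_eq_zero_iff_ae_notMem.1 (Measure.addHaar_sphere volume 0 ‖x‖)
    filter_upwards [h0, h1] with y hy0 hy1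
    rw [mem_sphere_zero_iff_norm] at hy0 hy1
    rw [hν, ← intervalIntegral.integral_of_le (by positivity)]
    simp only [hG]
    rw [intervalIntegral.integral_mul_const, hJ.integral_log_div_norm_sub_rotation hy0 hy1, mul_assoc]
  have hpi : (2 * π) ≠ 0 := by positivity
  constructor
  · have h := (hprod.integral_prod_right.congr hae).const_mul (2 * π)⁻¹
    simpa only [inv_mul_cancel_left₀ hpi] using h
  · have hswap := integral_integral_swap hprod
    rw [integral_congr_ae hae, integral_const_mul] at hswap
    simp only [hvalθ, integral_const, hν, smul_eq_mul] at hswap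
    have : (volume.restrict (Set.Ioc 0 (2 * π))).real Set.univ = 2 * π := by
      simp [Measure.real, Real.volume_Ioc, Real.pi_pos.le]
    rw [this] at hswap
    exact mul_left_cancel₀ hpi hswap

end Potential

lemma HasDerivAt.nonpos_of_forall_pos {φ : ℝ → ℝ} {d : ℝ} (h : HasDerivAt φ d 0) (h0 : φ 0 = 0)
    (hle : ∀ t, 0 < t → φ t ≤ 0) : d ≤ 0 := by
  have h1 := (hasDerivWithinAt_iff_tendsto_slope' (Set.self_notMem_Ioi)).1
    (h.hasDerivWithinAt (s := Set.Ioi 0))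
  refine le_of_tendsto h1 ?_
  filter_upwards [self_mem_nhdsWithin] with t ht
  rw [slope_def_field, h0, sub_zero, sub_zero]
  exact div_nonpos_of_nonpos_of_nonneg (hle t ht) (Set.mem_Ioi.1 ht).le

section Virial

variable {E : Type*} [NormedAddCommGroup E] [InnerProductSpace ℝ E] [FiniteDimensional ℝ E]
  [MeasurableSpace E] [BorelSpace E]

omit [FiniteDimensional ℝ E] [BorelSpace E] in
lemma integrable_dilation_sub_mul {u g : E → ℝ} {K : ℝ} {μ : Measure E}
    [OpensMeasurableSpace E] (hu : Continuous u)
    (hK : ∀ x s t, |u (Real.exp t • x) - u (Real.exp s • x)| ≤ K * |t - s|)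
    (hgi : Integrable g μ) (s t : ℝ) :
    Integrable (fun x => (u (Real.exp t • x) - u (Real.exp s • x)) * g x) μ := by
  have hc : Continuous fun x => u (Real.exp t • x) - u (Real.exp s • x) := by fun_prop
  exact hgi.bdd_mul hc.measurable.aestronglyMeasurable (ae_of_all _ fun x => hK x s t)

lemma hasDerivAt_integral_dilation {u g : E → ℝ} {K : ℝ} (hu : ContDiff ℝ 1 u)
    (hK : ∀ x s t, |u (Real.exp t • x) - u (Real.exp s • x)| ≤ K * |t - s|)
    (hgi : Integrable g) :
    Integrable (fun x => fderiv ℝ u x x * g x) ∧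
      HasDerivAt (fun t => ∫ x, (u (Real.exp t • x) - u x) * g x)
        (∫ x, fderiv ℝ u x x * g x) 0 := by
  have hI := integrable_dilation_sub_mul hu.continuous hK hgi 0
  simp only [Real.exp_zero, one_smul] at hI
  refine hasDerivAt_integral_of_dominated_loc_of_lip (s := Set.univ)
    (bound := fun x => K * |g x|) Filter.univ_mem ?_ (hI 0) ?_ ?_ (hgi.abs.const_mul K) ?_
  · exact Filter.Eventually.of_forall fun t => (hI t).aestronglyMeasurable
  · have : Continuous fun x => fderiv ℝ u x x :=
      (hu.continuous_fderiv one_ne_zero).clm_apply continuous_id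
    exact this.aestronglyMeasurable.mul hgi.aestronglyMeasurable
  · refine ae_of_all _ fun x => LipschitzOnWith.of_dist_le_mul fun t _ s _ => ?_
    rw [Real.dist_eq, Real.dist_eq, ← sub_mul, sub_sub_sub_cancel_right, abs_mul, coe_nnabs]
    calc _ ≤ K * |t - s| * |g x| := mul_le_mul_of_nonneg_right (hK x s t) (abs_nonneg _)
      _ = K * |g x| * |t - s| := by ring
      _ ≤ _ := mul_le_mul_of_nonneg_right (le_abs_self _) (abs_nonneg _)
  · refine ae_of_all _ fun x => HasDerivAt.mul_const ?_ _
    refine HasDerivAt.sub_const _ ?_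
    have h1 : HasDerivAt (fun t : ℝ => Real.exp t • x) (Real.exp 0 • x) 0 :=
      (Real.hasDerivAt_exp 0).smul_const x
    rw [Real.exp_zero, one_smul] at h1
    have h2 : HasFDerivAt u (fderiv ℝ u x) (Real.exp 0 • x) := by
      rw [Real.exp_zero, one_smul]
      exact (hu.differentiable one_ne_zero x).hasFDerivAt
    exact h2.comp_hasDerivAt 0 h1

/-- The virial identity for a weight of the form `Q * exp (N * u)` with `Q` homogeneous of
degree `q` and `N` the dimension. -/
lemma integral_fderiv_mul_eq {u g : E → ℝ} {K q : ℝ} (hu : ContDiff ℝ 1 u)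
    (hK : ∀ x s t, |u (Real.exp t • x) - u (Real.exp s • x)| ≤ K * |t - s|)
    (hg0 : 0 ≤ g) (hgi : Integrable g)
    (hg : ∀ t x, g (Real.exp t • x) =
      Real.exp (q * t + Module.finrank ℝ E * (u (Real.exp t • x) - u x)) * g x) :
    Module.finrank ℝ E * ∫ x, fderiv ℝ u x x * g x = -((Module.finrank ℝ E + q) * ∫ x, g x) := by
  set N := Module.finrank ℝ E with hN
  have hI := integrable_dilation_sub_mul hu.continuous hK hgi 0
  simp only [Real.exp_zero, one_smul] at hI
  obtain ⟨-, hd⟩ := hasDerivAt_integral_dilation hu hK hgi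
  have hle (t : ℝ) : (N + q) * t * (∫ x, g x) + N * ∫ x, (u (Real.exp t • x) - u x) * g x ≤ 0 := by
    have hcomp : ∫ x, Real.exp (N * t) * g (Real.exp t • x) = ∫ x, g x := by
      rw [integral_const_mul,
        Measure.integral_comp_smul_of_nonneg volume g (Real.exp t) (hR := (Real.exp_pos t).le),
        ← hN, ← Real.exp_nat_mul, smul_eq_mul, mul_inv_cancel_left₀ (Real.exp_ne_zero _)]
    have hmono : ∫ x, (g x + ((N + q) * t * g x + N * ((u (Real.exp t • x) - u x) * g x))) ≤
        ∫ x, Real.exp (N * t) * g (Real.exp t • x) := by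
      refine integral_mono
        (hgi.add ((hgi.const_mul _).add ((hI t).const_mul _)))
        ((hgi.comp_smul (Real.exp_ne_zero t)).const_mul _) fun x => ?_
      simp only
      rw [hg, ← mul_assoc (Real.exp _), ← Real.exp_add]
      have h1 := Real.add_one_le_exp (N * t + (q * t + N * (u (Real.exp t • x) - u x)))
      have h2 := mul_le_mul_of_nonneg_right h1 (hg0 x)
      refine le_trans (le_of_eq ?_) h2
      ring
    have hsum : Integrable fun x => (N + q) * t * g x + N * ((u (Real.exp t • x) - u x) * g x) :=
      (hgi.const_mul _).add ((hI t).const_mul _)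
    rw [hcomp, integral_add hgi hsum,
      integral_add (hgi.const_mul _) ((hI t).const_mul _), integral_const_mul,
      integral_const_mul] at hmono
    linarith
  have hmax : IsLocalMax (fun t : ℝ => (N + q) * t * (∫ x, g x) +
      N * ∫ x, (u (Real.exp t • x) - u x) * g x) 0 :=
    Filter.Eventually.of_forall fun t => (hle t).trans (by simp)
  have hderiv := ((((hasDerivAt_id (0 : ℝ)).const_mul ((N : ℝ) + q)).mul_const (∫ x, g x)).add
    (hd.const_mul (N : ℝ)))
  have := hmax.hasDerivAt_eq_zero hderiv
  linarith

lemma hasDerivAt_integral_dilation_symm {u g : E → ℝ} {K : ℝ} (hu : ContDiff ℝ 1 u)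
    (hK : ∀ x s t, |u (Real.exp t • x) - u (Real.exp s • x)| ≤ K * |t - s|)
    (hgi : Integrable g) :
    HasDerivAt (fun t => ∫ x, (u (Real.exp t • x) - u (Real.exp (-t) • x)) * g x)
      (2 * ∫ x, fderiv ℝ u x x * g x) 0 := by
  have hI := integrable_dilation_sub_mul hu.continuous hK hgi 0
  simp only [Real.exp_zero, one_smul] at hI
  obtain ⟨-, hd⟩ := hasDerivAt_integral_dilation hu hK hgi
  have hd2 : HasDerivAt (fun t => ∫ x, (u (Real.exp (-t) • x) - u x) * g x)
      ((∫ x, fderiv ℝ u x x * g x) * (-1)) 0 := by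
    refine HasDerivAt.comp (h₂ := fun t => ∫ x, (u (Real.exp t • x) - u x) * g x) 0 ?_
      (hasDerivAt_neg 0)
    rwa [neg_zero]
  have h := hd.sub hd2
  rw [mul_neg_one, sub_neg_eq_add, ← two_mul] at h
  refine h.congr_of_eventuallyEq (Filter.Eventually.of_forall fun t => ?_)
  simp only [Pi.sub_apply]
  rw [← integral_sub (hI t) (hI (-t))]
  congr 1 with x
  ring

end Virial

section Interaction

variable {E : Type*} [NormedAddCommGroup E] [InnerProductSpace ℝ E] [FiniteDimensional ℝ E]
  [MeasurableSpace E] [BorelSpace E] {J : E →L[ℝ] E}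

/-- The symmetric increment of `logMean` under dilations of the first variable. -/
noncomputable def logMeanIncr (J : E →L[ℝ] E) (t : ℝ) (z : E × E) : ℝ :=
  logMean J (Real.exp t • z.1) z.2 - logMean J (Real.exp (-t) • z.1) z.2

lemma IsComplexStructure.integrable_logMeanIncr_mul (hJ : IsComplexStructure J) {t : ℝ}
    (ht : 0 ≤ t) {F : E × E → ℝ} (hF : Integrable F (volume.prod volume)) :
    Integrable (fun z => logMeanIncr J t z * F z) (volume.prod volume) := by
  refine hF.bdd_mul (c := t - -t) ?_ (ae_of_all _ fun z => ?_)
  · exact ((measurable_logMean_comp _).sub (measurable_logMean_comp _)).aestronglyMeasurable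
  · have hle : -t ≤ t := by linarith
    rw [logMeanIncr, Real.norm_of_nonneg (sub_nonneg.2 (hJ.logMean_mono _ _ hle))]
    exact hJ.logMean_sub_le _ _ hle

lemma IsComplexStructure.two_mul_integral_logMeanIncr (hJ : IsComplexStructure J) {t : ℝ}
    (ht : 0 ≤ t) {F : E × E → ℝ} (hF : Integrable F (volume.prod volume)) :
    2 * ∫ z, logMeanIncr J t z * F z ∂(volume.prod volume) =
      ∫ z, (logMeanIncr J t z * F z + logMeanIncr J t z.swap * F z.swap)
        ∂(volume.prod volume) := by
  have h := hJ.integrable_logMeanIncr_mul ht hF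
  have hs : Integrable (fun z : E × E => logMeanIncr J t z.swap * F z.swap)
      (volume.prod volume) := h.swap
  rw [integral_add h hs, integral_prod_swap (fun z => logMeanIncr J t z * F z), two_mul]

lemma IsComplexStructure.ae_logMeanIncr_add_swap [Nontrivial E] (hJ : IsComplexStructure J)
    (t : ℝ) : ∀ᵐ z : E × E ∂(volume.prod volume),
      logMeanIncr J t z + logMeanIncr J t z.swap = 2 * t := by
  have h : ∀ᵐ x : E, x ≠ 0 := by simp [ae_iff]
  filter_upwards [Measure.quasiMeasurePreserving_fst.ae h] with z hz
  exact hJ.logMean_sub_swap (Or.inl hz) t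

lemma IsComplexStructure.integral_logMeanIncr_mul_self [Nontrivial E]
    (hJ : IsComplexStructure J) {t : ℝ} (ht : 0 ≤ t) {f : E → ℝ} (hf : Integrable f) :
    ∫ z, logMeanIncr J t z * (f z.1 * f z.2) ∂(volume.prod volume) = t * (∫ x, f x) ^ 2 := by
  have h := hJ.two_mul_integral_logMeanIncr ht (hf.mul_prod hf)
  have h2 : ∫ z, (logMeanIncr J t z * (f z.1 * f z.2) +
      logMeanIncr J t z.swap * (f z.swap.1 * f z.swap.2)) ∂(volume.prod volume) =
      ∫ z : E × E, 2 * t * (f z.1 * f z.2) ∂(volume.prod volume) := by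
    refine integral_congr_ae ?_
    filter_upwards [hJ.ae_logMeanIncr_add_swap t] with z hz
    simp only [Prod.fst_swap, Prod.snd_swap]
    rw [← hz]
    ring
  rw [h2, integral_const_mul, integral_prod_mul] at h
  linarith

lemma IsComplexStructure.le_integral_logMeanIncr_mul [Nontrivial E]
    (hJ : IsComplexStructure J) {t : ℝ} (ht : 0 ≤ t) {g ρ : E → ℝ} (hg0 : 0 ≤ g)
    (hg : Integrable g) (hρg : Integrable fun x => ρ x * g x)
    (hmin : Integrable (fun z : E × E => min (ρ z.1) (ρ z.2) * (g z.1 * g z.2))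
      (volume.prod volume)) :
    t * ((∫ x, g x) ^ 2 +
        ∫ z : E × E, min (ρ z.1) (ρ z.2) * (g z.1 * g z.2) ∂(volume.prod volume)) ≤
      ∫ z, logMeanIncr J t z * (g z.1 * ((1 + ρ z.2) * g z.2)) ∂(volume.prod volume) := by
  have hf : Integrable fun x => (1 + ρ x) * g x := by
    simp only [add_mul, one_mul]
    exact hg.add hρg
  have hF := hg.mul_prod hf
  have h := hJ.two_mul_integral_logMeanIncr ht hF
  have hI := hJ.integrable_logMeanIncr_mul ht hF
  have h2 : ∫ z : E × E, (2 * t * (g z.1 * g z.2) +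
      2 * t * (min (ρ z.1) (ρ z.2) * (g z.1 * g z.2))) ∂(volume.prod volume) ≤
      ∫ z, (logMeanIncr J t z * (g z.1 * ((1 + ρ z.2) * g z.2)) +
      logMeanIncr J t z.swap * (g z.swap.1 * ((1 + ρ z.swap.2) * g z.swap.2)))
        ∂(volume.prod volume) := by
    refine integral_mono_ae (((hg.mul_prod hg).const_mul _).add (hmin.const_mul _))
      (hI.add hI.swap) ?_
    have hle : -t ≤ t := by linarith
    filter_upwards [hJ.ae_logMeanIncr_add_swap t] with z hz
    have n1 : 0 ≤ logMeanIncr J t z := sub_nonneg.2 (hJ.logMean_mono _ _ hle)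
    have n2 : 0 ≤ logMeanIncr J t z.swap := sub_nonneg.2 (hJ.logMean_mono _ _ hle)
    simp only [Prod.fst_swap, Prod.snd_swap]
    rw [← hz]
    have hgg : 0 ≤ g z.1 * g z.2 := mul_nonneg (hg0 _) (hg0 _)
    have k1 := mul_le_mul_of_nonneg_right (min_le_right (ρ z.1) (ρ z.2)) (mul_nonneg n1 hgg)
    have k2 := mul_le_mul_of_nonneg_right (min_le_left (ρ z.1) (ρ z.2)) (mul_nonneg n2 hgg)
    linarith
  rw [← h, integral_add ((hg.mul_prod hg).const_mul _) (hmin.const_mul _), integral_const_mul,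
    integral_const_mul, integral_prod_mul] at h2
  linarith

variable [Nontrivial E]

lemma IsComplexStructure.potential_sub (hJ : IsComplexStructure J) {u f : E → ℝ} {c C : ℝ}
    (hf : Continuous f) (hfi : Integrable f) (hrad : ∀ x y, ‖x‖ = ‖y‖ → f x = f y)
    (hC : ∀ x, u x = c * (∫ y, Real.log (‖y‖ / ‖x - y‖) * f y) + C) (x x' : E) :
    Integrable (fun y => (logMean J x y - logMean J x' y) * f y) ∧
      u x - u x' = -(c * ∫ y, (logMean J x y - logMean J x' y) * f y) := by
  obtain ⟨h1, e1⟩ := hJ.integral_log_div_norm_sub_mul hf hfi hrad x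
  obtain ⟨h2, e2⟩ := hJ.integral_log_div_norm_sub_mul hf hfi hrad x'
  have heq (y : E) : (logMean J x y - logMean J x' y) * f y =
      (Real.log ‖y‖ - logMean J x' y) * f y - (Real.log ‖y‖ - logMean J x y) * f y := by ring
  simp only [heq]
  refine ⟨h2.sub h1, ?_⟩
  rw [integral_sub h2 h1, hC x, hC x', e1, e2]
  ring

lemma IsComplexStructure.abs_potential_sub_le (hJ : IsComplexStructure J) {u f : E → ℝ}
    {c C : ℝ} (hc : 0 ≤ c) (hf : Continuous f) (hfi : Integrable f) (hf0 : 0 ≤ f)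
    (hrad : ∀ x y, ‖x‖ = ‖y‖ → f x = f y)
    (hC : ∀ x, u x = c * (∫ y, Real.log (‖y‖ / ‖x - y‖) * f y) + C) (x : E) (s t : ℝ) :
    |u (Real.exp t • x) - u (Real.exp s • x)| ≤ c * (∫ y, f y) * |t - s| := by
  wlog hst : s ≤ t generalizing s t
  · rw [abs_sub_comm, abs_sub_comm t]
    exact this t s (not_le.1 hst).le
  obtain ⟨hi, he⟩ := hJ.potential_sub hf hfi hrad hC (Real.exp t • x) (Real.exp s • x)
  have h0 : 0 ≤ ∫ y, (logMean J (Real.exp t • x) y - logMean J (Real.exp s • x) y) * f y :=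
    integral_nonneg fun y => mul_nonneg (sub_nonneg.2 (hJ.logMean_mono _ _ hst)) (hf0 y)
  have h1 : ∫ y, (logMean J (Real.exp t • x) y - logMean J (Real.exp s • x) y) * f y ≤
      (t - s) * ∫ y, f y := by
    rw [← integral_const_mul]
    exact integral_mono hi (hfi.const_mul _) fun y =>
      mul_le_mul_of_nonneg_right (hJ.logMean_sub_le _ _ hst) (hf0 y)
  rw [he, abs_neg, abs_of_nonneg (mul_nonneg hc h0), abs_of_nonneg (sub_nonneg.2 hst), mul_assoc]
  gcongr
  linarith

lemma IsComplexStructure.integral_potential_incr_mul (hJ : IsComplexStructure J) {u f g : E → ℝ}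
    {c C : ℝ} (hf : Continuous f) (hfi : Integrable f) (hrad : ∀ x y, ‖x‖ = ‖y‖ → f x = f y)
    (hC : ∀ x, u x = c * (∫ y, Real.log (‖y‖ / ‖x - y‖) * f y) + C) (hg : Integrable g)
    {t : ℝ} (ht : 0 ≤ t) :
    ∫ x, (u (Real.exp t • x) - u (Real.exp (-t) • x)) * g x =
      -(c * ∫ z, logMeanIncr J t z * (g z.1 * f z.2) ∂(volume.prod volume)) := by
  rw [integral_prod _ (hJ.integrable_logMeanIncr_mul ht (hg.mul_prod hfi)), ← integral_const_mul,
    ← integral_neg]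
  refine integral_congr_ae (ae_of_all _ fun x => ?_)
  simp only
  rw [(hJ.potential_sub hf hfi hrad hC _ _).2, neg_mul, mul_assoc, ← integral_mul_const]
  simp only [logMeanIncr]
  congr 3 with y
  ring

end Interaction

lemma sphereVol_pos (n : ℕ) : 0 < sphereVol n := by
  have : 0 < Real.Gamma ((n + 1 : ℝ) / 2) := Real.Gamma_pos_of_pos (by positivity)
  unfold sphereVol
  positivity

theorem beta_range_radial (p : ℝ) (hp : 0 < p) (n : ℕ) (hn : 2 ≤ n) (heven : Even n)
    (u : EuclideanSpace ℝ (Fin n) → ℝ) (hu : ContDiff ℝ (⊤ : ℕ∞) u)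
    (hradial : ∀ x y : EuclideanSpace ℝ (Fin n), ‖x‖ = ‖y‖ → u x = u y)
    (hint : Integrable (fun x : EuclideanSpace ℝ (Fin n) =>
      (1 + ‖x‖ ^ ((n : ℝ) * p)) * Real.exp (n * u x)))
    (C : ℝ)
    (hC : ∀ x, u x = (2 / ((Nat.factorial (n - 1) : ℝ) * sphereVol n)) *
      (∫ y, Real.log (‖y‖ / ‖x - y‖) *
        ((1 + ‖y‖ ^ ((n : ℝ) * p)) * Real.exp (n * u y))) + C)
    (β : ℝ)
    (hβ : β = (2 / ((Nat.factorial (n - 1) : ℝ) * sphereVol n)) *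
      ∫ x, (1 + ‖x‖ ^ ((n : ℝ) * p)) * Real.exp (n * u x)) :
    max 2 (2 * p) < β ∧ β < 2 + 2 * p := by
  set c : ℝ := 2 / ((Nat.factorial (n - 1) : ℝ) * sphereVol n) with hc_def
  have hc : 0 < c := by
    have := sphereVol_pos n
    positivity
  have hn0 : 0 < (n : ℝ) := by positivity
  have hnp : 0 < (n : ℝ) * p := by positivity
  have : Nonempty (Fin n) := ⟨⟨0, by omega⟩⟩
  obtain ⟨J, hJ⟩ := exists_isComplexStructure heven
  set ρ : EuclideanSpace ℝ (Fin n) → ℝ := fun x => ‖x‖ ^ ((n : ℝ) * p) with hρ_def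
  set g : EuclideanSpace ℝ (Fin n) → ℝ := fun x => Real.exp (n * u x) with hg_def
  have hu1 : ContDiff ℝ 1 u := hu.of_le (by exact_mod_cast le_top)
  have hρc : Continuous ρ := continuous_norm.rpow_const fun _ => Or.inr hnp.le
  have hgc : Continuous g := (continuous_const.mul hu.continuous).rexp
  have hρ0 (x) : 0 ≤ ρ x := Real.rpow_nonneg (norm_nonneg x) _
  have hg0 (x) : 0 < g x := Real.exp_pos _
  have hfc : Continuous fun x => (1 + ρ x) * g x := (continuous_const.add hρc).mul hgc
  have hf0 : (0 : EuclideanSpace ℝ (Fin n) → ℝ) ≤ fun x => (1 + ρ x) * g x := fun x =>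
    mul_nonneg (add_nonneg zero_le_one (hρ0 x)) (hg0 x).le
  have hgi : Integrable g := by
    refine hint.mono' hgc.aestronglyMeasurable (ae_of_all _ fun x => ?_)
    rw [Real.norm_of_nonneg (hg0 x).le]
    exact le_mul_of_one_le_left (hg0 x).le (le_add_of_nonneg_right (hρ0 x))
  have hρgi : Integrable fun x => ρ x * g x := by
    refine hint.mono' (hρc.mul hgc).aestronglyMeasurable (ae_of_all _ fun x => ?_)
    rw [Real.norm_of_nonneg (mul_nonneg (hρ0 x) (hg0 x).le)]
    exact mul_le_mul_of_nonneg_right (le_add_of_nonneg_left zero_le_one) (hg0 x).le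
  have hrad : ∀ x y : EuclideanSpace ℝ (Fin n), ‖x‖ = ‖y‖ → (1 + ρ x) * g x = (1 + ρ y) * g y := by
    intro x y hxy
    simp only [hρ_def, hg_def, hxy, hradial x y hxy]
  have hK := hJ.abs_potential_sub_le hc.le hfc hint hf0 hrad hC
  have hfin : Module.finrank ℝ (EuclideanSpace ℝ (Fin n)) = n := finrank_euclideanSpace_fin
  have hgscale (t : ℝ) (x : EuclideanSpace ℝ (Fin n)) : g (Real.exp t • x) =
      Real.exp (n * (u (Real.exp t • x) - u x)) * g x := by
    simp only [hg_def]
    rw [← Real.exp_add]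
    congr 1
    ring
  have hρscale (t : ℝ) (x : EuclideanSpace ℝ (Fin n)) :
      ρ (Real.exp t • x) = Real.exp (n * p * t) * ρ x := by
    simp only [hρ_def]
    rw [norm_smul, Real.norm_of_nonneg (Real.exp_pos t).le,
      Real.mul_rpow (Real.exp_pos t).le (norm_nonneg x), ← Real.exp_mul, mul_comm t]
  have hvir0 := integral_fderiv_mul_eq (q := 0) hu1 hK (fun x => (hg0 x).le) hgi fun t x => by
    rw [hgscale, hfin, zero_mul, zero_add]
  have hvir1 := integral_fderiv_mul_eq (g := fun x => ρ x * g x) (q := n * p) hu1 hK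
    (fun x => mul_nonneg (hρ0 x) (hg0 x).le) hρgi fun t x => by
      rw [hgscale, hρscale, hfin, Real.exp_add]
      ring
  rw [hfin] at hvir0 hvir1
  obtain ⟨hd0, -⟩ := hasDerivAt_integral_dilation hu1 hK hgi
  obtain ⟨hd1, -⟩ := hasDerivAt_integral_dilation hu1 hK hρgi
  have hsplit : ∫ x, (1 + ρ x) * g x = (∫ x, g x) + ∫ x, ρ x * g x := by
    simp only [add_mul, one_mul]
    exact integral_add hgi hρgi
  have hwsplit : ∫ x, fderiv ℝ u x x * ((1 + ρ x) * g x) =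
      (∫ x, fderiv ℝ u x x * g x) + ∫ x, fderiv ℝ u x x * (ρ x * g x) := by
    simp only [add_mul, one_mul, mul_add]
    exact integral_add hd0 hd1
  -- The virial of the full density is determined by the symmetry of the interaction.
  have hfull : 2 * ∫ x, fderiv ℝ u x x * ((1 + ρ x) * g x) =
      -(c * (∫ x, (1 + ρ x) * g x) ^ 2) := by
    have hval {t : ℝ} (ht : 0 ≤ t) := (hJ.integral_potential_incr_mul hfc hint hrad hC hint ht).trans
      (by rw [hJ.integral_logMeanIncr_mul_self ht hint])
    have hD := hasDerivAt_integral_dilation_symm hu1 hK hint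
    have hL : HasDerivAt (fun t : ℝ => -(c * (t * (∫ x, (1 + ρ x) * g x) ^ 2)))
        (-(c * (1 * (∫ x, (1 + ρ x) * g x) ^ 2))) 0 :=
      (((hasDerivAt_id (0 : ℝ)).mul_const _).const_mul c).neg
    have h1 := (hD.hasDerivWithinAt (s := Set.Ici 0)).congr_of_mem
      (fun t ht => (hval (Set.mem_Ici.1 ht)).symm) Set.self_mem_Ici
    have h2 := (uniqueDiffWithinAt_Ici (0 : ℝ)).eq_deriv _ h1 (hL.hasDerivWithinAt)
    rw [h2, one_mul]
  set δ := ∫ z : EuclideanSpace ℝ (Fin n) × EuclideanSpace ℝ (Fin n),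
    min (ρ z.1) (ρ z.2) * (g z.1 * g z.2) ∂(volume.prod volume) with hδ_def
  have hminc : Continuous fun z : EuclideanSpace ℝ (Fin n) × EuclideanSpace ℝ (Fin n) =>
      min (ρ z.1) (ρ z.2) * (g z.1 * g z.2) := by fun_prop
  have hmin0 (z : EuclideanSpace ℝ (Fin n) × EuclideanSpace ℝ (Fin n)) :
      0 ≤ min (ρ z.1) (ρ z.2) * (g z.1 * g z.2) :=
    mul_nonneg (le_min (hρ0 _) (hρ0 _)) (mul_pos (hg0 _) (hg0 _)).le
  have hmini : Integrable (fun z : EuclideanSpace ℝ (Fin n) × EuclideanSpace ℝ (Fin n) =>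
      min (ρ z.1) (ρ z.2) * (g z.1 * g z.2)) (volume.prod volume) := by
    refine (hρgi.mul_prod hgi).mono' hminc.aestronglyMeasurable (ae_of_all _ fun z => ?_)
    rw [Real.norm_of_nonneg (hmin0 z), mul_assoc]
    exact mul_le_mul_of_nonneg_right (min_le_left _ _) (mul_pos (hg0 _) (hg0 _)).le
  obtain ⟨e, he⟩ := exists_ne (0 : EuclideanSpace ℝ (Fin n))
  have hρe : 0 < ρ e := Real.rpow_pos_of_pos (norm_pos_iff.2 he) _
  have hδ : 0 < δ := integral_pos_of_integrable_nonneg_nonzero hminc hmini hmin0 (x := (e, e))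
    (mul_pos (lt_min hρe hρe) (mul_pos (hg0 e) (hg0 e))).ne'
  have hV0 : 0 < ∫ x, g x := integral_pos_of_integrable_nonneg_nonzero hgc hgi
    (fun x => (hg0 x).le) (hg0 0).ne'
  have hV1 : 0 < ∫ x, ρ x * g x := integral_pos_of_integrable_nonneg_nonzero (hρc.mul hgc) hρgi
    (fun x => mul_nonneg (hρ0 x) (hg0 x).le) (mul_pos hρe (hg0 e)).ne'
  have hvol : 2 * (∫ x, fderiv ℝ u x x * g x) + c * ((∫ x, g x) ^ 2 + δ) ≤ 0 := by
    have hD := (hasDerivAt_integral_dilation_symm hu1 hK hgi).add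
      ((hasDerivAt_id (0 : ℝ)).mul_const (c * ((∫ x, g x) ^ 2 + δ)))
    rw [one_mul] at hD
    refine hD.nonpos_of_forall_pos (by simp) fun t ht => ?_
    have h1 := hJ.integral_potential_incr_mul hfc hint hrad hC hgi ht.le
    have h2 := hJ.le_integral_logMeanIncr_mul ht.le (fun x => (hg0 x).le) hgi hρgi hmini
    simp only [Pi.add_apply, id_eq]
    rw [h1]
    linarith [mul_le_mul_of_nonneg_left h2 hc.le]
  rw [hwsplit, hsplit] at hfull
  rw [hsplit] at hβ
  generalize (∫ x, g x) = V₀ at *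
  generalize (∫ x, ρ x * g x) = V₁ at *
  generalize (∫ x, fderiv ℝ u x x * g x) = w₀ at *
  generalize (∫ x, fderiv ℝ u x x * (ρ x * g x)) = w₁ at *
  have hw0 : w₀ = -V₀ := mul_left_cancel₀ hn0.ne' (by linarith)
  have hw1 : w₁ = -((1 + p) * V₁) := mul_left_cancel₀ hn0.ne' (by linarith)
  rw [hw0] at hvol hfull
  rw [hw1] at hfull
  have hb1 : 0 < c * V₁ := mul_pos hc hV1
  have hb0 : 0 < c * V₀ := mul_pos hc hV0
  have hb2 : c * V₀ < 2 := by
    refine lt_of_mul_lt_mul_right ?_ hV0.le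
    nlinarith [mul_pos hc hδ]
  have hβ' : β = c * V₀ + c * V₁ := by rw [hβ]; ring
  have hβ0 : 0 < β := by linarith
  have hpoh : β * (β - 2) = 2 * p * (c * V₁) := by
    rw [hβ']
    linear_combination c * hfull
  have hb1β : c * V₁ < β := by linarith
  refine ⟨max_lt ?_ ?_, ?_⟩
  · have : 0 < β * (β - 2) := by rw [hpoh]; positivity
    linarith [(pos_iff_pos_of_mul_pos this).1 hβ0]
  · have h2 : 0 < β * (β - 2) := by rw [hpoh]; positivity
    have h3 : 0 < β - 2 := (pos_iff_pos_of_mul_pos h2).1 hβ0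
    refine lt_of_mul_lt_mul_right ?_ hb1.le
    rw [← hpoh]
    exact mul_lt_mul_of_pos_left (by linarith) hβ0
  · have h2 : β * (β - 2) < β * (2 * p) := by
      rw [hpoh]
      nlinarith
    linarith [lt_of_mul_lt_mul_left h2 hβ0.le]
end
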